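/- Let P_λ be the law of the Poisson point measure on X with intensity λμ_X, and let 0 < λ₁ < λ₂. If P_{λ₁}[N_O = 1] = 1, then P_{λ₂}[N_O = 1] = 1. -/

import Mathlib

open MeasureTheory Metric Set Bornology Function
open scoped ENNReal NNReal unitInterval

noncomputable section

namespace BooleanModel

/-- The space of simple, locally finite point configurations on a metric space `X`
(realizations of simple counting measures on `X`). -/
def Config (X : Type*) [MetricSpace X] : Type _ :=
  {s : Set X // ∀ K : Set X, IsBounded K → (s ∩ K).Finite}

namespace Config

variable {X : Type*} [MetricSpace X]

/-- The σ-algebra on `Config X` generated by the evaluation (counting) maps `ω ↦ ω(B)`. -/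
instance instMeasurableSpace [MeasurableSpace X] : MeasurableSpace (Config X) :=
  MeasurableSpace.generateFrom
    {A | ∃ (B : Set X) (n : ℕ∞), MeasurableSet B ∧ A = {s : Config X | (s.1 ∩ B).encard = n}}

/-- The number of points of the configuration `s` lying in `B`. -/
def count (B : Set X) (s : Config X) : ℕ∞ := (s.1 ∩ B).encard

/-- Adding a point to a configuration (`ω + δ_y`). -/
def insertPt (y : X) (s : Config X) : Config X :=
  ⟨insert y s.1, by
    intro K hK
    refine ((s.2 K hK).insert y).subset ?_
    rintro z ⟨hz1, hz2⟩
    rcases Set.mem_insert_iff.1 hz1 with rfl | h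
    · exact Set.mem_insert _ _
    · exact Set.mem_insert_of_mem _ ⟨h, hz2⟩⟩

/-- The restriction `ω|_{B^c}` of a configuration to the complement of `B`. -/
def restrict (B : Set X) (s : Config X) : Config X :=
  ⟨s.1 ∩ Bᶜ, fun K hK => (s.2 K hK).subset fun z hz => ⟨hz.1.1, hz.2⟩⟩

/-- Push-forward of a configuration under an isometry of `X`. -/
def mapIso (γ : X ≃ᵢ X) (s : Config X) : Config X :=
  ⟨⇑γ '' s.1, by
    intro K hK
    have h1 : ⇑γ ⁻¹' K = ⇑γ.symm '' K := by
      ext z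
      constructor
      · intro hz; exact ⟨γ z, hz, γ.symm_apply_apply z⟩
      · rintro ⟨w, hw, rfl⟩; simpa using hw
    have h2 : ⇑γ '' s.1 ∩ K = ⇑γ '' (s.1 ∩ ⇑γ ⁻¹' K) := (Set.image_inter_preimage _ _ _).symm
    rw [h2]
    refine (s.2 _ ?_).image _
    rw [h1]
    exact γ.symm.isometry.lipschitz.isBounded_image hK⟩

end Config

section BasicDefs

variable {X : Type*} [MetricSpace X]

/-- The occupied set of the Boolean model with unit radii driven by `s`. -/
def occupied (s : Config X) : Set X := ⋃ x ∈ s.1, closedBall x 1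

/-- The vacant set of the Boolean model with unit radii driven by `s`. -/
def vacant (s : Config X) : Set X := (occupied s)ᶜ

/-- The collection of connected components of a set `S ⊆ X`. -/
def comps (S : Set X) : Set (Set X) := {C | ∃ x ∈ S, C = connectedComponentIn S x}

/-- The collection of unbounded connected components of `S`. -/
def ucomps (S : Set X) : Set (Set X) := {C | C ∈ comps S ∧ ¬IsBounded C}

/-- The number of connected components of `S`. -/
def numComps (S : Set X) : ℕ∞ := (comps S).encard

/-- `N_S`: the number of unbounded connected components of `S`. -/
def numUcomps (S : Set X) : ℕ∞ := (ucomps S).encard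

/-- A metric space is point-symmetric (the metric counterpart of being a Riemannian
symmetric space) if every point `x` admits a geodesic-reversing isometry fixing `x`,
i.e. an isometric point reflection around `x`. -/
def PointSymmetric (X : Type*) [MetricSpace X] : Prop :=
  ∀ x : X, ∃ invol : X ≃ᵢ X, invol x = x ∧ ∀ y : X, dist y (invol y) = 2 * dist x y

/-- The local connected component `C_S(y,r)`. -/
def localComp (S : Set X) (y : X) (r : ℝ) : Set X :=
  connectedComponentIn (S ∩ closedBall y r) y

end BasicDefs

section MeasureDefs

variable {X : Type*} [MetricSpace X] [MeasurableSpace X]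

/-- A measure on `Config X` is isometry invariant if it is preserved by the push-forward
action of every isometry of `X`. -/
def IsoInvariant (P : Measure (Config X)) : Prop :=
  ∀ γ : X ≃ᵢ X, Measure.map (Config.mapIso γ) P = P

/-- Every isometry-invariant event has probability `0` or `1`. -/
def ErgodicIso (P : Measure (Config X)) : Prop :=
  ∀ E : Set (Config X), MeasurableSet E →
    (∀ γ : X ≃ᵢ X, Config.mapIso γ ⁻¹' E = E) → P E = 0 ∨ P E = 1

/-- `P` is insertion-tolerant: for every Borel `B` with `0 < μ B < ∞`, the law of
`ω + δ_Y` with `Y` uniform in `B` independent of `ω` is absolutely continuous w.r.t. `P`. -/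
def InsertionTolerant (μ : Measure X) (P : Measure (Config X)) : Prop :=
  ∀ B : Set X, MeasurableSet B → 0 < μ B → μ B < ⊤ →
    Measure.map (fun p : Config X × X => Config.insertPt p.2 p.1)
      (P.prod ((μ B)⁻¹ • μ.restrict B)) ≪ P

/-- `P` is deletion-tolerant: for every Borel `B` with `0 < μ B < ∞`, the law of
`ω|_{B^c}` is absolutely continuous w.r.t. `P`. -/
def DeletionTolerant (μ : Measure X) (P : Measure (Config X)) : Prop :=
  ∀ B : Set X, MeasurableSet B → 0 < μ B → μ B < ⊤ →
    Measure.map (Config.restrict B) P ≪ P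

/-- `P` is the law of the Poisson point measure on `X` with intensity `ν`:
counts in disjoint Borel sets are independent with the correct Poisson distributions. -/
def IsPoisson (ν : Measure X) (P : Measure (Config X)) : Prop :=
  IsProbabilityMeasure P ∧
  (∀ B : Set X, MeasurableSet B → ν B < ⊤ → ∀ k : ℕ,
      P {s : Config X | Config.count B s = k} =
        ENNReal.ofReal (Real.exp (-(ν B).toReal) * (ν B).toReal ^ k / (Nat.factorial k))) ∧
  (∀ B : Set X, MeasurableSet B → ν B = ⊤ → P {s : Config X | (s.1 ∩ B).Infinite} = 1) ∧
  (∀ (n : ℕ) (B : Fin n → Set X) (k : Fin n → ℕ),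
      (∀ i, MeasurableSet (B i)) → (Pairwise fun i j => Disjoint (B i) (B j)) →
      P {s : Config X | ∀ i, Config.count (B i) s = k i} =
        ∏ i, P {s : Config X | Config.count (B i) s = k i})

end MeasureDefs

section PathDefs

variable {X : Type*} [MetricSpace X]

/-- The intrinsic distance between `x` and `y` within the set `S`: the infimum of the lengths
of continuous paths from `x` to `y` whose range is contained in `S`. -/
def pathDistIn (S : Set X) (x y : X) : ℝ≥0∞ :=
  ⨅ (γ : Path x y) (_ : Set.range ⇑γ ⊆ S), eVariationOn ⇑γ Set.univ

/-- Intrinsic distance within `S` between two subsets `A` and `B`. -/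
def setDistIn (S A B : Set X) : ℝ≥0∞ :=
  ⨅ (a : X) (_ : a ∈ A) (b : X) (_ : b ∈ B), pathDistIn S a b

/-- `y` is an `r`-trifurcation (marked by a point of `Y`) for the set `S`. -/
def IsTrifurcation (S : Set X) (Y : Set X) (r : ℝ) (y : X) : Prop :=
  y ∈ Y ∧ closedBall y 1 ⊆ S ∧ (∀ y' ∈ Y, y' ≠ y → 2 * r < dist y y') ∧
    3 ≤ numUcomps (connectedComponentIn S y \ localComp S y r)

end PathDefs

end BooleanModel

namespace BooleanModel

section Geo
variable {X : Type*} [MetricSpace X]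

/-- point reflections at `a` -/
def SymAt (a : X) (ς : X ≃ᵢ X) : Prop := ς a = a ∧ ∀ y : X, dist y (ς y) = 2 * dist a y

lemma mul_ap (f g : X ≃ᵢ X) (x : X) : (f * g) x = f (g x) := rfl
lemma inv_ap_ap (f : X ≃ᵢ X) (x : X) : f⁻¹ (f x) = x := f.symm_apply_apply x
lemma ap_inv_ap (f : X ≃ᵢ X) (x : X) : f (f⁻¹ x) = x := f.apply_symm_apply x
lemma one_ap (x : X) : (1 : X ≃ᵢ X) x = x := rfl
lemma dist_ap (f : X ≃ᵢ X) (x y : X) : dist (f x) (f y) = dist x y := f.dist_eq x y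

lemma SymAt.inv {a : X} {ς : X ≃ᵢ X} (h : SymAt a ς) : SymAt a ς⁻¹ := by
  have h0 : ς⁻¹ a = a := by
    conv_lhs => rw [← h.1]
    exact inv_ap_ap _ _
  refine ⟨h0, fun y => ?_⟩
  have h1 := h.2 (ς⁻¹ y)
  rw [ap_inv_ap] at h1
  rw [dist_comm, h1]
  congr 1
  conv_lhs => rw [← h0]
  rw [dist_ap]

lemma SymAt.conj {a : X} {ς : X ≃ᵢ X} (h : SymAt a ς) (g : X ≃ᵢ X) :
    SymAt (g a) (g * ς * g⁻¹) := by
  refine ⟨by simp only [mul_ap, inv_ap_ap, h.1], fun y => ?_⟩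
  obtain ⟨z, rfl⟩ : ∃ z, y = g z := ⟨g⁻¹ y, (ap_inv_ap _ _).symm⟩
  simp only [mul_ap, inv_ap_ap, dist_ap, h.2]

/-- symmetric chains -/
def SChain (x : ℕ → X) : Prop := ∀ i, ∃ ς, SymAt (x (i+1)) ς ∧ ς (x i) = x (i+2)

lemma SChain.step {x : ℕ → X} (h : SChain x) (i : ℕ) : dist (x i) (x (i+1)) = dist (x 0) (x 1) := by
  induction i with
  | zero => rfl
  | succ n ih =>
    obtain ⟨ς, hς, e⟩ := h n
    rw [← ih, ← e]
    conv_lhs => rw [← hς.1]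
    rw [dist_ap, dist_comm]

lemma SChain.dist_eq {x : ℕ → X} (h : SChain x) (n : ℕ) :
    ∀ i, dist (x i) (x (i+n)) = n * dist (x 0) (x 1) := by
  induction n using Nat.strong_induction_on with
  | _ n ih =>
    intro i
    match n with
    | 0 => simp
    | 1 => rw [h.step]; simp
    | n+2 =>
      obtain ⟨ς, hς, e⟩ := h (i+n)
      have h1 := ih n (by omega) i
      have h2 := ih (n+1) (by omega) i
      have h3 := hς.2 (x i)
      have h4 : dist (ς (x i)) (x (i+n+2)) = dist (x i) (x (i+n)) := by rw [← e, dist_ap]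
      have h5 := dist_triangle (x i) (x (i+n+2)) (ς (x i))
      have h6 := dist_triangle (x i) (x (i+n+1)) (x (i+n+2))
      have h7 := h.step (i+n+1)
      rw [dist_comm (x (i+n+1)) (x i)] at h3
      rw [dist_comm (x (i+n+2)) (ς (x i))] at h5
      have e1 : i + (n+2) = i+n+2 := by ring
      have e2 : i + (n+1) = i+n+1 := by ring
      rw [e2] at h2
      rw [e1]
      push_cast at *
      apply le_antisymm <;> nlinarith

lemma dist_pow_le (u : X ≃ᵢ X) (z : X) (n : ℕ) : dist z ((u^n) z) ≤ n * dist z (u z) := by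
  induction n with
  | zero => simp [one_ap]
  | succ n ih =>
    have h1 := dist_triangle z ((u^n) z) ((u^(n+1)) z)
    have h2 : dist ((u^n) z) ((u^(n+1)) z) = dist z (u z) := by
      rw [pow_succ, mul_ap, dist_ap]
    push_cast; linarith

lemma expanding {a b : X} {α β : X ≃ᵢ X} (ha : SymAt a α) (hb : SymAt b β) (z : X) :
    2 * dist a b ≤ dist (α z) (β z) := by
  set u : X ≃ᵢ X := α⁻¹ * β with hu
  have key : ∀ n : ℕ, dist b ((u^n) b) = (2*n : ℕ) * dist b a := by
    intro n
    let x : ℕ → X := fun i => if i % 2 = 0 then (u^(i/2)) b else (u^(i/2)) a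
    have hx : SChain x := by
      intro i
      rcases Nat.even_or_odd' i with ⟨k, rfl | rfl⟩
      · refine ⟨u^k * α⁻¹ * (u^k)⁻¹, ?_, ?_⟩
        · have : x (2*k+1) = (u^k) a := by
            simp only [x]; rw [if_neg (by omega)]; congr 2; omega
          rw [this]; exact ha.inv.conj _
        · have e1 : x (2*k) = (u^k) b := by
            simp only [x]; rw [if_pos (by omega)]; congr 2; omega
          have e2 : x (2*k+2) = (u^(k+1)) b := by
            simp only [x]; rw [if_pos (by omega)]; congr 2; omega
          rw [e1, e2, pow_succ, hu]
          simp only [mul_ap, inv_ap_ap, hb.1]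
      · refine ⟨u^(k+1) * β * (u^(k+1))⁻¹, ?_, ?_⟩
        · have : x (2*k+1+1) = (u^(k+1)) b := by
            simp only [x]; rw [if_pos (by omega)]; congr 2; omega
          rw [this]; exact hb.conj _
        · have e1 : x (2*k+1) = (u^k) a := by
            simp only [x]; rw [if_neg (by omega)]; congr 2; omega
          have e2 : x (2*k+1+2) = (u^(k+1)) a := by
            simp only [x]; rw [if_neg (by omega)]; congr 2; omega
          have e3 : (u^(k+1))⁻¹ = u⁻¹ * (u^k)⁻¹ := by rw [pow_succ]; simp
          have e4 : u⁻¹ = β⁻¹ * α := by rw [hu]; simp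
          have e5 : β * β⁻¹ = 1 := by simp
          rw [e1, e2, e3]
          simp only [mul_ap, inv_ap_ap]
          rw [e4]
          simp only [mul_ap, ha.1, ap_inv_ap]
    have h0 : x 0 = b := by simp [x, one_ap]
    have h1 : x 1 = a := by simp [x, one_ap]
    have h2 : x (0 + 2*n) = (u^n) b := by simp [x]
    have := hx.dist_eq (2*n) 0
    rwa [h0, h1, h2] at this
  have hd : dist (α z) (β z) = dist z (u z) := by
    rw [hu, mul_ap, ← dist_ap α z, ap_inv_ap]
  rw [hd]
  by_contra hlt
  push Not at hlt
  obtain ⟨n, hn⟩ := exists_nat_gt (2 * dist b z / (2 * dist a b - dist z (u z)))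
  rw [div_lt_iff₀ (by linarith)] at hn
  have h1 := key n
  have h2 := dist_pow_le u z n
  have h3 := dist_triangle4 b z ((u^n) z) ((u^n) b)
  rw [dist_ap, dist_comm z b] at h3
  rw [dist_comm b a] at h1
  push_cast at h1
  nlinarith

/-- two symmetric chains -/
lemma SChain.convex {x y : ℕ → X} (hx : SChain x) (hy : SChain y) (i : ℕ) :
    2 * dist (x (i+1)) (y (i+1)) ≤ dist (x i) (y i) + dist (x (i+2)) (y (i+2)) := by
  obtain ⟨ς, hς, e⟩ := hx i
  obtain ⟨τ, hτ, e'⟩ := hy i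
  have h1 := expanding hς hτ (x i)
  have h2 := dist_triangle (x (i+2)) (y (i+2)) (τ (x i))
  have h3 : dist (y (i+2)) (τ (x i)) = dist (x i) (y i) := by rw [← e', dist_ap, dist_comm]
  rw [e] at h1
  linarith

lemma SChain.map {x : ℕ → X} (hx : SChain x) (g : X ≃ᵢ X) : SChain (fun i => g (x i)) := by
  intro i
  obtain ⟨ς, hς, e⟩ := hx i
  exact ⟨_, hς.conj g, by simp only [mul_ap, inv_ap_ap, e]⟩

lemma SChain.shift {x : ℕ → X} (hx : SChain x) (k : ℕ) : SChain (fun i => x (i+k)) := by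
  intro i
  obtain ⟨ς, hς, e⟩ := hx (i+k)
  refine ⟨ς, ?_, ?_⟩
  · have : i+1+k = i+k+1 := by ring
    simpa only [this] using hς
  · have : i+2+k = i+k+2 := by ring
    simpa only [this] using e

/-- convexity for midpoints -/
lemma mid_convex {m m' : X} {ς τ : X ≃ᵢ X} (hς : SymAt m ς) (hτ : SymAt m' τ) (z z' : X) :
    2 * dist m m' ≤ dist z z' + dist (ς z) (τ z') := by
  have h1 := expanding hς hτ z
  have h2 := dist_triangle (ς z) (τ z') (τ z)
  rw [dist_ap, dist_comm z' z] at h2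
  linarith

lemma disp_convex {m : X} {ς : X ≃ᵢ X} (hς : SymAt m ς) (h : X ≃ᵢ X) (z : X) :
    2 * dist m (h m) ≤ dist z (h z) + dist (ς z) (h (ς z)) := by
  have := mid_convex hς (hς.conj h) z (h z)
  simpa only [mul_ap, inv_ap_ap] using this

lemma exists_chain (hsym : PointSymmetric X) (p q : X) : ∃ x : ℕ → X, SChain x ∧ x 0 = p ∧ x 1 = q := by
  choose s hs using hsym
  let F : ℕ → X × X := fun n => Nat.rec (p, q) (fun _ r => (r.2, s r.2 r.1)) n
  refine ⟨fun n => (F n).1, fun i => ⟨s (F i).2, ?_, rfl⟩, rfl, rfl⟩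
  exact hs _

/-- discrete convexity -/
lemma convex_seq {e : ℕ → ℝ} (he : ∀ i, 2 * e (i+1) ≤ e i + e (i+2)) (N : ℕ) :
    N * (e 1 - e 0) ≤ e N - e 0 := by
  have inc : ∀ i, e 1 - e 0 ≤ e (i+1) - e i := by
    intro i
    induction i with
    | zero => simp
    | succ n ih => have := he n; linarith
  induction N with
  | zero => simp
  | succ n ih => have := inc n; push_cast; linarith

lemma growth (hsym : PointSymmetric X) (h : X ≃ᵢ X) (z : X) (M ρ : ℝ) (hρ : 0 < ρ)
    (hM : ∀ y, dist z y ≤ ρ → dist y (h y) ≤ M) (hΔ : dist z (h z) ≤ ρ) :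
    dist z (h z) * (2 - 2 * (M + dist z (h z)) / ρ) ≤ dist z (h (h z)) := by
  set Δ := dist z (h z) with hΔdef
  rcases (dist_nonneg : 0 ≤ dist z (h z)).eq_or_lt with h0 | h0
  · rw [← hΔdef] at h0; rw [← h0]; simp [dist_nonneg]
  obtain ⟨p, hp, p0, p1⟩ := exists_chain hsym z (h z)
  have hq := hp.map h
  have conv := fun i => hq.convex (hp.shift 1) i
  have c := convex_seq (e := fun i => dist (h (p i)) (p (i+1))) conv
  set N := ⌊ρ / Δ⌋₊ with hN
  have hN1 : (N : ℝ) ≤ ρ / Δ := Nat.floor_le (by positivity)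
  have hN2 : ρ / Δ < N + 1 := Nat.lt_floor_add_one _
  have hN3 : 1 ≤ N := by
    rw [hN, Nat.one_le_floor_iff, le_div_iff₀ h0]; linarith
  have hN3' : (1:ℝ) ≤ N := by exact_mod_cast hN3
  have c' := c N
  simp only [p0, p1, zero_add, dist_self, sub_zero] at c'
  have d1 : dist (p 0) (p (0+N)) = N * dist (p 0) (p 1) := hp.dist_eq N 0
  have d2 := hp.step N
  have d3 : dist (p 0) (p (0+2)) = (2:ℕ) * dist (p 0) (p 1) := hp.dist_eq 2 0
  simp only [p0, p1, zero_add] at d1 d2 d3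
  rw [← hΔdef] at d1 d2 d3
  rw [le_div_iff₀ h0] at hN1
  rw [div_lt_iff₀ h0] at hN2
  have d4 := hM (p N) (by rw [d1]; linarith)
  have d5 := dist_triangle (h (p N)) (p N) (p (N+1))
  rw [dist_comm (h (p N)) (p N)] at d5
  have d6 := dist_triangle z (h (h z)) (p 2)
  have e1 : (1+1 : ℕ) = 2 := rfl
  rw [e1] at c'
  have hMp : 0 ≤ M := le_trans dist_nonneg d4
  have e2 : dist (h (h z)) (p 2) ≤ (M + Δ) / N := by
    rw [le_div_iff₀ (by linarith)]; rw [mul_comm]; linarith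
  have e3 : (M + Δ) / N ≤ Δ * (2 * (M + Δ) / ρ) := by
    rw [div_le_iff₀ (by linarith)]
    have : Δ * (2 * (M + Δ) / ρ) * N = (M+Δ) * ((2 * (N * Δ))/ρ) := by ring
    rw [this]
    have : 1 ≤ (2 * (N * Δ))/ρ := by rw [le_div_iff₀ hρ]; nlinarith
    nlinarith
  push_cast at d3
  nlinarith
end Geo
end BooleanModel

namespace BooleanModel

section GeoB
variable {X : Type*} [MetricSpace X]
open Filter Topology

lemma exists_lim [ProperSpace X] {ι : Type*} (U : Ultrafilter ι) (g : ι → X ≃ᵢ X) (z : X) (R : ℝ)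
    (hb : ∀ᶠ i in (U : Filter ι), dist z (g i z) ≤ R) :
    ∃ G : X ≃ᵢ X, ∀ x, Tendsto (fun i => g i x) U (𝓝 (G x)) := by
  have aux : ∀ (g : ι → X ≃ᵢ X), (∀ᶠ i in (U : Filter ι), dist z (g i z) ≤ R) → ∀ x, ∃ y,
      Tendsto (fun i => g i x) U (𝓝 y) := by
    intro g hb x
    have hc : IsCompact (closedBall z (R + dist z x)) := isCompact_closedBall _ _
    obtain ⟨y, -, hy⟩ := hc.ultrafilter_le_nhds' (U.map (fun i => g i x)) (by
      show _ ∈ Filter.map _ _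
      rw [Filter.mem_map]
      filter_upwards [hb] with i hi
      have h1 := dist_triangle z (g i z) (g i x)
      rw [dist_ap] at h1
      show g i x ∈ closedBall z _
      rw [mem_closedBall, dist_comm]; linarith)
    exact ⟨y, hy⟩
  choose G hG using aux g hb
  choose H hH using aux (fun i => (g i)⁻¹) (by
    filter_upwards [hb] with i hi
    rwa [← dist_ap (g i) z, ap_inv_ap, dist_comm])
  have e1 : ∀ x, H (G x) = x := by
    intro x
    refine tendsto_nhds_unique (hH (G x)) ?_
    rw [tendsto_iff_dist_tendsto_zero]
    have h2 := (tendsto_iff_dist_tendsto_zero.1 (hG x))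
    refine h2.congr fun i => ?_
    rw [← dist_ap (g i) ((g i)⁻¹ (G x)), ap_inv_ap, dist_comm]
  have e2 : ∀ x, G (H x) = x := by
    intro x
    refine tendsto_nhds_unique (hG (H x)) ?_
    rw [tendsto_iff_dist_tendsto_zero]
    have h2 := (tendsto_iff_dist_tendsto_zero.1 (hH x))
    refine h2.congr fun i => ?_
    rw [← dist_ap (g i) ((g i)⁻¹ x), ap_inv_ap, dist_comm]
  refine ⟨IsometryEquiv.mk' G H e2 (Isometry.of_dist_eq fun x y => ?_), hG⟩
  refine tendsto_nhds_unique ((hG x).dist (hG y)) ?_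
  simp only [dist_ap]
  exact tendsto_const_nhds

/-- packings -/
def IsPack (z : X) (r ε : ℝ) (Q : Finset X) : Prop :=
  (∀ q ∈ Q, dist z q ≤ r) ∧ ∀ p ∈ Q, ∀ q ∈ Q, p ≠ q → ε < dist p q

def pk (z : X) (r ε : ℝ) : ℕ := sSup {n | ∃ Q : Finset X, IsPack z r ε Q ∧ Q.card = n}

lemma pk_bdd [ProperSpace X] (z : X) (r : ℝ) {ε : ℝ} (hε : 0 < ε) :
    BddAbove {n | ∃ Q : Finset X, IsPack z r ε Q ∧ Q.card = n} := by
  obtain ⟨t, -, ht, hcov⟩ := Metric.totallyBounded_iff.1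
    ((isCompact_closedBall z r).totallyBounded) (ε/2) (by linarith) |>.imp fun t h => 
      (⟨trivial, h.1, h.2⟩ : True ∧ t.Finite ∧ closedBall z r ⊆ ⋃ y ∈ t, ball y (ε/2))
  refine ⟨ht.toFinset.card, ?_⟩
  rintro n ⟨Q, hQ, rfl⟩
  have : ∀ q ∈ Q, ∃ y ∈ ht.toFinset, dist q y < ε/2 := by
    intro q hq
    have := hcov (show q ∈ closedBall z r by rw [mem_closedBall, dist_comm]; exact hQ.1 q hq)
    simp only [mem_iUnion, mem_ball, exists_prop] at this
    simpa using this
  choose! f hf using this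
  refine Finset.card_le_card_of_injOn f (fun q hq => (hf q hq).1) ?_
  intro p hp q hq e
  by_contra hne
  have h1 := hQ.2 p hp q hq hne
  have h2 := (hf p hp).2
  have h3 := (hf q hq).2
  rw [← e] at h3
  have := dist_triangle_right p q (f p)
  linarith

lemma IsPack.card_le [ProperSpace X] {z : X} {r ε : ℝ} (hε : 0 < ε) {Q : Finset X} (h : IsPack z r ε Q) :
    Q.card ≤ pk z r ε := le_csSup (pk_bdd z r hε) ⟨Q, h, rfl⟩

lemma exists_pack [ProperSpace X] (z : X) (r : ℝ) {ε : ℝ} (hε : 0 < ε) :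
    ∃ Q, IsPack z r ε Q ∧ Q.card = pk z r ε := by
  have := Nat.sSup_mem (s := {n | ∃ Q : Finset X, IsPack z r ε Q ∧ Q.card = n})
    ⟨0, ∅, ⟨by simp, by simp⟩, rfl⟩ (pk_bdd z r hε)
  exact this

lemma pk_pos [ProperSpace X] (z : X) {r ε : ℝ} (hr : 0 ≤ r) (hε : 0 < ε) : 0 < pk z r ε := by
  have : IsPack z r ε {z} := ⟨by simpa using hr, by simp⟩
  have := this.card_le hε
  rw [Finset.card_singleton] at this
  omega

lemma pk_mono [ProperSpace X] (z : X) {r r' ε ε' : ℝ} (hr : r ≤ r') (hε' : 0 < ε') (hε : ε' ≤ ε) :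
    pk z r ε ≤ pk z r' ε' := by
  obtain ⟨Q, hQ, e⟩ := exists_pack z r (hε'.trans_le hε)
  rw [← e]
  exact IsPack.card_le hε' ⟨fun q hq => (hQ.1 q hq).trans hr,
    fun p hp q hq h => hε.trans_lt (hQ.2 p hp q hq h)⟩

lemma pk_iso_le [ProperSpace X] (g : X ≃ᵢ X) (z : X) (r : ℝ) {ε : ℝ} (hε : 0 < ε) :
    pk z r ε ≤ pk (g z) r ε := by
  classical
  obtain ⟨Q, hQ, e⟩ := exists_pack z r hε
  rw [← e, ← Finset.card_image_of_injective Q g.injective]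
  refine IsPack.card_le hε ⟨?_, ?_⟩
  · intro q hq
    obtain ⟨q, hq1, rfl⟩ := Finset.mem_image.1 hq
    rw [dist_ap]; exact hQ.1 q hq1
  · intro p hp q hq h
    obtain ⟨q, hq1, rfl⟩ := Finset.mem_image.1 hq
    obtain ⟨p, hp1, rfl⟩ := Finset.mem_image.1 hp
    rw [dist_ap]; exact hQ.2 p hp1 q hq1 (fun h' => h (by rw [h']))

/-- image of a packing under reflections -/
lemma IsPack.refl_image [DecidableEq X] {s : X → X ≃ᵢ X} (hs : ∀ x, SymAt x (s x)) {z : X} {r ε : ℝ} (hε : 0 < ε)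
    {Q : Finset X} (hQ : IsPack z r ε Q) : IsPack z (2*r) (2*ε) (Q.image fun m => s m z) ∧
      (Q.image fun m => s m z).card = Q.card := by
  refine ⟨⟨?_, ?_⟩, ?_⟩
  · intro q hq
    obtain ⟨q, hq1, rfl⟩ := Finset.mem_image.1 hq
    rw [(hs q).2, dist_comm]; have := hQ.1 q hq1; linarith
  · intro p hp q hq h
    obtain ⟨q, hq1, rfl⟩ := Finset.mem_image.1 hq
    obtain ⟨p, hp1, rfl⟩ := Finset.mem_image.1 hp
    have := hQ.2 p hp1 q hq1 (fun h' => h (by rw [h']))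
    have := expanding (hs p) (hs q) z
    linarith
  · apply Finset.card_image_of_injOn
    intro p hp q hq h
    by_contra hne
    have h1 := hQ.2 p hp q hq hne
    have h2 := expanding (hs p) (hs q) z
    simp only at h
    rw [h, dist_self] at h2
    linarith

lemma pk_double [ProperSpace X] (hsym : PointSymmetric X) (z : X) (r : ℝ) {ε : ℝ} (hε : 0 < ε) :
    pk z r ε ≤ pk z (2*r) (2*ε) := by
  classical
  choose s hs using hsym
  obtain ⟨Q, hQ, e⟩ := exists_pack z r hε
  have := hQ.refl_image hs hε
  rw [← e, ← this.2]
  exact this.1.card_le (by linarith)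

lemma pk_antitone [ProperSpace X] (hsym : PointSymmetric X) (z : X) {ε : ℝ} (hε : 0 < ε) :
    Antitone (fun j : ℕ => pk z ((1/2)^j) (ε * (1/2)^j)) := by
  refine antitone_nat_of_succ_le fun n => ?_
  have := pk_double hsym z ((1/2)^(n+1)) (ε := ε * (1/2)^(n+1)) (by positivity)
  refine this.trans (le_of_eq ?_)
  congr 1 <;> ring

lemma pk_stable [ProperSpace X] (hsym : PointSymmetric X) (z : X) {ε : ℝ} (hε : 0 < ε) :
    ∃ J, ∀ j ≥ J, pk z ((1/2)^(j+1)) (ε * (1/2)^(j+1)) = pk z ((1/2)^j) (ε * (1/2)^j) := by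
  have hA := pk_antitone hsym z hε
  obtain ⟨n, ⟨J, rfl⟩, hJ⟩ := (wellFounded_lt : WellFounded ((· < ·) : ℕ → ℕ → Prop)).has_min
    (range (fun j : ℕ => pk z ((1/2)^j) (ε * (1/2)^j))) ⟨_, ⟨0, rfl⟩⟩
  refine ⟨J, fun j hj => ?_⟩
  have h1 := hJ _ ⟨j+1, rfl⟩
  have h2 := hA (show j ≤ j+1 by omega)
  have h3 := hA hj
  simp only at h1 h2 h3
  omega

lemma L2_aux [ProperSpace X] (hsym : PointSymmetric X) (z : X) {ε : ℝ} (hε : 0 < ε) :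
    ∃ r > 0, ∀ y, dist z y ≤ r → ∃ m ς, SymAt m ς ∧ dist (ς z) y ≤ ε * dist z y := by
  classical
  have hsym' := hsym
  choose s hs using hsym'
  obtain ⟨J, hJ⟩ := pk_stable hsym z (half_pos hε)
  refine ⟨(1/2)^J, by positivity, fun y hy => ?_⟩
  rcases (dist_nonneg : 0 ≤ dist z y).eq_or_lt with h0 | h0
  · refine ⟨z, s z, hs z, ?_⟩
    rw [(hs z).1, ← h0]; simp
  obtain ⟨j, hj1, hj2⟩ : ∃ j ≥ J, (1/2:ℝ)^(j+1) < dist z y ∧ dist z y ≤ (1/2)^j := by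
    have hex : ∃ n : ℕ, (1/2:ℝ)^n < dist z y := exists_pow_lt_of_lt_one h0 (by norm_num)
    classical
    have hf := Nat.find_spec hex
    have hpos : J < Nat.find hex := by
      by_contra hle
      push Not at hle
      have := pow_le_pow_of_le_one (by norm_num : (0:ℝ) ≤ 1/2) (by norm_num) hle
      linarith
    refine ⟨Nat.find hex - 1, by omega, ?_, ?_⟩
    · rwa [Nat.sub_add_cancel (by omega)]
    · have := Nat.find_min hex (m := Nat.find hex - 1) (by omega)
      linarith
  have hη : 0 < ε/2 * (1/2)^(j+1) := by positivity
  obtain ⟨Q, hQ, e⟩ := exists_pack z ((1/2)^(j+1)) hη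
  obtain ⟨i1, i2⟩ := hQ.refl_image hs hη
  have e1 : 2 * (1/2:ℝ)^(j+1) = (1/2)^j := by ring
  have e2 : 2 * (ε/2 * (1/2)^(j+1)) = ε/2 * (1/2)^j := by ring
  rw [e1, e2] at i1
  by_contra hno
  push Not at hno
  have hfar : ∀ q ∈ Q.image (fun m => s m z), ε/2 * (1/2)^j < dist q y := by
    intro q hq
    obtain ⟨q, hq1, rfl⟩ := Finset.mem_image.1 hq
    have := hno q (s q) (hs q)
    have e3 : ε/2 * (1/2)^j = ε * (1/2)^(j+1) := by ring
    rw [e3]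
    nlinarith [hj2.1]
  have hpos : 0 < ε/2 * (1/2)^j := by positivity
  have hnot : y ∉ Q.image (fun m => s m z) := fun hy => by
    have := hfar y hy; rw [dist_self] at this; linarith
  have : IsPack z ((1/2)^j) (ε/2 * (1/2)^j) (insert y (Q.image (fun m => s m z))) := by
    refine ⟨?_, ?_⟩
    · intro q hq
      rcases Finset.mem_insert.1 hq with rfl | hq
      · exact hj2.2
      · exact i1.1 q hq
    · intro p hp q hq hne
      rcases Finset.mem_insert.1 hp with rfl | hp1 <;> rcases Finset.mem_insert.1 hq with rfl | hq1
      · exact absurd rfl hne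
      · rw [dist_comm]; exact hfar q hq1
      · exact hfar p hp1
      · exact i1.2 p hp1 q hq1 hne
  have := this.card_le hpos
  rw [Finset.card_insert_of_notMem hnot, i2, e, hJ j hj1] at this
  omega

lemma transitive [ProperSpace X] [PreconnectedSpace X] (hsym : PointSymmetric X) (z w : X) :
    ∃ g : X ≃ᵢ X, g z = w := by
  let A : Set X := {y | ∃ g : X ≃ᵢ X, g z = y}
  have hcl : IsClosed A := by
    rw [isClosed_iff_ultrafilter]
    intro y U hU hA
    have : ∀ x, ∃ g : X ≃ᵢ X, x ∈ A → g z = x := by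
      intro x
      by_cases hx : x ∈ A
      · obtain ⟨g, hg⟩ := hx; exact ⟨g, fun _ => hg⟩
      · exact ⟨1, fun h => absurd h hx⟩
    choose g hg using this
    have h1 : ∀ᶠ x in (U : Filter X), g x z = x := by
      filter_upwards [hA] with x hx using hg x hx
    obtain ⟨G, hG⟩ := exists_lim U g z (dist z y + 1) (by
      have : ∀ᶠ x in 𝓝 y, dist y x < 1 := by
        filter_upwards [ball_mem_nhds y one_pos] with x hx
        rwa [dist_comm]
      filter_upwards [h1, hU this] with x hx hx2
      rw [hx]
      have := dist_triangle z y x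
      have hx2' : dist y x < 1 := hx2
      linarith)
    refine ⟨G, tendsto_nhds_unique (hG z) ?_⟩
    have : Tendsto (fun x : X => x) U (𝓝 y) := hU
    exact this.congr' (h1.mono fun x hx => hx.symm)
  have hne : A.Nonempty := ⟨z, 1, rfl⟩
  have hop : IsOpen A := by
    rw [Metric.isOpen_iff]
    obtain ⟨r, hr, hL⟩ := L2_aux hsym z (ε := 1/2) (by norm_num)
    rintro p ⟨g0, rfl⟩
    refine ⟨r, hr, fun y hy => ?_⟩
    obtain ⟨q, ⟨g, rfl⟩, hq2⟩ := hcl.exists_infDist_eq_dist hne y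
    by_contra hyA
    have hpos : 0 < dist y (g z) := dist_pos.2 (by rintro h; exact hyA ⟨g, h.symm⟩)
    have h1 : dist y (g z) ≤ dist y (g0 z) := by
      rw [← hq2]; exact infDist_le_dist_of_mem ⟨g0, rfl⟩
    rw [mem_ball] at hy
    have h2 : dist z (g⁻¹ y) = dist y (g z) := by
      rw [← dist_ap g z, ap_inv_ap, dist_comm]
    obtain ⟨m, ς, hς, h3⟩ := hL (g⁻¹ y) (by rw [h2]; linarith)
    have h4 : infDist y A ≤ dist y ((g * ς) z) := infDist_le_dist_of_mem ⟨_, rfl⟩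
    have h5 : dist y ((g * ς) z) = dist (ς z) (g⁻¹ y) := by
      rw [mul_ap, ← dist_ap g (ς z), ap_inv_ap, dist_comm]
    rw [h2] at h3
    rw [hq2, h5] at h4
    linarith
  have : A = univ := IsClopen.eq_univ ⟨hcl, hop⟩ hne
  have h : w ∈ A := by rw [this]; exact mem_univ w
  exact h

lemma pk_center [ProperSpace X] [PreconnectedSpace X] (hsym : PointSymmetric X) (z w : X) (r : ℝ)
    {ε : ℝ} (hε : 0 < ε) : pk z r ε = pk w r ε := by
  obtain ⟨g, rfl⟩ := transitive hsym z w
  refine le_antisymm (pk_iso_le g z r hε) ?_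
  have := pk_iso_le g⁻¹ (g z) r hε
  rwa [inv_ap_ap] at this

lemma L2 [ProperSpace X] [PreconnectedSpace X] [Nonempty X] (hsym : PointSymmetric X) {ε : ℝ} (hε : 0 < ε) :
    ∃ r > 0, ∀ z y : X, dist z y ≤ r → ∃ m ς, SymAt m ς ∧ dist (ς z) y ≤ ε * dist z y := by
  obtain ⟨z0⟩ := ‹Nonempty X›
  obtain ⟨r, hr, H⟩ := L2_aux hsym z0 hε
  refine ⟨r, hr, fun z y h => ?_⟩
  obtain ⟨g, rfl⟩ := transitive hsym z0 z
  have h2 : dist z0 (g⁻¹ y) = dist (g z0) y := by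
    rw [← dist_ap g z0, ap_inv_ap]
  obtain ⟨m, ς, hς, h3⟩ := H (g⁻¹ y) (by rwa [h2])
  refine ⟨_, _, hς.conj g, ?_⟩
  rw [h2] at h3
  refine le_trans (le_of_eq ?_) h3
  rw [← dist_ap g (ς z0), ap_inv_ap]
  simp only [mul_ap, inv_ap_ap]
end GeoB
end BooleanModel

namespace BooleanModel

section GeoC
variable {X : Type*} [MetricSpace X]
open Filter Topology

lemma pk_cover [ProperSpace X] [PreconnectedSpace X] (hsym : PointSymmetric X) (z : X) (R : ℝ) {t s : ℝ}
    (ht : 0 < t) (hs : 0 < s) : pk z R s ≤ pk z t s * pk z R t := by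
  classical
  obtain ⟨W, hW, eW⟩ := exists_pack z R ht
  obtain ⟨Q, hQ, eQ⟩ := exists_pack z R hs
  have : ∀ q ∈ Q, ∃ w ∈ W, dist w q ≤ t := by
    intro q hq
    by_contra hno
    push Not at hno
    have hnot : q ∉ W := fun h => by have := hno q h; rw [dist_self] at this; linarith
    have hp : IsPack z R t (insert q W) := by
      refine ⟨?_, ?_⟩
      · intro x hx
        rcases Finset.mem_insert.1 hx with rfl | h
        · exact hQ.1 _ hq
        · exact hW.1 _ h
      · intro x hx y hy hne
        rcases Finset.mem_insert.1 hx with rfl | h <;> rcases Finset.mem_insert.1 hy with rfl | h'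
        · exact absurd rfl hne
        · rw [dist_comm]; exact hno _ h'
        · exact hno _ h
        · exact hW.2 _ h _ h' hne
    have := hp.card_le ht
    rw [Finset.card_insert_of_notMem hnot, eW] at this
    omega
  choose! f hf using this
  rw [← eQ, ← eW]
  refine Finset.card_le_mul_card_image_of_maps_to (f := f) (fun q hq => (hf q hq).1) _ ?_
  intro w hw
  rw [pk_center hsym z w t hs]
  refine IsPack.card_le hs ⟨?_, ?_⟩
  · intro q hq
    obtain ⟨h1, rfl⟩ := Finset.mem_filter.1 hq
    exact (hf q h1).2
  · intro p hp q hq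
    exact hQ.2 p (Finset.mem_filter.1 hp).1 q (Finset.mem_filter.1 hq).1

lemma pack_replace [DecidableEq X] [ProperSpace X] {z y : X} {R s t : ℝ} (hs : 0 < s) {Q : Finset X} (hQ : IsPack z R s Q)
    (hc : Q.card = pk z R s) (hy : dist z y + t ≤ R) :
    pk y (t - s) s ≤ (Q.filter (fun q => dist y q ≤ t)).card := by
  obtain ⟨W, hW, eW⟩ := exists_pack y (t-s) hs
  have hdis : Disjoint (Q.filter (fun q => ¬ dist y q ≤ t)) W := by
    rw [Finset.disjoint_left]
    intro q hq hqW
    have h1 := (Finset.mem_filter.1 hq).2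
    have h2 := hW.1 q hqW
    linarith
  have hfar : ∀ p ∈ Q.filter (fun q => ¬ dist y q ≤ t), ∀ w ∈ W, s < dist p w := by
    intro p hp w hw
    have h1 := (Finset.mem_filter.1 hp).2
    have h2 := hW.1 w hw
    have h3 := dist_triangle_right y p w
    linarith
  have hp : IsPack z R s (Q.filter (fun q => ¬ dist y q ≤ t) ∪ W) := by
    refine ⟨?_, ?_⟩
    · intro q hq
      rcases Finset.mem_union.1 hq with h | h
      · exact hQ.1 q (Finset.mem_filter.1 h).1
      · have := hW.1 q h
        have := dist_triangle z y q
        linarith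
    · intro p hp q hq hne
      rcases Finset.mem_union.1 hp with h | h <;> rcases Finset.mem_union.1 hq with h' | h'
      · exact hQ.2 p (Finset.mem_filter.1 h).1 q (Finset.mem_filter.1 h').1 hne
      · exact hfar p h q h'
      · rw [dist_comm]; exact hfar q h' p h
      · exact hW.2 p h q h' hne
  have h1 := hp.card_le hs
  rw [Finset.card_union_of_disjoint hdis, ← hc, eW] at h1
  have h2 := Finset.card_filter_add_card_filter_not (s := Q) (fun q => dist y q ≤ t)
  omega

lemma C_step [ProperSpace X] [PreconnectedSpace X] (hsym : PointSymmetric X) {a z : X} {α β : X ≃ᵢ X}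
    (hα : SymAt a α) (hβ : SymAt a β) {r ε t : ℝ} (hε : 0 < ε)
    (hst : pk z r ε = pk z (2*r) (2*ε)) (haz : 2 * dist a z + t ≤ 2 * r)
    (ht : 0 ≤ t) (hd : 2 * t < dist (α z) (β z)) : 2 * pk z (t - 2*ε) (2*ε) ≤ pk z t (2*ε) := by
  classical
  have hsym' := hsym
  choose s hs using hsym'
  obtain ⟨Q, hQ, eQ⟩ := exists_pack z r hε
  obtain ⟨i1, i2⟩ := hQ.refl_image hs hε
  set Q' := Q.image (fun m => s m z) with hQ'
  have hc : Q'.card = pk z (2*r) (2*ε) := by rw [i2, eQ, hst]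
  have h1 := pack_replace (y := α z) (t := t) (by linarith : 0 < 2*ε) i1 hc (by rw [hα.2]; linarith)
  have h2 := pack_replace (y := β z) (t := t) (by linarith : 0 < 2*ε) i1 hc (by rw [hβ.2]; linarith)
  rw [← pk_center hsym z _ _ (by linarith)] at h1 h2
  have hdis : Disjoint (Q'.filter (fun q => dist (α z) q ≤ t)) (Q'.filter (fun q => dist (β z) q ≤ t)) := by
    rw [Finset.disjoint_left]
    intro q hq hq'
    have h1 := (Finset.mem_filter.1 hq).2
    have h2 := (Finset.mem_filter.1 hq').2
    have h3 := dist_triangle_right (α z) (β z) q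
    linarith
  have h3 := Finset.card_union_of_disjoint hdis
  have hsub : (Q'.filter (fun q => dist (α z) q ≤ t)) ∪ (Q'.filter (fun q => dist (β z) q ≤ t)) ⊆
      (Q.filter (fun m => dist a m ≤ t/2)).image (fun m => s m z) := by
    intro q hq
    have hqq : q ∈ Q' ∧ (dist (α z) q ≤ t ∨ dist (β z) q ≤ t) := by
      rcases Finset.mem_union.1 hq with h | h
      · exact ⟨(Finset.mem_filter.1 h).1, Or.inl (Finset.mem_filter.1 h).2⟩
      · exact ⟨(Finset.mem_filter.1 h).1, Or.inr (Finset.mem_filter.1 h).2⟩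
    obtain ⟨hq1, hq2⟩ := hqq
    obtain ⟨m, hm, rfl⟩ := Finset.mem_image.1 hq1
    refine Finset.mem_image.2 ⟨m, Finset.mem_filter.2 ⟨hm, ?_⟩, rfl⟩
    rcases hq2 with h | h
    · have := expanding hα (hs m) z; linarith
    · have := expanding hβ (hs m) z; linarith
  have h4 := (Finset.card_le_card hsub).trans Finset.card_image_le
  have h5 : IsPack a (t/2) ε (Q.filter (fun m => dist a m ≤ t/2)) :=
    ⟨fun q hq => (Finset.mem_filter.1 hq).2,
      fun p hp q hq => hQ.2 p (Finset.mem_filter.1 hp).1 q (Finset.mem_filter.1 hq).1⟩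
  have h6 := h5.card_le hε
  have h7 := pk_double hsym a (t/2) hε
  have e : 2 * (t/2) = t := by ring
  rw [e, pk_center hsym a z t (by linarith : 0 < 2*ε)] at h7
  omega

lemma sym_close [ProperSpace X] [PreconnectedSpace X] [Nonempty X] (hsym : PointSymmetric X) (k : ℕ) :
    ∃ J, ∀ j ≥ J, ∀ (a z : X) (α β : X ≃ᵢ X), SymAt a α → SymAt a β → dist a z ≤ (1/2)^(j+2) →
      dist (α z) (β z) ≤ (1/2)^k * (1/2)^j := by
  obtain ⟨z0⟩ := ‹Nonempty X›
  set N := pk z0 1 (1/2) with hN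
  set ε : ℝ := (1/2)^k / (4 * (N+1)) with hε
  have hεp : 0 < ε := by positivity
  obtain ⟨J, hJ⟩ := pk_stable hsym z0 hεp
  refine ⟨J, fun j hj a z α β hα hβ haz => ?_⟩
  by_contra hlt
  push Not at hlt
  have hst := hJ j hj
  rw [pk_center hsym z0 z _ (by positivity), pk_center hsym z0 z _ (by positivity)] at hst
  set r : ℝ := (1/2)^(j+1) with hr
  have er : (1/2:ℝ)^j = 2 * r := by rw [hr]; ring
  have er2 : (1/2:ℝ)^(j+2) = r/2 := by rw [hr]; ring
  have hrp : 0 < r := by positivity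
  rw [er] at hst hlt
  rw [er2] at haz
  set κ : ℝ := (1/2)^k with hκ
  have hκp : 0 < κ := by positivity
  have hκ1 : κ ≤ 1 := pow_le_one₀ (by norm_num) (by norm_num)
  have hst' : pk z r (ε*r) = pk z (2*r) (2*(ε*r)) := by rw [hst]; congr 1; ring
  have hNε : N * ε ≤ κ/4 := by
    rw [hε, mul_div_assoc', div_le_iff₀ (by positivity)]
    nlinarith
  have hεs : 0 < ε * r := by positivity
  have step : ∀ i ≤ N, 2^i * pk z (κ * r - i * (2*(ε*r))) (2*(ε*r)) ≤ pk z (κ*r) (2*(ε*r)) := by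
    intro i
    induction i with
    | zero => intro _; simp
    | succ i ih =>
      intro hi
      have ih' := ih (by omega)
      have hi' : ((i:ℝ)+1) ≤ N := by exact_mod_cast hi
      have hb : (i:ℝ) * ε ≤ κ/4 := by nlinarith
      have := C_step hsym hα hβ (t := κ*r - i*(2*(ε*r))) hεs hst' (by
        have : 0 ≤ (i:ℝ) * (2*(ε*r)) := by positivity
        nlinarith) (by nlinarith) (by
        have : 0 ≤ (i:ℝ) * (2*(ε*r)) := by positivity
        nlinarith)
      have e : κ*r - ((i+1 : ℕ):ℝ)*(2*(ε*r)) = κ*r - i*(2*(ε*r)) - 2*(ε*r) := by push_cast; ring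
      rw [e]
      calc _ = 2^i * (2 * pk z (κ*r - i*(2*(ε*r)) - 2*(ε*r)) (2*(ε*r))) := by ring
        _ ≤ 2^i * pk z (κ*r - i*(2*(ε*r))) (2*(ε*r)) := Nat.mul_le_mul_left _ this
        _ ≤ _ := ih'
  have h1 := step N le_rfl
  have h2 : pk z (κ*r/2) (2*(ε*r)) ≤ pk z (κ * r - N * (2*(ε*r))) (2*(ε*r)) :=
    pk_mono z (by nlinarith) (by positivity) le_rfl
  have h3 := pk_cover hsym z (κ*r) (t := κ*r/2) (s := 2*(ε*r)) (by positivity) (by positivity)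
  have h4 : pk z (κ*r) (κ*r/2) ≤ N := by
    have := pk_antitone hsym z (ε := 1/2) (by norm_num) (Nat.zero_le (k+j+1))
    simp only [pow_zero, mul_one] at this
    rw [hN, pk_center hsym z0 z _ (by norm_num)]
    refine le_trans (le_of_eq ?_) this
    congr 1
    · rw [hκ, hr]; ring
    · rw [hκ, hr]; ring
  have h5 : 0 < pk z (κ*r/2) (2*(ε*r)) := pk_pos z (by positivity) (by positivity)
  have h6 : N < 2^N := Nat.lt_two_pow_self
  have h7 : 2^N * pk z (κ*r/2) (2*(ε*r)) ≤ N * pk z (κ*r/2) (2*(ε*r)) := by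
    calc _ ≤ _ := Nat.mul_le_mul_left _ h2
      _ ≤ _ := h1
      _ ≤ _ := h3
      _ ≤ pk z (κ*r/2) (2*(ε*r)) * N := Nat.mul_le_mul_left _ h4
      _ = _ := mul_comm _ _
  have := Nat.le_of_mul_le_mul_right h7 h5
  omega

/-- infinitesimally trivial -/
def Small (a : X) (h : X ≃ᵢ X) : Prop :=
  h a = a ∧ ∀ c > 0, ∃ j0 : ℕ, ∀ j ≥ j0, ∀ z, dist a z ≤ (1/2)^j → dist z (h z) ≤ c * (1/2)^j

lemma Small.sq {a : X} {h : X ≃ᵢ X} (hh : Small a h) : Small a (h * h) := by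
  refine ⟨by rw [mul_ap, hh.1, hh.1], fun c hc => ?_⟩
  obtain ⟨j0, H⟩ := hh.2 (c/2) (by linarith)
  refine ⟨j0, fun j hj z hz => ?_⟩
  have h1 := H j hj z hz
  have h2 := dist_triangle z (h z) (h (h z))
  rw [dist_ap] at h2
  rw [mul_ap]; linarith

lemma disp_scale (hsym : PointSymmetric X) {a : X} {h : X ≃ᵢ X} (ha : h a = a) {c : ℝ} {i : ℕ}
    (H : ∀ z, dist a z ≤ (1/2)^i → dist z (h z) ≤ c * (1/2)^i) (j : ℕ) (hj : i ≤ j) :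
    ∀ z, dist a z ≤ (1/2)^j → dist z (h z) ≤ c * (1/2)^j := by
  induction j, hj using Nat.le_induction with
  | base => exact H
  | succ j hj ih =>
    intro z hz
    obtain ⟨ς, hς⟩ := hsym z
    have h1 := disp_convex (m := z) hς h a
    have h2 := ih (ς a) (by rw [hς.2, dist_comm]; rw [pow_succ] at hz; linarith)
    rw [ha, dist_self] at h1
    rw [pow_succ]; linarith

lemma small_unif [ProperSpace X] (hsym : PointSymmetric X) (a : X) {c : ℝ} (hc : 0 < c) :
    ∃ j : ℕ, ∀ h, Small a h → ∀ z, dist a z ≤ (1/2)^j → dist z (h z) ≤ c * (1/2)^j := by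
  by_contra hno
  push Not at hno
  choose h hh z hz hcz using hno
  let U : Ultrafilter ℕ := Filter.hyperfilter ℕ
  obtain ⟨G, hG⟩ := exists_lim U h a 0 (Eventually.of_forall fun i => by rw [(hh i).1, dist_self])
  obtain ⟨t, ht, hcov⟩ := Metric.totallyBounded_iff.1
    ((isCompact_closedBall a 1).totallyBounded) (c/16) (by linarith)
  have hev : ∀ᶠ j in (U : Filter ℕ), ∀ x ∈ t, dist (h j x) (G x) < c/16 := by
    rw [Set.Finite.eventually_all ht] 
    intro x hx
    exact (Metric.tendsto_nhds.1 (hG x)) (c/16) (by linarith)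
  have hgood : ∀ᶠ j in (U : Filter ℕ), ∀ x, dist a x ≤ 1 → dist (h j x) (G x) ≤ 3*c/16 := by
    filter_upwards [hev] with j hj x hx
    have := hcov (show x ∈ closedBall a 1 by rwa [mem_closedBall, dist_comm])
    simp only [mem_iUnion, mem_ball, exists_prop] at this
    obtain ⟨y, hy, hxy⟩ := this
    have h1 := dist_triangle4 (h j x) (h j y) (G y) (G x)
    rw [dist_ap, dist_ap, dist_comm y x] at h1
    have := hj y hy
    linarith
  obtain ⟨j, hj⟩ := hgood.exists
  obtain ⟨j0, hj0⟩ := (hh j).2 (c/4) (by linarith)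
  have hge : ∀ᶠ i in (U : Filter ℕ), j0 ≤ i := by
    have : (U : Filter ℕ) ≤ atTop := by
      rw [← Nat.cofinite_eq_atTop]; exact Filter.hyperfilter_le_cofinite
    exact this (eventually_ge_atTop j0)
  obtain ⟨i, hi, hij⟩ := (hgood.and hge).exists
  have ha : ((h j)⁻¹ * h i) a = a := by
    rw [mul_ap, (hh i).1]
    conv_lhs => rw [← (hh j).1]
    exact inv_ap_ap _ _
  have hk : ∀ z, dist a z ≤ (1/2)^0 → dist z (((h j)⁻¹ * h i) z) ≤ (6*c/16) * (1/2)^0 := by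
    intro z hz
    simp only [pow_zero, mul_one] at hz ⊢
    rw [mul_ap, ← dist_ap (h j) z, ap_inv_ap]
    have := dist_triangle_right (h j z) (h i z) (G z)
    have := hj z hz
    have := hi z hz
    linarith
  have h1 := disp_scale hsym ha hk i (Nat.zero_le _) (z i) (hz i)
  have h2 := hj0 i hij (z i) (hz i)
  have h3 := hcz i
  have h4 : dist (z i) (h i (z i)) ≤ dist (z i) (h j (z i)) + dist (z i) (((h j)⁻¹ * h i) (z i)) := by
    have e : dist (h j (z i)) (h i (z i)) = dist (z i) (((h j)⁻¹ * h i) (z i)) := by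
      rw [mul_ap, ← dist_ap (h j) (z i) ((h j)⁻¹ _), ap_inv_ap]
    rw [← e]; exact dist_triangle _ _ _
  have : (0:ℝ) < (1/2)^i := by positivity
  nlinarith

lemma small_trivial [ProperSpace X] (hsym : PointSymmetric X) (a : X) :
    ∃ r > 0, ∀ h, Small a h → ∀ z, dist a z ≤ r → h z = z := by
  obtain ⟨j, hj⟩ := small_unif hsym a (c := 1/16) (by norm_num)
  set R : ℝ := (1/2)^j with hR
  have hRp : 0 < R := by positivity
  refine ⟨R/2, by linarith, fun h hh z hz => ?_⟩
  have hgr : ∀ h, Small a h → 3/2 * dist z (h z) ≤ dist z ((h*h) z) := by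
    intro h hh
    have hz' := hj h hh z (by linarith)
    have := growth hsym h z (1/16*R) (R/2) (by linarith) (fun y hy => hj h hh y (by
      have := dist_triangle a z y; linarith)) (by linarith)
    rw [mul_ap]
    refine le_trans ?_ this
    rw [mul_comm]
    refine mul_le_mul_of_nonneg_left ?_ dist_nonneg
    have : 2 * (1/16*R + dist z (h z)) / (R/2) ≤ 1/2 := by
      rw [div_le_iff₀ (by linarith)]; linarith
    linarith
  have hit : ∀ n : ℕ, ∃ g, Small a g ∧ (3/2)^n * dist z (h z) ≤ dist z (g z) := by
    intro n
    induction n with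
    | zero => exact ⟨h, hh, by simp⟩
    | succ n ih =>
      obtain ⟨g, hg, hn⟩ := ih
      refine ⟨g*g, hg.sq, ?_⟩
      have := hgr g hg
      rw [pow_succ]; linarith
  by_contra hne
  have hpos : 0 < dist z (h z) := dist_pos.2 (Ne.symm hne)
  obtain ⟨n, hn⟩ := pow_unbounded_of_one_lt (R / dist z (h z)) (by norm_num : (1:ℝ) < 3/2)
  rw [div_lt_iff₀ hpos] at hn
  obtain ⟨g, hg, hgn⟩ := hit n
  have := hj g hg z (by linarith)
  linarith

/-- local uniqueness of reflections -/
lemma local_unique [ProperSpace X] [PreconnectedSpace X] [Nonempty X] (hsym : PointSymmetric X) :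
    ∃ r > 0, ∀ (a z : X) (α β : X ≃ᵢ X), SymAt a α → SymAt a β → dist a z ≤ r → α z = β z := by
  obtain ⟨a0⟩ := id ‹Nonempty X›
  obtain ⟨r, hr, H⟩ := small_trivial hsym a0
  have H0 : ∀ (z : X) (α β : X ≃ᵢ X), SymAt a0 α → SymAt a0 β → dist a0 z ≤ r → α z = β z := by
    intro z α β hα hβ hz
    have hs : Small a0 (β⁻¹ * α) := by
      refine ⟨by rw [mul_ap, hα.1, hβ.inv.1], fun c hc => ?_⟩
      obtain ⟨k, hk⟩ := exists_pow_lt_of_lt_one (show 0 < c/4 by linarith) (by norm_num : (1/2:ℝ) < 1)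
      obtain ⟨J, hJ⟩ := sym_close (X := X) hsym k
      refine ⟨J+2, fun j hj z hz => ?_⟩
      obtain ⟨i, rfl⟩ : ∃ i, j = i + 2 := ⟨j-2, by omega⟩
      have := hJ i (by omega) a0 z α β hα hβ hz
      rw [mul_ap, ← dist_ap β z, ap_inv_ap, dist_comm]
      refine this.trans ?_
      have : (0:ℝ) < (1/2)^i := by positivity
      rw [pow_add]
      nlinarith
    have := H _ hs z hz
    rw [mul_ap] at this
    rw [← ap_inv_ap β (α z), this]
  refine ⟨r, hr, fun a z α β hα hβ hz => ?_⟩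
  obtain ⟨g, hg⟩ := transitive hsym a a0
  have h1 := hα.conj g
  have h2 := hβ.conj g
  rw [hg] at h1 h2
  have := H0 (g z) _ _ h1 h2 (by rw [← hg, dist_ap]; exact hz)
  simp only [mul_ap, inv_ap_ap] at this
  exact g.injective this
end GeoC
end BooleanModel

namespace BooleanModel

section GeoE
variable {X : Type*} [MetricSpace X]
open Filter Topology

lemma symAt_of_dist {a : X} {A : X ≃ᵢ X} (h : ∀ y, dist y (A y) = 2 * dist a y) : SymAt a A := by
  refine ⟨?_, h⟩
  have := h a
  rw [dist_self, mul_zero] at this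
  exact (dist_eq_zero.1 this).symm

lemma symAt_lim {ι : Type*} {l : Filter ι} [l.NeBot] {b : ι → X} {β : ι → X ≃ᵢ X} {a : X} {B : X ≃ᵢ X}
    (hβ : ∀ᶠ i in l, SymAt (b i) (β i)) (hb : Tendsto b l (𝓝 a)) (hB : ∀ x, Tendsto (fun i => β i x) l (𝓝 (B x))) :
    SymAt a B := by
  refine symAt_of_dist fun y => ?_
  have h1 : Tendsto (fun i => dist y (β i y)) l (𝓝 (dist y (B y))) := tendsto_const_nhds.dist (hB y)
  have h2 : Tendsto (fun i => 2 * dist (b i) y) l (𝓝 (2 * dist a y)) := (hb.dist tendsto_const_nhds).const_mul 2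
  exact tendsto_nhds_unique (h1.congr' (hβ.mono fun i hi => hi.2 y)) h2

lemma near_close [ProperSpace X] [PreconnectedSpace X] [Nonempty X] (hsym : PointSymmetric X) {ρ : ℝ}
    (LU : ∀ (a z : X) (α β : X ≃ᵢ X), SymAt a α → SymAt a β → dist a z ≤ ρ → α z = β z)
    {τ : ℝ} (hτ : 0 < τ) : ∃ δ > 0, ∀ (a b z : X) (α β : X ≃ᵢ X), SymAt a α → SymAt b β → dist a b ≤ δ →
      dist a z ≤ ρ → dist (α z) (β z) ≤ τ := by
  obtain ⟨a0⟩ := id ‹Nonempty X›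
  suffices H : ∃ δ > 0, ∀ (b z : X) (α β : X ≃ᵢ X), SymAt a0 α → SymAt b β → dist a0 b ≤ δ →
      dist a0 z ≤ ρ → dist (α z) (β z) ≤ τ by
    obtain ⟨δ, hδ, H⟩ := H
    refine ⟨δ, hδ, fun a b z α β hα hβ hab haz => ?_⟩
    obtain ⟨g, hg⟩ := transitive hsym a a0
    have h1 := hα.conj g
    have h2 := hβ.conj g
    rw [hg] at h1
    have := H (g b) (g z) _ _ h1 h2 (by rwa [← hg, dist_ap]) (by rwa [← hg, dist_ap])
    simpa only [mul_ap, inv_ap_ap, dist_ap] using this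
  by_contra hno
  push Not at hno
  have hno' := fun n : ℕ => hno (1/((n:ℝ)+1)) (by positivity)
  choose b z α β hα hβ hb hz hd using hno'
  let U : Ultrafilter ℕ := Filter.hyperfilter ℕ
  have hUle : (U : Filter ℕ) ≤ atTop := by
    rw [← Nat.cofinite_eq_atTop]; exact Filter.hyperfilter_le_cofinite
  have hbl : Tendsto b U (𝓝 a0) := by
    rw [tendsto_iff_dist_tendsto_zero]
    have h0 : Tendsto (fun n : ℕ => 1/((n:ℝ)+1)) U (𝓝 0) :=
      tendsto_one_div_add_atTop_nhds_zero_nat.mono_left hUle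
    refine squeeze_zero (fun _ => dist_nonneg) (fun n => ?_) h0
    rw [dist_comm]; exact hb n
  obtain ⟨A, hA⟩ := exists_lim U α a0 0 (Eventually.of_forall fun n => by rw [(hα n).1, dist_self])
  obtain ⟨B, hB⟩ := exists_lim U β a0 2 (Eventually.of_forall fun n => by
    rw [(hβ n).2, dist_comm]
    have := hb n
    have : 1/((n:ℝ)+1) ≤ 1 := by
      rw [div_le_one (by positivity)]; have : (0:ℝ) ≤ n := Nat.cast_nonneg n
      linarith
    linarith)
  have sA : SymAt a0 A := symAt_lim (Eventually.of_forall hα) tendsto_const_nhds hA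
  have sB : SymAt a0 B := symAt_lim (Eventually.of_forall hβ) hbl hB
  obtain ⟨w, hw, hwl⟩ := (isCompact_closedBall a0 ρ).ultrafilter_le_nhds' (U.map z) (by
    show _ ∈ Filter.map _ _
    rw [Filter.mem_map]
    exact Eventually.of_forall fun n => by
      show z n ∈ closedBall a0 ρ
      rw [mem_closedBall, dist_comm]; exact hz n)
  have hwl' : Tendsto z U (𝓝 w) := hwl
  have e := LU a0 w A B sA sB (by rwa [mem_closedBall, dist_comm] at hw)
  have t1 : Tendsto (fun n => dist (z n) w + dist (α n w) (β n w) + dist (z n) w) U (𝓝 (0 + 0 + 0)) := by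
    have h1 := tendsto_iff_dist_tendsto_zero.1 hwl'
    refine (h1.add ?_).add h1
    have := (hA w).dist (hB w)
    rwa [e, dist_self] at this
  have t2 : ∀ᶠ n in (U : Filter ℕ), dist (z n) w + dist (α n w) (β n w) + dist (z n) w < τ := by
    refine t1.eventually (gt_mem_nhds ?_); linarith
  obtain ⟨n, hn⟩ := t2.exists
  have h3 := dist_triangle4 (α n (z n)) (α n w) (β n w) (β n (z n))
  rw [dist_ap, dist_ap, dist_comm w (z n)] at h3
  have := hd n
  linarith

/-- uniform bounds -/
def Dbd (X : Type*) [MetricSpace X] (δ R t : ℝ) : Prop := ∀ (a b z : X) (α β : X ≃ᵢ X), SymAt a α → SymAt b β → dist a b ≤ δ →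
      dist a z ≤ R → dist (α z) (β z) ≤ t

lemma invol {ρ : ℝ} (LU : ∀ (a z : X) (α β : X ≃ᵢ X), SymAt a α → SymAt a β → dist a z ≤ ρ → α z = β z)
    {a z : X} {α : X ≃ᵢ X} (hα : SymAt a α) (h : dist a z ≤ ρ) : α (α z) = z := by
  rw [LU a z α α⁻¹ hα hα.inv h, ap_inv_ap]

lemma SymAt.dist_c {a : X} {α : X ≃ᵢ X} (hα : SymAt a α) (z : X) : dist a (α z) = dist a z := by
  conv_lhs => rw [← hα.1]
  rw [dist_ap]

lemma Dbd_double (hsym : PointSymmetric X) {ρ0 : ℝ}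
    (LU : ∀ (a z : X) (α β : X ≃ᵢ X), SymAt a α → SymAt a β → dist a z ≤ ρ0 → α z = β z)
    {δ R ρ t T : ℝ} (hρ : 0 < ρ) (htρ : t ≤ ρ) (hR : R + ρ ≤ ρ0) (hR2 : R + δ ≤ ρ0)
    (h1 : Dbd X δ (R+ρ) t) (h2 : Dbd X (2*δ) R T) :
    ∀ (a b z : X) (α β : X ≃ᵢ X), SymAt a α → SymAt b β → dist a b ≤ δ →
      dist a z ≤ R → dist (α z) (β z) * (2 - 4 * t / ρ) ≤ T := by
  intro a b z α β hα hβ hab haz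
  have hD : ∀ y, dist a y ≤ R + ρ → dist y ((β * α) y) ≤ t := by
    intro y hy
    have := h1 a b (α y) α β hα hβ hab (by rwa [hα.dist_c])
    rwa [invol LU hα (hy.trans hR)] at this
  have hzz : α (α z) = z := invol LU hα (by linarith)
  have hy : (β * α) (α z) = β z := by rw [mul_ap, hzz]
  have hΔ : dist (α z) (β z) ≤ t := h1 a b z α β hα hβ hab (by linarith)
  have hg := growth hsym (β * α) (α z) t ρ hρ (fun y hy => hD y (by
    have := dist_triangle a (α z) y
    rw [hα.dist_c] at this; linarith)) (by rw [hy]; linarith)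
  rw [hy] at hg
  have e : (β * α) (β z) = (β * α * β⁻¹) z := by
    rw [mul_ap, mul_ap, mul_ap]
    rw [LU b z β β⁻¹ hβ hβ.inv (by have := dist_triangle b a z; rw [dist_comm b a] at this; linarith)]
  rw [e] at hg
  have h3 := h2 a (β a) z α _ hα (hα.conj β) (by rw [hβ.2, dist_comm]; linarith) haz
  refine le_trans ?_ (hg.trans h3)
  refine mul_le_mul_of_nonneg_left ?_ dist_nonneg
  have : 2 * (t + dist (α z) (β z)) / ρ ≤ 4 * t / ρ :=
    div_le_div_of_nonneg_right (by linarith) (by linarith)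
  linarith

lemma Dbd_mono {δ δ' R R' t t' : ℝ} (h : Dbd X δ R t) (h1 : δ' ≤ δ) (h2 : R' ≤ R) (h3 : t ≤ t') : Dbd X δ' R' t' :=
  fun a b z α β hα hβ hab haz => (h a b z α β hα hβ (hab.trans h1) (haz.trans h2)).trans h3

lemma lip [ProperSpace X] [PreconnectedSpace X] [Nonempty X] (hsym : PointSymmetric X) {ρ0 : ℝ} (hρ0 : 0 < ρ0)
    (LU : ∀ (a z : X) (α β : X ≃ᵢ X), SymAt a α → SymAt a β → dist a z ≤ ρ0 → α z = β z) :
    ∃ ρ > 0, ∃ C > 0, ∃ δ > 0, ∀ (a b z : X) (α β : X ≃ᵢ X), SymAt a α → SymAt b β → dist a b ≤ δ →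
      dist a z ≤ ρ → dist (α z) (β z) ≤ C * dist a b := by
  set ρ := ρ0/8 with hρd
  have hρ : 0 < ρ := by positivity
  set t0 := ρ/24 with ht0
  have ht0p : 0 < t0 := by positivity
  obtain ⟨δ1, hδ1, hst⟩ := near_close hsym LU ht0p
  set δ0 := min δ1 ρ with hδ0
  have hδpos0 : 0 < δ0 := lt_min hδ1 hρ
  have hδ0ρ : δ0 ≤ ρ := min_le_right _ _
  have hst : Dbd X δ0 (3*ρ) t0 := Dbd_mono (show Dbd X δ1 ρ0 t0 from hst) (min_le_left _ _) (by linarith) le_rfl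
  have hle : ∀ k : ℕ, δ0 * (1/2)^k ≤ δ0 := fun k =>
    mul_le_of_le_one_right hδpos0.le (pow_le_one₀ (by norm_num) (by norm_num))
  have p1 : ∀ k : ℕ, Dbd X (δ0 * (1/2)^k) (2*ρ) (t0 * (2/3)^k) := by
    intro k
    induction k with
    | zero => simpa using Dbd_mono hst le_rfl (by linarith) le_rfl
    | succ k ih =>
      have h := Dbd_double hsym LU (δ := δ0 * (1/2)^(k+1)) (R := 2*ρ) (ρ := ρ) (t := t0) (T := t0 * (2/3)^k)
        hρ (by linarith) (by linarith) (by have := hle (k+1); linarith)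
        (Dbd_mono hst (hle _) (by linarith) le_rfl) (by convert ih using 1; ring)
      intro a b z α β hα hβ hab haz
      have := h a b z α β hα hβ hab haz
      have e : 4 * t0 / ρ = 1/6 := by rw [ht0]; field_simp; norm_num
      rw [e] at this
      have h0 : 0 ≤ dist (α z) (β z) := dist_nonneg
      rw [pow_succ]; nlinarith
  have p2 : ∀ k : ℕ, Dbd X (δ0 * (1/2)^k) ρ (t0 * (1/2)^k * (2 - (2/3)^k)) := by
    intro k
    induction k with
    | zero => 
      have := Dbd_mono hst le_rfl (show ρ ≤ 3*ρ by linarith) (le_refl t0)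
      norm_num; exact this
    | succ k ih =>
      set g : ℝ := (2/3)^k with hg
      have hgp : 0 < g := by positivity
      have hg1 : g ≤ 1 := pow_le_one₀ (by norm_num) (by norm_num)
      have hp := p1 (k+1)
      rw [pow_succ (2/3 : ℝ), ← hg] at hp
      have h := Dbd_double hsym LU (δ := δ0 * (1/2)^(k+1)) (R := ρ) (ρ := ρ) (t := t0 * (g * (2/3))) (T := t0 * (1/2)^k * (2 - g))
        hρ (by nlinarith) (by linarith) (by have := hle (k+1); linarith)
        (by convert hp using 1; ring) (by convert ih using 1; ring)
      intro a b z α β hα hβ hab haz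
      have := h a b z α β hα hβ hab haz
      have e : 4 * (t0 * (g * (2/3))) / ρ = g/9 := by rw [ht0]; field_simp; norm_num
      rw [e] at this
      have h0 : 0 ≤ dist (α z) (β z) := dist_nonneg
      rw [pow_succ (2/3:ℝ), ← hg, pow_succ (1/2:ℝ)]
      set Y := t0 * (1/2:ℝ)^k with hY
      have hYp : 0 < Y := by positivity
      have hq : 0 < 2 - g/9 := by linarith
      have e2 : t0 * ((1/2:ℝ)^k * (1/2)) * (2 - g * (2/3)) = Y * (1 - g/3) := by rw [hY]; ring
      rw [e2]
      have h4 : Y * (2 - g) ≤ Y * (1 - g/3) * (2 - g/9) := by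
        have : Y * (1 - g/3) * (2 - g/9) - Y * (2-g) = Y * (2*g/9 + g*g/27) := by ring
        have : 0 ≤ Y * (2*g/9 + g*g/27) := by positivity
        linarith
      exact le_of_mul_le_mul_right (this.trans h4) hq
  refine ⟨ρ, hρ, 4 * t0/δ0, by positivity, δ0, hδpos0, fun a b z α β hα hβ hab haz => ?_⟩
  rcases (dist_nonneg : 0 ≤ dist a b).eq_or_lt with h0 | h0
  · have e : a = b := dist_eq_zero.1 h0.symm
    subst e
    rw [LU a z α β hα hβ (by linarith), dist_self]
    positivity
  have hex : ∃ n : ℕ, δ0 * (1/2:ℝ)^n < dist a b := by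
    obtain ⟨n, hn⟩ := exists_pow_lt_of_lt_one (div_pos h0 hδpos0) (by norm_num : (1/2:ℝ) < 1)
    refine ⟨n, ?_⟩
    rw [lt_div_iff₀ hδpos0] at hn; linarith
  classical
  have hf := Nat.find_spec hex
  have hpos : 0 < Nat.find hex := by
    rw [Nat.pos_iff_ne_zero]; intro h00
    rw [h00] at hf; simp at hf; linarith
  obtain ⟨k, hk⟩ : ∃ k, Nat.find hex = k + 1 := ⟨Nat.find hex - 1, by omega⟩
  rw [hk] at hf
  have hm := Nat.find_min hex (m := k) (by omega)
  push Not at hm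
  have := p2 k a b z α β hα hβ hm haz
  have hgp : (0:ℝ) < (2/3)^k := by positivity
  have h5 : t0 * (1/2)^k * (2 - (2/3)^k) ≤ 2 * t0 * (1/2)^k := by
    have : 0 < t0 * (1/2)^k := by positivity
    nlinarith
  refine this.trans (h5.trans ?_)
  rw [pow_succ] at hf
  have : 4 * t0/δ0 * dist a b ≥ 4 * t0/δ0 * (δ0 * ((1/2)^k * (1/2))) := by gcongr
  have e : 4 * t0/δ0 * (δ0 * ((1/2)^k * (1/2))) = 2 * t0 * (1/2)^k := by field_simp; norm_num
  linarith
end GeoE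
end BooleanModel

namespace BooleanModel

section GeoF
open Filter Topology
variable {X : Type*} [MetricSpace X]

lemma twoSym {ρ0 ρ C δ : ℝ}
    (LU : ∀ (a z : X) (α β : X ≃ᵢ X), SymAt a α → SymAt a β → dist a z ≤ ρ0 → α z = β z)
    (LP : ∀ (a b z : X) (α β : X ≃ᵢ X), SymAt a α → SymAt b β → dist a b ≤ δ →
      dist a z ≤ ρ → dist (α z) (β z) ≤ C * dist a b) (hρ : ρ ≤ ρ0)
    {a b x : X} {α β : X ≃ᵢ X} (ha : SymAt a α) (hb : SymAt b β) (hab : dist a b ≤ δ) (hx : dist a x ≤ ρ) :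
    dist x ((β * α) x) ≤ C * dist a b := by
  have h1 := LP a b (α x) α β ha hb hab (by rw [ha.dist_c]; exact hx)
  rwa [invol LU ha (hx.trans hρ)] at h1

lemma local_mid [ProperSpace X] [PreconnectedSpace X] [Nonempty X] (hsym : PointSymmetric X) :
    ∃ r > 0, ∀ z y : X, dist z y ≤ r → ∃ m ς, SymAt m ς ∧ ς z = y := by
  obtain ⟨ρ0, hρ0, LU⟩ := local_unique hsym
  obtain ⟨ρ, hρ, C, hC, δ, hδ, LP'⟩ := lip hsym hρ0 LU
  have LP : ∀ (a b z : X) (α β : X ≃ᵢ X), SymAt a α → SymAt b β → dist a b ≤ δ →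
      dist a z ≤ min ρ ρ0 → dist (α z) (β z) ≤ C * dist a b :=
    fun a b z α β h1 h2 h3 h4 => LP' a b z α β h1 h2 h3 (h4.trans (min_le_left _ _))
  have hP : 0 < min ρ ρ0 := lt_min hρ hρ0
  have hPρ : min ρ ρ0 ≤ ρ0 := min_le_right _ _
  clear LP'
  revert LP hP hPρ
  generalize min ρ ρ0 = ρ' 
  intro LP hP hPρ
  have hε : 0 < min (1/8) (1/(8*C)) := lt_min (by norm_num) (by positivity)
  obtain ⟨rL, hrL, HL⟩ := L2 hsym hε
  have hε1 : min (1/8) (1/(8*C)) ≤ 1/8 := min_le_left _ _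
  have hε2 : min (1/8) (1/(8*C)) * C ≤ 1/8 := by
    have := mul_le_mul_of_nonneg_right (min_le_right (1/8) (1/(8*C))) hC.le
    refine this.trans (le_of_eq ?_); field_simp
  revert hε HL hε1 hε2
  generalize min (1/8) (1/(8*C)) = ε
  intro hε HL hε1 hε2
  obtain ⟨N, hN⟩ := exists_nat_gt (8 * (C + C^2))
  have hN0 : (0:ℝ) < N := lt_of_le_of_lt (by positivity) hN
  obtain ⟨r, hr, r1, r2, r3, r4, r5, r6⟩ : ∃ r > 0, r ≤ δ/2 ∧ r ≤ ρ'/4 ∧ N * r ≤ ρ'/2 ∧ r ≤ rL ∧ C * r ≤ rL ∧ C * r ≤ δ := by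
    refine ⟨min (δ/2) (min (ρ'/4) (min (ρ'/2/N) (min rL (min (rL/C) (δ/C))))), by positivity, ?_, ?_, ?_, ?_, ?_, ?_⟩
    · exact min_le_left _ _
    · exact (min_le_right _ _).trans (min_le_left _ _)
    · rw [mul_comm, ← le_div_iff₀ hN0]
      exact (min_le_right _ _).trans ((min_le_right _ _).trans (min_le_left _ _))
    · exact (min_le_right _ _).trans ((min_le_right _ _).trans ((min_le_right _ _).trans (min_le_left _ _)))
    · rw [mul_comm, ← le_div_iff₀ hC]
      exact (min_le_right _ _).trans ((min_le_right _ _).trans ((min_le_right _ _).trans ((min_le_right _ _).trans (min_le_left _ _))))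
    · rw [mul_comm, ← le_div_iff₀ hC]
      exact (min_le_right _ _).trans ((min_le_right _ _).trans ((min_le_right _ _).trans ((min_le_right _ _).trans (min_le_right _ _))))
  choose s hs using hsym
  have hs : ∀ x, SymAt x (s x) := hs
  refine ⟨r, hr, fun z y hzy => ?_⟩
  have hcont : ContinuousOn (fun m => dist (s m z) y) (closedBall z r) := by
    refine LipschitzOnWith.continuousOn (K := C.toNNReal) (LipschitzOnWith.of_dist_le_mul fun a ha b hb => ?_)
    rw [mem_closedBall] at ha hb
    have h1 : dist a b ≤ δ := by have := dist_triangle_right a b z; linarith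
    have h2 := LP a b z _ _ (hs a) (hs b) h1 (by linarith)
    rw [Real.coe_toNNReal _ hC.le, Real.dist_eq]
    exact (abs_dist_sub_le _ _ _).trans h2
  obtain ⟨m1, hm1, hmin⟩ := (isCompact_closedBall z r).exists_isMinOn ⟨z, mem_closedBall_self hr.le⟩ hcont
  have hmin : ∀ m ∈ closedBall z r, dist (s m1 z) y ≤ dist (s m z) y := fun m hm => hmin hm
  rw [mem_closedBall] at hm1
  refine ⟨m1, s m1, hs m1, ?_⟩
  set y1 := s m1 z with hy1
  by_contra hne
  have hS : 0 < dist y1 y := dist_pos.2 hne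
  have hS' : dist y1 y ≤ r := by
    have := hmin z (mem_closedBall_self hr.le)
    rw [(hs z).1] at this; linarith
  obtain ⟨b, ςb, hb, hb2⟩ := HL y1 y (hS'.trans r4)
  have hbd : dist y1 b ≤ dist y1 y := by
    have h1 := hb.2 y1
    have h2 := dist_triangle_right y1 (ςb y1) y
    have : ε * dist y1 y ≤ dist y1 y := by nlinarith
    rw [dist_comm y1 b]; linarith
  have e1 : dist m1 y1 = dist m1 z := (hs m1).dist_c z
  have e2 : dist y1 m1 ≤ r := by rw [dist_comm, e1]; exact hm1
  have Dv : ∀ x, dist y1 x ≤ ρ' → dist x ((ςb * s y1) x) ≤ C * dist y1 y := fun x hx =>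
    (twoSym LU LP hPρ (hs y1) hb (by linarith) hx).trans (by gcongr)
  have hm2 := Dv m1 (by linarith)
  have hCs : C * dist y1 y ≤ C * r := by gcongr
  obtain ⟨m', ς', hm', hm'2⟩ := HL m1 ((ςb * s y1) m1) (by linarith)
  have hεC : ε * dist m1 ((ςb * s y1) m1) ≤ dist y1 y / 8 := by
    calc ε * dist m1 ((ςb * s y1) m1) ≤ ε * (C * dist y1 y) := by gcongr
      _ = (ε * C) * dist y1 y := by ring
      _ ≤ 1/8 * dist y1 y := by gcongr
      _ = _ := by ring
  have hmd : dist m1 m' ≤ C * dist y1 y := by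
    have h1 := hm'.2 m1
    have h2 := dist_triangle_right m1 (ς' m1) ((ςb * s y1) m1)
    have h3 : ε * dist m1 ((ςb * s y1) m1) ≤ dist m1 ((ςb * s y1) m1) := by
      have := dist_nonneg (x := m1) (y := (ςb * s y1) m1)
      nlinarith
    rw [dist_comm m1 m']; linarith
  have Dv' : ∀ x, dist m1 x ≤ ρ' → dist x ((ς' * s m1) x) ≤ C * (C * dist y1 y) := fun x hx =>
    (twoSym LU LP hPρ (hs m1) hm' (by linarith) hx).trans (by gcongr)
  obtain ⟨p, hp, p0, p1⟩ := exists_chain (fun x => ⟨s x, hs x⟩) m1 y1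
  have hcv := convex_seq (e := fun i => dist ((ςb * s y1) (p i)) ((ς' * s m1) (p i))) (fun i => (hp.map (ςb * s y1)).convex (hp.map (ς' * s m1)) i) N
  have hpN : dist m1 (p N) ≤ ρ'/2 := by
    have := hp.dist_eq N 0
    rw [zero_add, p0, p1] at this
    rw [this]
    have : (N:ℝ) * dist m1 y1 ≤ N * r := by gcongr; rw [e1]; exact hm1
    linarith
  have hN1 := Dv (p N) (by have := dist_triangle y1 m1 (p N); linarith)
  have hN2 := Dv' (p N) (by linarith)
  have hN3 := dist_triangle_left ((ςb * s y1) (p N)) ((ς' * s m1) (p N)) (p N)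
  simp only [p0, p1] at hcv
  have h0 : dist ((ςb * s y1) m1) ((ς' * s m1) m1) ≤ dist y1 y / 8 := by
    rw [mul_ap ς', (hs m1).1, dist_comm]; linarith
  have hy' : (ς' * s m1) y1 = ς' z := by
    rw [mul_ap, hy1, invol LU (hs m1) (by rw [dist_comm] at hm1; rw [dist_comm]; linarith)]
  have hvy : (ςb * s y1) y1 = ςb y1 := by rw [mul_ap, (hs y1).1]
  rw [hy', hvy] at hcv
  have hnn := dist_nonneg (x := (ςb * s y1) m1) (y := (ς' * s m1) m1)
  have h5 : dist (ςb y1) (ς' z) ≤ dist y1 y / 8 + dist y1 y / 8 := by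
    have h6 : (N:ℝ) * (dist (ςb y1) (ς' z) - dist ((ςb * s y1) m1) ((ς' * s m1) m1)) ≤ (C + C^2) * dist y1 y := by
      linarith
    have h7 : (C + C^2) * dist y1 y ≤ N * (dist y1 y / 8) := by nlinarith
    have h8 := le_of_mul_le_mul_left (h6.trans h7) hN0
    linarith
  have hfin : dist (ς' z) y ≤ dist y1 y / 2 := by
    have := dist_triangle_left (ς' z) y (ςb y1)
    have : ε * dist y1 y ≤ 1/8 * dist y1 y := by gcongr
    linarith
  have hm'z : dist m' z ≤ r := by
    have h1 := hm'.2 z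
    have h2 := dist_triangle_right z (ς' z) y
    linarith
  have := hmin m' hm'z
  rw [LU m' z (s m') ς' (hs m') hm' (by linarith)] at this
  linarith

end GeoF
end BooleanModel

namespace BooleanModel

section GeoG
open Filter Topology
variable {X : Type*} [MetricSpace X]

def Mid (z w m : X) : Prop := ∃ ς, SymAt m ς ∧ ς z = w

lemma Mid.lip {z w m z' w' m' : X} (h : Mid z w m) (h' : Mid z' w' m') :
    2 * dist m m' ≤ dist z z' + dist w w' := by
  obtain ⟨ς, hς, rfl⟩ := h
  obtain ⟨τ, hτ, rfl⟩ := h'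
  exact mid_convex hς hτ z z'

lemma Mid.left {z w m : X} (h : Mid z w m) : 2 * dist z m = dist z w := by
  obtain ⟨ς, hς, rfl⟩ := h
  rw [hς.2, dist_comm]

lemma Mid.right {z w m : X} (h : Mid z w m) : 2 * dist m w = dist z w := by
  obtain ⟨ς, hς, rfl⟩ := h
  rw [hς.2, hς.dist_c]

lemma parts (φ e : ℕ → ℝ) (n : ℕ) : ∑ i ∈ Finset.range n, φ (i+1) * (e i + e (i+2)) =
    ∑ i ∈ Finset.range n, e (i+1) * (φ i + φ (i+2)) + e 0 * φ 1 - e 1 * φ 0 + φ n * e (n+1) - φ (n+1) * e n := by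
  induction n with
  | zero => simp; ring
  | succ n ih => rw [Finset.sum_range_succ, Finset.sum_range_succ, ih]; ring

def IsPoly (z y : X) (r : ℝ) (N : ℕ) (p : ℕ → X) : Prop :=
  p 0 = z ∧ (∀ i, N ≤ i → p i = y) ∧ ∀ i, dist (p i) (p (i+1)) ≤ r

lemma IsPoly.bd {z y : X} {r : ℝ} {N : ℕ} {p : ℕ → X} (hp : IsPoly z y r N p) (i : ℕ) : dist z (p i) ≤ i * r := by
  induction i with
  | zero => rw [hp.1]; simp
  | succ i ih =>
    have := dist_triangle z (p i) (p (i+1))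
    have := hp.2.2 i
    push_cast; linarith

lemma exists_poly [PreconnectedSpace X] {r : ℝ} (hr : 0 < r) (z y : X) : ∃ n p, IsPoly z y r (n+1) p := by
  let A : Set X := {y | ∃ N p, IsPoly z y r N p}
  have ext : ∀ y ∈ A, ∀ y', dist y y' < r → y' ∈ A := by
    rintro y ⟨N, p, h0, h1, h2⟩ y' hy
    refine ⟨N+1, fun i => if i ≤ N then p i else y', by simp [h0], ?_, ?_⟩
    · intro i hi; simp [show ¬ i ≤ N by omega]
    · intro i
      rcases lt_trichotomy i N with h | h | h
      · simp only [show i ≤ N by omega, show i+1 ≤ N by omega, if_true]; exact h2 i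
      · subst h; simp [h1 i le_rfl, hy.le]
      · simp [show ¬ i ≤ N by omega, show ¬ i+1 ≤ N by omega, hr.le]
  have hA : A = univ := by
    refine IsClopen.eq_univ ⟨?_, ?_⟩ ⟨z, 0, fun _ => z, rfl, fun _ _ => rfl, fun _ => by simp [hr.le]⟩
    · rw [← isOpen_compl_iff, Metric.isOpen_iff]
      intro y hy
      refine ⟨r, hr, fun y' hy' h => hy (ext y' h y ?_)⟩
      exact hy'
    · rw [Metric.isOpen_iff]
      intro y hy
      exact ⟨r, hr, fun y' hy' => ext y hy y' (by rw [dist_comm]; exact hy')⟩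
  have : y ∈ A := by rw [hA]; trivial
  obtain ⟨N, p, h0, h1, h2⟩ := this
  exact ⟨N, p, h0, fun i hi => h1 i (by omega), h2⟩

lemma sym_poly [ProperSpace X] {r0 : ℝ} 
    (HM : ∀ z y : X, dist z y ≤ r0 → ∃ m ς, SymAt m ς ∧ ς z = y) {r : ℝ} (hr0 : 2 * r ≤ r0) {z y : X} {n : ℕ}
    {p0 : ℕ → X} (hp0 : IsPoly z y r (n+1) p0) :
    ∃ p, IsPoly z y r (n+1) p ∧ ∀ i < n, Mid (p i) (p (i+2)) (p (i+1)) := by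
  have : ∃ mid : X → X → X, ∀ z y, dist z y ≤ r0 → Mid z y (mid z y) := by
    have : ∀ z y : X, ∃ m, dist z y ≤ r0 → Mid z y m := by
      intro z y
      by_cases h : dist z y ≤ r0
      · obtain ⟨m, h2⟩ := HM z y h; exact ⟨m, fun _ => h2⟩
      · exact ⟨z, fun h2 => absurd h2 h⟩
    choose mid hmid using this
    exact ⟨mid, hmid⟩
  obtain ⟨mid, hmid⟩ := this
  let K : Set (ℕ → X) := {p | IsPoly z y r (n+1) p}
  have hd2 : ∀ p ∈ K, ∀ i, dist (p i) (p (i+2)) ≤ r0 := by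
    intro p hp i
    have := dist_triangle (p i) (p (i+1)) (p (i+2))
    have := hp.2.2 i
    have := hp.2.2 (i+1)
    linarith
  have hKc : IsCompact K := by
    have h1 : IsCompact (univ.pi fun i : ℕ => closedBall z (i * r)) := isCompact_univ_pi fun i => isCompact_closedBall _ _
    refine h1.of_isClosed_subset ?_ ?_
    · have : K = {p | p 0 = z} ∩ (⋂ i, ⋂ (_ : n + 1 ≤ i), {p | p i = y}) ∩ ⋂ i, {p | dist (p i) (p (i+1)) ≤ r} := by
        ext p; simp only [K, IsPoly, mem_setOf_eq, mem_inter_iff, mem_iInter, and_assoc]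
      rw [this]
      refine (IsClosed.inter ?_ ?_).inter ?_
      · exact isClosed_eq (continuous_apply 0) continuous_const
      · exact isClosed_iInter fun i => isClosed_iInter fun _ => isClosed_eq (continuous_apply i) continuous_const
      · exact isClosed_iInter fun i => isClosed_le ((continuous_apply i).dist (continuous_apply (i+1))) continuous_const
    · intro p hp i _
      rw [mem_closedBall, dist_comm]
      exact IsPoly.bd hp i
  let e : (ℕ → X) → ℕ → ℝ := fun p i => dist (p (i+1)) (mid (p i) (p (i+2)))
  let φ : ℕ → ℝ := fun i => i * (n + 1 - i)
  have hφpos : ∀ i < n, 0 < φ (i+1) := by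
    intro i hi
    have : ((i+1 : ℕ):ℝ) ≤ n := by exact_mod_cast hi
    have h2 : (0:ℝ) < ((i+1 : ℕ):ℝ) := by positivity
    exact mul_pos h2 (by linarith)
  let F : (ℕ → X) → ℝ := fun p => ∑ i ∈ Finset.range n, φ (i+1) * e p i
  have hec : ∀ i, ContinuousOn (fun p => e p i) K := by
    intro i
    have : ContinuousOn (fun p : ℕ → X => mid (p i) (p (i+2))) K := by
      intro p hp
      rw [ContinuousWithinAt, tendsto_iff_dist_tendsto_zero]
      have h1 : Tendsto (fun q : ℕ → X => dist (q i) (p i) + dist (q (i+2)) (p (i+2))) (𝓝[K] p) (𝓝 0) := by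
        have : Continuous (fun q : ℕ → X => dist (q i) (p i) + dist (q (i+2)) (p (i+2))) := by fun_prop
        have := (this.tendsto p).mono_left (nhdsWithin_le_nhds (s := K))
        simpa using this
      refine squeeze_zero' (Eventually.of_forall fun _ => dist_nonneg) ?_ h1
      filter_upwards [self_mem_nhdsWithin] with q hq
      have := (hmid _ _ (hd2 q hq i)).lip (hmid _ _ (hd2 p hp i))
      have h3 := dist_nonneg (x := mid (q i) (q (i + 2))) (y := mid (p i) (p (i + 2)))
      linarith
    exact continuous_dist.comp_continuousOn ((continuous_apply (A := fun _ => X) (i+1)).continuousOn.prodMk this)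
  have hFc : ContinuousOn F K := continuousOn_finset_sum _ fun i _ => continuousOn_const.mul (hec i)
  obtain ⟨p, hp, hmin⟩ := hKc.exists_isMinOn ⟨p0, hp0⟩ hFc
  refine ⟨p, hp, ?_⟩
  let q : ℕ → X := fun i => if i = 0 then z else if n + 1 ≤ i then y else mid (p (i-1)) (p (i+1))
  have q0 : q 0 = z := by simp [q]
  have qn : ∀ i, n + 1 ≤ i → q i = y := by intro i hi; simp only [q]; rw [if_neg (by omega), if_pos hi]
  have qi : ∀ i < n, q (i+1) = mid (p i) (p (i+2)) := by
    intro i hi; simp only [q]; rw [if_neg (by omega), if_neg (by omega)]; rfl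
  have hpM := fun i => hmid _ _ (hd2 p hp i)
  have hr : 0 ≤ r := dist_nonneg.trans (hp.2.2 0)
  have hq : q ∈ K := by
    refine ⟨q0, qn, fun i => ?_⟩
    have t1 := hp.2.2 i
    have t2 := hp.2.2 (i+1)
    have t3 := dist_triangle (p i) (p (i+1)) (p (i+2))
    rcases Nat.eq_zero_or_pos i with h0 | h0
    · subst h0
      rw [q0]
      by_cases hn : 0 < n
      · rw [qi 0 hn]
        have := (hpM 0).left
        have e0 := hp.1
        simp only [zero_add] at *
        have t2 : dist (p 1) (p 2) ≤ r := t2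
        rw [← e0]
        linarith
      · rw [qn _ (by omega)]
        have := hp.2.2 0
        rwa [hp.1, hp.2.1 _ (by omega)] at this
    · obtain ⟨j, rfl⟩ : ∃ j, i = j + 1 := ⟨i - 1, by omega⟩
      by_cases hj : j < n
      · rw [qi j hj]
        have t0 := hp.2.2 j
        by_cases hj1 : j + 1 < n
        · rw [qi (j+1) hj1]
          have := (hpM j).lip (hpM (j+1))
          linarith
        · rw [qn _ (by omega)]
          have := (hpM j).right
          have t3 := dist_triangle (p j) (p (j+1)) (p (j+2))
          rw [← hp.2.1 (j+2) (by omega)]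
          linarith
      · rw [qn _ (by omega), qn _ (by omega), dist_self]; exact hr
  have hle : F p ≤ F q := hmin hq
  let E : ℕ → ℝ := fun i => dist (p i) (q i)
  have hE : ∀ i < n, e p i = E (i+1) := by intro i hi; simp only [e, E]; rw [qi i hi]
  have hFq : 2 * F q ≤ ∑ i ∈ Finset.range n, φ (i+1) * (E i + E (i+2)) := by
    rw [Finset.mul_sum]
    refine Finset.sum_le_sum fun i hi => ?_
    rw [Finset.mem_range] at hi
    have := (hpM i).lip (hmid _ _ (hd2 q hq i))
    rw [← qi i hi] at this
    have h2 := hφpos i hi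
    calc 2 * (φ (i+1) * e q i) = φ (i+1) * (2 * e q i) := by ring
      _ ≤ _ := by
        refine mul_le_mul_of_nonneg_left this h2.le
  have E0 : E 0 = 0 := by simp only [E]; rw [hp.1, q0, dist_self]
  have En : E (n+1) = 0 := by simp only [E]; rw [hp.2.1 _ le_rfl, qn _ le_rfl, dist_self]
  have φ0 : φ 0 = 0 := by simp [φ]
  have φn : φ (n+1) = 0 := by simp [φ]
  rw [parts, E0, En, φ0, φn] at hFq
  have hS : ∑ i ∈ Finset.range n, E (i+1) * (φ i + φ (i+2)) = 2 * F p - 2 * ∑ i ∈ Finset.range n, E (i+1) := by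
    rw [Finset.mul_sum, Finset.mul_sum, ← Finset.sum_sub_distrib]
    refine Finset.sum_congr rfl fun i hi => ?_
    rw [Finset.mem_range] at hi
    rw [hE i hi]
    simp only [φ]; push_cast; ring
  have hz : ∑ i ∈ Finset.range n, E (i+1) ≤ 0 := by linarith
  have hz2 : ∑ i ∈ Finset.range n, E (i+1) = 0 := le_antisymm hz (Finset.sum_nonneg fun i _ => dist_nonneg)
  rw [Finset.sum_eq_zero_iff_of_nonneg fun i _ => dist_nonneg] at hz2
  intro i hi
  have := dist_eq_zero.1 (hz2 i (Finset.mem_range.2 hi))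
  rw [this, qi i hi]
  exact hpM i

/-- symmetric chains joining two given points with small steps -/
lemma exists_schain [ProperSpace X] [PreconnectedSpace X] (hsym : PointSymmetric X) {r : ℝ} (hr : 0 < r) (z y : X) :
    ∃ (N : ℕ) (x : ℕ → X), SChain x ∧ x 0 = z ∧ x N = y ∧ dist (x 0) (x 1) ≤ r := by
  haveI : Nonempty X := ⟨z⟩
  obtain ⟨ρ0, hρ0, LU⟩ := local_unique hsym
  obtain ⟨r0, hr0, HM⟩ := local_mid hsym
  obtain ⟨r', hr', h1, h2, h3⟩ : ∃ r' > 0, r' ≤ r ∧ r' ≤ ρ0 ∧ 2 * r' ≤ r0 :=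
    ⟨min r (min ρ0 (r0/2)), by positivity, min_le_left _ _, (min_le_right _ _).trans (min_le_left _ _), by
      have : min r (min ρ0 (r0/2)) ≤ r0/2 := (min_le_right _ _).trans (min_le_right _ _)
      linarith⟩
  obtain ⟨n, p0, hp0⟩ := exists_poly hr' z y
  obtain ⟨p, hp, hM⟩ := sym_poly HM h3 hp0
  obtain ⟨x, hx, x0, x1⟩ := exists_chain hsym (p 0) (p 1)
  have key : ∀ i, i ≤ n → x i = p i ∧ x (i+1) = p (i+1) := by
    intro i
    induction i with
    | zero => intro _; exact ⟨x0, x1⟩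
    | succ i ih =>
      intro hi
      obtain ⟨e1, e2⟩ := ih (by omega)
      refine ⟨e2, ?_⟩
      obtain ⟨ς, hς, h⟩ := hx i
      obtain ⟨τ, hτ, h'⟩ := hM i (by omega)
      rw [← h, ← h', e1]
      rw [e2] at hς
      exact LU _ _ _ _ hς hτ (by rw [dist_comm]; exact (hp.2.2 i).trans h2)
  refine ⟨n+1, x, hx, x0.trans hp.1, ((key n le_rfl).2).trans (hp.2.1 _ le_rfl), ?_⟩
  rw [x0, x1]; exact (hp.2.2 0).trans h1

end GeoG
end BooleanModel

namespace BooleanModel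

section GeoH
open Filter Topology
variable {X : Type*} [MetricSpace X]

lemma geo_pt [ProperSpace X] [PreconnectedSpace X] (hsym : PointSymmetric X) (c p : X) {t : ℝ} (h0 : 0 ≤ t)
    (h1 : t ≤ dist c p) : ∃ g, dist c g = t ∧ dist g p = dist c p - t := by
  let f : X → ℝ := fun g => |dist c g - t| + |dist g p - (dist c p - t)|
  have hf : Continuous f := by fun_prop
  obtain ⟨g, hg, hmin⟩ := (isCompact_closedBall c (dist c p)).exists_isMinOn ⟨c, mem_closedBall_self dist_nonneg⟩ hf.continuousOn
  have key : ∀ ε > 0, f g ≤ 2 * ε := by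
    intro ε hε
    obtain ⟨N, x, hx, x0, xN, hs⟩ := exists_schain hsym hε c p
    have hd := hx.dist_eq N 0
    rw [zero_add, x0, xN] at hd
    rw [x0] at hs
    set s := dist c (x 1) with hsd
    have hs0 : 0 ≤ s := dist_nonneg
    rcases hs0.eq_or_lt with h | h
    · rw [← h, mul_zero] at hd
      have ht : t = 0 := by linarith
      have : f g ≤ f c := hmin (mem_closedBall_self dist_nonneg)
      have hc : f c = 0 := by simp [f, ht]
      linarith
    · set i := ⌊t/s⌋₊ with hi
      have i1 : (i:ℝ) ≤ t/s := Nat.floor_le (by positivity)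
      have i2 : t/s < i + 1 := Nat.lt_floor_add_one _
      rw [le_div_iff₀ h] at i1
      rw [div_lt_iff₀ h] at i2
      have iN : i ≤ N := by
        have : (i:ℝ) ≤ N := by
          refine le_of_mul_le_mul_right ?_ h
          linarith
        exact_mod_cast this
      have d1 := hx.dist_eq i 0
      rw [zero_add, x0] at d1
      have d2 := hx.dist_eq (N - i) i
      rw [show i + (N - i) = N by omega, xN, x0, Nat.cast_sub iN] at d2
      rw [← hsd] at d1 d2
      have : f g ≤ f (x i) := hmin (by rw [mem_closedBall, dist_comm]; linarith)
      refine this.trans ?_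
      have a1 : |dist c (x i) - t| ≤ ε := by rw [abs_le]; constructor <;> linarith
      have a2 : |dist (x i) p - (dist c p - t)| ≤ ε := by rw [abs_le]; constructor <;> linarith
      simp only [f]; linarith
  have hfg : f g ≤ 0 := by
    refine le_of_forall_pos_le_add fun ε hε => ?_
    have := key (ε/2) (by positivity)
    linarith
  have b1 := abs_nonneg (dist c g - t)
  have b2 := abs_nonneg (dist g p - (dist c p - t))
  have c1 : |dist c g - t| = 0 := by simp only [f] at hfg; linarith
  have c2 : |dist g p - (dist c p - t)| = 0 := by simp only [f] at hfg; linarith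
  rw [abs_eq_zero] at c1 c2
  exact ⟨g, by linarith, by linarith⟩

lemma ball_preconn [ProperSpace X] [PreconnectedSpace X] (hsym : PointSymmetric X) (c : X) (R : ℝ) :
    IsPreconnected (closedBall c R) := by
  have aux : ∀ t t' : Set X, IsClosed t → IsClosed t' → closedBall c R ⊆ t ∪ t' → c ∈ t →
      (closedBall c R ∩ t').Nonempty → (closedBall c R ∩ (t ∩ t')).Nonempty := by
    intro t t' ht ht' hcov hc ⟨p, hp, hpt⟩
    by_contra hne
    rw [not_nonempty_iff_eq_empty] at hne
    have hK : IsCompact (closedBall c R ∩ t) := (isCompact_closedBall c R).inter_right ht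
    have hL : IsClosed (closedBall c R ∩ t') := isClosed_closedBall.inter ht'
    have hdis : Disjoint (closedBall c R ∩ t) (closedBall c R ∩ t') := by
      rw [Set.disjoint_left]
      rintro a ⟨h1, h2⟩ ⟨h3, h4⟩
      have : a ∈ closedBall c R ∩ (t ∩ t') := ⟨h1, h2, h4⟩
      rw [hne] at this; exact this
    obtain ⟨δ, hδ, hd⟩ := hdis.exists_thickenings hK hL
    obtain ⟨N, x, hx, x0, xN, hs⟩ := exists_schain hsym (half_pos hδ) c p
    have hpR : dist c p ≤ R := by rw [dist_comm]; exact hp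
    have hb : ∀ i ≤ N, x i ∈ closedBall c R := by
      intro i hi
      have d1 := hx.dist_eq i 0
      have d2 := hx.dist_eq N 0
      rw [zero_add, x0] at d1 d2
      rw [xN] at d2
      have : (i:ℝ) * dist c (x 1) ≤ N * dist c (x 1) := by gcongr
      rw [mem_closedBall, dist_comm]; linarith
    have hR : 0 ≤ R := dist_nonneg.trans hpR
    have hxt : ∀ i ≤ N, x i ∈ closedBall c R ∩ t := by
      intro i
      induction i with
      | zero => intro _; rw [x0]; exact ⟨mem_closedBall_self hR, hc⟩
      | succ i ih =>
        intro hi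
        refine ⟨hb _ hi, ?_⟩
        by_contra hn
        have h1 : x (i+1) ∈ closedBall c R ∩ t' := ⟨hb _ hi, (hcov (hb _ hi)).resolve_left hn⟩
        have h2 := ih (by omega)
        have h3 : x i ∈ thickening δ (closedBall c R ∩ t') := by
          rw [mem_thickening_iff]
          exact ⟨_, h1, by rw [hx.step]; linarith⟩
        exact Set.disjoint_left.1 hd (self_subset_thickening hδ _ h2) h3
    have h1 := hxt N le_rfl
    rw [xN] at h1
    have : p ∈ closedBall c R ∩ (t ∩ t') := ⟨hp, h1.2, hpt⟩
    rw [hne] at this; exact this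
  rw [isPreconnected_closed_iff]
  intro t t' ht ht' hcov h1 h2
  have hR : 0 ≤ R := by obtain ⟨q, hq, _⟩ := h1; exact dist_nonneg.trans hq
  rcases hcov (mem_closedBall_self hR) with h | h
  · exact aux t t' ht ht' hcov h h2
  · have := aux t' t ht' ht (by rwa [union_comm]) h h1
    rwa [inter_comm t' t] at this

/-- balls of radius 1 intersect iff centers are within 2 -/
lemma mid_exists [ProperSpace X] [PreconnectedSpace X] (hsym : PointSymmetric X) {p q : X} (h : dist p q ≤ 2) :
    (closedBall p 1 ∩ closedBall q 1).Nonempty := by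
  obtain ⟨g, h1, h2⟩ := geo_pt hsym p q (t := dist p q / 2) (by positivity) (by have := dist_nonneg (x := p) (y := q); linarith)
  exact ⟨g, by rw [mem_closedBall, dist_comm]; linarith, by rw [mem_closedBall]; linarith⟩

end GeoH
end BooleanModel

namespace BooleanModel

section ProbA
open Filter Topology
variable {X : Type*} [MetricSpace X]

/-- void event -/
def vd (B : Set X) : Set (Config X) := {s | s.1 ∩ B = ∅}

def cap (B : Set X) (s : Config X) : Config X := ⟨s.1 ∩ B, fun K hK => (s.2 K hK).subset fun z hz => ⟨hz.1.1, hz.2⟩⟩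

def uni (s t : Config X) : Config X := ⟨s.1 ∪ t.1, fun K hK => by
  rw [union_inter_distrib_right]; exact (s.2 K hK).union (t.2 K hK)⟩

def mix (S : Set X) (s t : Config X) : Config X := uni (cap S s) (cap Sᶜ t)

lemma vd_inter (B C : Set X) : vd B ∩ vd C = vd (B ∪ C) := by
  ext s; simp only [vd, mem_inter_iff, mem_setOf_eq, inter_union_distrib_left, union_empty_iff]

lemma vd_iUnion {ι : Sort*} (B : ι → Set X) : vd (⋃ i, B i) = ⋂ i, vd (B i) := by
  ext s; simp only [vd, mem_iInter, mem_setOf_eq, inter_iUnion, iUnion_eq_empty]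

variable [MeasurableSpace X]

def voidSys (X : Type*) [MetricSpace X] [MeasurableSpace X] : Set (Set (Config X)) :=
  {A | ∃ B, MeasurableSet B ∧ IsBounded B ∧ A = vd B}

lemma voidSys_pi : IsPiSystem (voidSys X) := by
  rintro _ ⟨B, h1, h2, rfl⟩ _ ⟨C, h3, h4, rfl⟩ _
  exact ⟨B ∪ C, h1.union h3, h2.union h4, vd_inter B C⟩

lemma meas_vd {B : Set X} (hB : MeasurableSet B) : MeasurableSet (vd B) := by
  refine MeasurableSpace.measurableSet_generateFrom ⟨B, 0, hB, ?_⟩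
  ext s; simp [vd]

lemma count_meas {B : Set X} (hB : MeasurableSet B) : Measurable (fun s : Config X => (s.1 ∩ B).encard) := by
  refine measurable_to_countable' fun n => ?_
  exact MeasurableSpace.measurableSet_generateFrom ⟨B, n, hB, rfl⟩

variable [BorelSpace X] [ProperSpace X] [Nonempty X]

lemma gen_le_void : (Config.instMeasurableSpace : MeasurableSpace (Config X)) ≤ MeasurableSpace.generateFrom (voidSys X) := by
  obtain ⟨o⟩ := ‹Nonempty X›
  have h1 : ∀ B : Set X, MeasurableSet B → MeasurableSet[MeasurableSpace.generateFrom (voidSys X)] (vd B) := by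
    intro B hB
    have : B = ⋃ k : ℕ, B ∩ closedBall o k := by
      rw [← inter_iUnion, iUnion_closedBall_nat, inter_univ]
    rw [this, vd_iUnion]
    refine MeasurableSet.iInter fun k => MeasurableSpace.measurableSet_generateFrom ⟨_, hB.inter measurableSet_closedBall, ?_, rfl⟩
    exact isBounded_closedBall.subset inter_subset_right
  have h2 : ∀ (B : Set X), MeasurableSet B → ∀ k : ℕ,
      MeasurableSet[MeasurableSpace.generateFrom (voidSys X)] {s : Config X | (k : ℕ∞) ≤ (s.1 ∩ B).encard} := by
    intro B hB k
    let 𝒢 := TopologicalSpace.countableBasis X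
    have hG : TopologicalSpace.IsTopologicalBasis 𝒢 := TopologicalSpace.isBasis_countableBasis X
    haveI : Countable 𝒢 := (TopologicalSpace.countable_countableBasis X).to_subtype
    have : {s : Config X | (k : ℕ∞) ≤ (s.1 ∩ B).encard} =
        ⋃ U : Fin k → 𝒢, ⋃ (_ : Pairwise fun i j => Disjoint (U i).1 (U j).1), ⋂ i, (vd (B ∩ (U i).1))ᶜ := by
      ext s
      simp only [mem_setOf_eq, mem_iUnion, mem_iInter, vd, mem_compl_iff]
      constructor
      · intro hk
        obtain ⟨F, hF, hFc⟩ := Set.exists_subset_encard_eq hk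
        have hFf : F.Finite := Set.finite_of_encard_eq_coe hFc
        obtain ⟨V, hV, hVd⟩ := hFf.t2_separation
        have : ∀ x, ∃ U : 𝒢, x ∈ U.1 ∧ U.1 ⊆ V x := by
          intro x
          obtain ⟨U, h1, h2, h3⟩ := hG.exists_subset_of_mem_open (hV x).1 (hV x).2
          exact ⟨⟨U, h1⟩, h2, h3⟩
        choose U hU hUV using this
        have hcard : Nat.card F = k := by
          rw [Nat.card_coe_set_eq, Set.ncard, hFc]; rfl
        haveI : Finite F := hFf
        let e : F ≃ Fin k := Finite.equivFinOfCardEq hcard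
        refine ⟨fun i => U (e.symm i), ?_, ?_⟩
        · intro i j hij
          refine (hVd (e.symm i).2 (e.symm j).2 ?_).mono (hUV _) (hUV _)
          intro h
          exact hij (e.symm.injective (Subtype.ext h))
        · intro i h0
          have : (e.symm i : X) ∈ s.1 ∩ (B ∩ (U (e.symm i)).1) := ⟨(hF (e.symm i).2).1, (hF (e.symm i).2).2, hU _⟩
          rw [h0] at this; exact this
      · rintro ⟨U, hd, hne⟩
        have : ∀ i, ∃ x, x ∈ s.1 ∩ (B ∩ (U i).1) := fun i => nonempty_iff_ne_empty.2 (hne i)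
        choose x hx using this
        have hinj : Injective x := by
          intro i j h
          by_contra hij
          exact Set.disjoint_left.1 (hd hij) (hx i).2.2 (h ▸ (hx j).2.2)
        have h3 : (range x).encard = k := by
          rw [← image_univ, hinj.encard_image, encard_univ]; simp
        rw [← h3]
        refine encard_le_encard ?_
        rintro _ ⟨i, rfl⟩
        exact ⟨(hx i).1, (hx i).2.1⟩
    rw [this]
    refine MeasurableSet.iUnion fun U => MeasurableSet.iUnion fun _ => MeasurableSet.iInter fun i => (h1 _ ?_).compl
    exact hB.inter (hG.isOpen (U i).2).measurableSet
  refine MeasurableSpace.generateFrom_le ?_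
  rintro _ ⟨B, n, hB, rfl⟩
  induction n using ENat.recTopCoe with
  | top =>
    have : {s : Config X | (s.1 ∩ B).encard = ⊤} = ⋂ k : ℕ, {s : Config X | (k : ℕ∞) ≤ (s.1 ∩ B).encard} := by
      ext s; simp only [mem_setOf_eq, mem_iInter]
      exact ⟨fun h k => by rw [h]; exact le_top, fun h => ENat.eq_top_iff_forall_ge.2 h⟩
    rw [this]
    exact MeasurableSet.iInter fun k => h2 B hB k
  | coe k =>
    have : {s : Config X | (s.1 ∩ B).encard = (k:ℕ∞)} =
        {s : Config X | (k : ℕ∞) ≤ (s.1 ∩ B).encard} \ {s : Config X | ((k+1 : ℕ) : ℕ∞) ≤ (s.1 ∩ B).encard} := by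
      ext s; simp only [mem_setOf_eq, mem_diff, not_le]
      constructor
      · intro h; rw [h]; exact ⟨le_rfl, by exact_mod_cast Nat.lt_succ_self k⟩
      · rintro ⟨h3, h4⟩
        refine le_antisymm ?_ h3
        push_cast at h4
        exact Order.le_of_lt_add_one h4
    rw [this]
    exact (h2 B hB k).diff (h2 B hB (k+1))

lemma gen_void : (Config.instMeasurableSpace : MeasurableSpace (Config X)) = MeasurableSpace.generateFrom (voidSys X) := by
  refine le_antisymm gen_le_void (MeasurableSpace.generateFrom_le ?_)
  rintro _ ⟨B, h1, _, rfl⟩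
  exact meas_vd h1

lemma meas_of_void {Ω : Type*} [MeasurableSpace Ω] {f : Ω → Config X}
    (h : ∀ B, MeasurableSet B → IsBounded B → MeasurableSet (f ⁻¹' vd B)) : Measurable f := by
  rw [gen_void]
  refine measurable_generateFrom ?_
  rintro _ ⟨B, h1, h2, rfl⟩
  exact h B h1 h2

lemma cap_vd (S B : Set X) : cap S ⁻¹' vd B = vd (S ∩ B) := by
  ext s
  change s.1 ∩ S ∩ B = ∅ ↔ s.1 ∩ (S ∩ B) = ∅
  rw [inter_assoc]

lemma cap_meas {S : Set X} (hS : MeasurableSet S) : Measurable (cap S) :=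
  meas_of_void fun B hB _ => by rw [cap_vd]; exact meas_vd (hS.inter hB)

lemma uni_vd (B : Set X) : (fun p : Config X × Config X => uni p.1 p.2) ⁻¹' vd B = vd B ×ˢ vd B := by
  ext s
  change (s.1.1 ∪ s.2.1) ∩ B = ∅ ↔ s.1.1 ∩ B = ∅ ∧ s.2.1 ∩ B = ∅
  rw [union_inter_distrib_right, union_empty_iff]

lemma uni_meas : Measurable (fun p : Config X × Config X => uni p.1 p.2) :=
  meas_of_void fun B hB _ => by rw [uni_vd]; exact (meas_vd hB).prod (meas_vd hB)

lemma mix_vd (S B : Set X) : (fun p : Config X × Config X => mix S p.1 p.2) ⁻¹' vd B = vd (S ∩ B) ×ˢ vd (Sᶜ ∩ B) := by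
  rw [← cap_vd, ← cap_vd]
  ext s
  change (s.1.1 ∩ S ∪ s.2.1 ∩ Sᶜ) ∩ B = ∅ ↔ s.1.1 ∩ S ∩ B = ∅ ∧ s.2.1 ∩ Sᶜ ∩ B = ∅
  rw [union_inter_distrib_right, union_empty_iff]

lemma mix_meas {S : Set X} (hS : MeasurableSet S) : Measurable (fun p : Config X × Config X => mix S p.1 p.2) :=
  uni_meas.comp (((cap_meas hS).comp measurable_fst).prodMk ((cap_meas hS.compl).comp measurable_snd))

lemma mapIso_vd (γ : X ≃ᵢ X) (B : Set X) : Config.mapIso γ ⁻¹' vd B = vd (γ ⁻¹' B) := by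
  ext s
  change γ '' s.1 ∩ B = ∅ ↔ s.1 ∩ γ ⁻¹' B = ∅
  rw [← image_inter_preimage, image_eq_empty]

lemma mapIso_meas (γ : X ≃ᵢ X) : Measurable (Config.mapIso γ : Config X → Config X) :=
  meas_of_void fun B hB _ => by rw [mapIso_vd]; exact meas_vd (γ.continuous.measurable hB)

/-- Poisson process through void probabilities -/
structure VoidP (ν : Measure X) (P : Measure (Config X)) : Prop where
  prob : IsProbabilityMeasure P
  fin : ∀ B, IsBounded B → ν B < ⊤
  void : ∀ B, MeasurableSet B → IsBounded B → P (vd B) = ENNReal.ofReal (Real.exp (-(ν B).toReal))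

lemma VoidP.unique {ν : Measure X} {P P' : Measure (Config X)} (h : VoidP ν P) (h' : VoidP ν P') : P = P' := by
  haveI := h.prob
  haveI := h'.prob
  refine ext_of_generate_finite (voidSys X) gen_void voidSys_pi ?_ ?_
  · rintro _ ⟨B, h1, h2, rfl⟩
    rw [h.void B h1 h2, h'.void B h1 h2]
  · simp

lemma VoidP.superpose {ν ν' : Measure X} {P P' : Measure (Config X)} (h : VoidP ν P) (h' : VoidP ν' P') :
    VoidP (ν + ν') ((P.prod P').map (fun p : Config X × Config X => uni p.1 p.2)) := by
  haveI := h.prob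
  haveI := h'.prob
  refine ⟨Measure.isProbabilityMeasure_map uni_meas.aemeasurable, fun B hB => ?_, fun B hB hb => ?_⟩
  · rw [Measure.add_apply]; exact ENNReal.add_lt_top.2 ⟨h.fin B hB, h'.fin B hB⟩
  · rw [Measure.map_apply uni_meas (meas_vd hB), uni_vd, Measure.prod_prod, h.void B hB hb, h'.void B hB hb,
      ← ENNReal.ofReal_mul (Real.exp_nonneg _), ← Real.exp_add, Measure.add_apply,
      ENNReal.toReal_add (h.fin B hb).ne (h'.fin B hb).ne]
    congr 2; ring

lemma VoidP.mix {ν : Measure X} {P : Measure (Config X)} (h : VoidP ν P) {S : Set X} (hS : MeasurableSet S) :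
    (P.prod P).map (fun p : Config X × Config X => mix S p.1 p.2) = P := by
  haveI := h.prob
  refine VoidP.unique (ν := ν) ⟨Measure.isProbabilityMeasure_map (mix_meas hS).aemeasurable, h.fin, fun B hB hb => ?_⟩ h
  rw [Measure.map_apply (mix_meas hS) (meas_vd hB), mix_vd, Measure.prod_prod,
    h.void _ (hS.inter hB) (hb.subset inter_subset_right), h.void _ (hS.compl.inter hB) (hb.subset inter_subset_right),
      ← ENNReal.ofReal_mul (Real.exp_nonneg _), ← Real.exp_add]
  have h1 := measure_inter_add_diff (μ := ν) B hS
  have h2 : (ν B).toReal = (ν (S ∩ B)).toReal + (ν (Sᶜ ∩ B)).toReal := by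
    rw [← ENNReal.toReal_add (h.fin _ (hb.subset inter_subset_right)).ne (h.fin _ (hb.subset inter_subset_right)).ne, ← h1,
      inter_comm S B, inter_comm Sᶜ B, diff_eq]
  rw [h2]; congr 2; ring

/-- independence: `E` depends on `S` only and `N` on the complement -/
lemma VoidP.indep {ν : Measure X} {P : Measure (Config X)} (h : VoidP ν P) {S : Set X} (hS : MeasurableSet S)
    {E N : Set (Config X)} (hE : MeasurableSet E) (hN : MeasurableSet N)
    (hE' : ∀ s t, BooleanModel.mix S s t ∈ E ↔ s ∈ E) (hN' : ∀ s t, BooleanModel.mix S s t ∈ N ↔ t ∈ N) : P (E ∩ N) = P E * P N := by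
  haveI := h.prob
  conv_lhs => rw [← h.mix hS]
  rw [Measure.map_apply (mix_meas hS) (hE.inter hN), ← Measure.prod_prod]
  congr 1
  ext p
  simp only [mem_preimage, mem_inter_iff, mem_prod, hE', hN']

lemma VoidP.iso {ν : Measure X} {P : Measure (Config X)} (h : VoidP ν P) (γ : X ≃ᵢ X) (hγ : ν.map γ = ν) :
    P.map (Config.mapIso γ) = P := by
  haveI := h.prob
  refine VoidP.unique (ν := ν) ⟨Measure.isProbabilityMeasure_map (mapIso_meas γ).aemeasurable, h.fin, fun B hB hb => ?_⟩ h
  have hm : Measurable γ := γ.continuous.measurable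
  have hb' : IsBounded (γ ⁻¹' B) := by
    have := γ.symm.isometry.lipschitz.isBounded_image hb
    rwa [show γ ⁻¹' B = γ.symm '' B by ext z; exact ⟨fun hz => ⟨γ z, hz, γ.symm_apply_apply z⟩, by rintro ⟨w, hw, rfl⟩; simpa using hw⟩]
  rw [Measure.map_apply (mapIso_meas γ) (meas_vd hB), mapIso_vd, h.void _ (hm hB) hb']
  conv_rhs => rw [← hγ]
  rw [Measure.map_apply hm hB]

lemma IsPoisson.voidP {ν : Measure X} {P : Measure (Config X)} (h : IsPoisson ν P) (hf : ∀ B, IsBounded B → ν B < ⊤) :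
    VoidP ν P := by
  refine ⟨h.1, hf, fun B hB hb => ?_⟩
  have := h.2.1 B hB (hf B hb) 0
  simp only [Config.count] at this
  rw [show vd B = {s : Config X | (s.1 ∩ B).encard = ((0:ℕ) : ℕ∞)} by ext s; simp [vd], this]
  simp

end ProbA
end BooleanModel

namespace BooleanModel

section ProbB
open Filter Topology

lemma cell_process {X : Type*} [MeasurableSpace X] [Nonempty X] (ν : Measure X) [IsFiniteMeasure ν] :
    ∃ W : Measure (ℕ × (ℕ → X)), IsProbabilityMeasure W ∧ ∀ B, MeasurableSet B →
      W {p | ∀ i < p.1, p.2 i ∉ B} = ENNReal.ofReal (Real.exp (-(ν B).toReal)) := by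
  obtain ⟨o⟩ := ‹Nonempty X›
  obtain ⟨m, hm, a, ha⟩ : ∃ m : Measure X, IsProbabilityMeasure m ∧ ∃ a : ℝ≥0, ν = a • m := by
    by_cases h : ν = 0
    · exact ⟨Measure.dirac o, inferInstance, 0, by rw [h]; simp⟩
    · haveI : NeZero ν := ⟨h⟩
      refine ⟨(ν univ)⁻¹ • ν, inferInstance, (ν univ).toNNReal, ?_⟩
      rw [ENNReal.smul_def, ENNReal.coe_toNNReal (measure_ne_top _ _), smul_smul,
        ENNReal.mul_inv_cancel (by simpa using h) (measure_ne_top _ _), one_smul]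
  refine ⟨(ProbabilityTheory.poissonMeasure a).prod (Measure.infinitePi fun _ : ℕ => m), inferInstance, fun B hB => ?_⟩
  have hmeas : MeasurableSet {p : ℕ × (ℕ → X) | ∀ i < p.1, p.2 i ∉ B} := by
    have : {p : ℕ × (ℕ → X) | ∀ i < p.1, p.2 i ∉ B} = ⋂ i : ℕ, ({p | p.1 ≤ i} ∪ {p | p.2 i ∉ B}) := by
      ext p; simp only [mem_setOf_eq, mem_iInter, mem_union, or_iff_not_imp_left, not_le]
    rw [this]
    refine MeasurableSet.iInter fun i => MeasurableSet.union ?_ ?_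
    · exact measurable_fst (measurableSet_Iic (a := i))
    · have hu : Measurable fun p : ℕ × (ℕ → X) => p.2 i := (measurable_pi_apply i).comp measurable_snd
      exact hu hB.compl
  rw [Measure.prod_apply hmeas, lintegral_countable']
  have hsec : ∀ n : ℕ, (Measure.infinitePi fun _ : ℕ => m) (Prod.mk n ⁻¹' {p : ℕ × (ℕ → X) | ∀ i < p.1, p.2 i ∉ B}) = (m Bᶜ)^n := by
    intro n
    have : Prod.mk n ⁻¹' {p : ℕ × (ℕ → X) | ∀ i < p.1, p.2 i ∉ B} = Set.pi (Finset.range n : Finset ℕ) (fun _ => Bᶜ) := by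
      ext u; simp [Set.mem_pi]
    rw [this, Measure.infinitePi_pi _ (fun _ _ => hB.compl)]
    simp
  have hx : m Bᶜ = ENNReal.ofReal (1 - (m B).toReal) := by
    rw [prob_compl_eq_one_sub hB, ENNReal.ofReal_sub _ ENNReal.toReal_nonneg, ENNReal.ofReal_one,
      ENNReal.ofReal_toReal (measure_ne_top _ _)]
  have hx0 : 0 ≤ 1 - (m B).toReal := by
    have : (m B).toReal ≤ 1 := by
      have := ENNReal.toReal_mono ENNReal.one_ne_top (prob_le_one (μ := m) (s := B))
      simpa using this
    linarith
  set x := 1 - (m B).toReal with hxd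
  have hν : (ν B).toReal = a * (1 - x) := by
    rw [ha, Measure.smul_apply, ENNReal.smul_def, smul_eq_mul, ENNReal.toReal_mul]
    simp [hxd]
  have hs : HasSum (fun n : ℕ => x^n * (Real.exp (-a) * a^n / n.factorial)) (Real.exp (-a * (1-x))) := by
    have h1 := (NormedSpace.expSeries_div_hasSum_exp (𝔸 := ℝ) ((a:ℝ) * x)).mul_left (Real.exp (-a))
    rw [← Real.exp_eq_exp_ℝ, ← Real.exp_add] at h1
    have e1 : (fun n : ℕ => x^n * (Real.exp (-a) * a^n / n.factorial)) = fun i => Real.exp (-a) * ((a*x)^i / i.factorial) := by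
      ext n; rw [mul_pow]; ring
    have e2 : -(a:ℝ)*(1-x) = -a + a*x := by ring
    rw [e1, e2]; exact h1
  rw [hν, ← neg_mul, ← hs.tsum_eq, ENNReal.ofReal_tsum_of_nonneg (fun n => by positivity) hs.summable]
  refine tsum_congr fun n => ?_
  rw [hsec, hx, ProbabilityTheory.poissonMeasure_singleton, ← ENNReal.ofReal_pow hx0, ← ENNReal.ofReal_mul (by positivity)]

variable {X : Type*} [MetricSpace X] [MeasurableSpace X] [BorelSpace X] [ProperSpace X] [Nonempty X]

lemma exists_voidP (ν : Measure X) (hν : ∀ B, IsBounded B → ν B < ⊤) : ∃ Q, VoidP ν Q := by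
  obtain ⟨o⟩ := ‹Nonempty X›
  let A : ℕ → Set X := fun j => {x | ⌊dist o x⌋₊ = j}
  have hAm : ∀ j, MeasurableSet (A j) := fun j => by
    have : Measurable fun x : X => ⌊dist o x⌋₊ := Nat.measurable_floor.comp (measurable_const.dist measurable_id)
    exact this (measurableSet_singleton j)
  have hAb : ∀ j, IsBounded (A j) := fun j => by
    refine (isBounded_closedBall (x := o) (r := j + 1)).subset fun x hx => ?_
    have := Nat.lt_floor_add_one (dist o x)
    rw [mem_closedBall, dist_comm, ← (hx : _ = j)]; exact this.le
  haveI : ∀ j, IsFiniteMeasure (ν.restrict (A j)) := fun j => ⟨by rw [Measure.restrict_apply_univ]; exact hν _ (hAb j)⟩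
  haveI : Nonempty X := ⟨o⟩
  choose W hW hWv using fun j => cell_process (ν.restrict (A j))
  let f : (ℕ → ℕ × (ℕ → X)) → Config X := fun w => ⟨{x | ∃ j, ∃ i < (w j).1, (w j).2 i = x ∧ x ∈ A j}, by
    intro K hK
    obtain ⟨R, hR⟩ := hK.subset_closedBall o
    refine (Set.Finite.biUnion (finite_le_nat ⌊R⌋₊) (fun j _ => (Set.finite_lt_nat (w j).1).image (w j).2)).subset ?_
    rintro x ⟨⟨j, i, hi, rfl, hj⟩, hx⟩
    simp only [mem_iUnion]
    refine ⟨j, ?_, i, hi, rfl⟩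
    rw [← (hj : _ = j)]
    refine Nat.floor_le_floor ?_
    rw [dist_comm]; exact hR hx⟩
  have hfv : ∀ B, f ⁻¹' vd B = ⋂ j, (fun w => w j) ⁻¹' {p | ∀ i < p.1, p.2 i ∉ B ∩ A j} := by
    intro B
    ext w
    simp only [mem_preimage, vd, mem_iInter, mem_setOf_eq, f, eq_empty_iff_forall_notMem]
    constructor
    · intro h j i hi hB
      exact h _ ⟨⟨j, i, hi, rfl, hB.2⟩, hB.1⟩
    · rintro h x ⟨⟨j, i, hi, rfl, hj⟩, hx⟩
      exact h j i hi ⟨hx, hj⟩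
  have hcm : ∀ B, MeasurableSet B → ∀ j, MeasurableSet {p : ℕ × (ℕ → X) | ∀ i < p.1, p.2 i ∉ B ∩ A j} := by
    intro B hB j
    have : {p : ℕ × (ℕ → X) | ∀ i < p.1, p.2 i ∉ B ∩ A j} = ⋂ i : ℕ, ({p | p.1 ≤ i} ∪ {p | p.2 i ∉ B ∩ A j}) := by
      ext p; simp only [mem_setOf_eq, mem_iInter, mem_union, or_iff_not_imp_left, not_le]
    rw [this]
    refine MeasurableSet.iInter fun i => MeasurableSet.union ?_ ?_
    · exact measurable_fst (measurableSet_Iic (a := i))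
    · have hu : Measurable fun p : ℕ × (ℕ → X) => p.2 i := (measurable_pi_apply i).comp measurable_snd
      exact hu (hB.inter (hAm j)).compl
  have hf : Measurable f := meas_of_void fun B hB _ => by
    rw [hfv]
    exact MeasurableSet.iInter fun j => measurable_pi_apply j (hcm B hB j)
  refine ⟨(Measure.infinitePi W).map f, Measure.isProbabilityMeasure_map hf.aemeasurable, hν, fun B hB hb => ?_⟩
  rw [Measure.map_apply hf (meas_vd hB), hfv]
  obtain ⟨R, hR⟩ := hb.subset_closedBall o
  have hemp : ∀ j, ⌊R⌋₊ < j → B ∩ A j = ∅ := by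
    intro j hj
    rw [eq_empty_iff_forall_notMem]
    rintro x ⟨hx, hxj⟩
    have h1 : ⌊dist o x⌋₊ ≤ ⌊R⌋₊ := Nat.floor_le_floor (by rw [dist_comm]; exact hR hx)
    have h2 : ⌊dist o x⌋₊ = j := hxj
    omega
  have e1 : ⋂ j, (fun w : ℕ → ℕ × (ℕ → X) => w j) ⁻¹' {p | ∀ i < p.1, p.2 i ∉ B ∩ A j} =
      Set.pi (Finset.range (⌊R⌋₊+1) : Finset ℕ) (fun j => {p | ∀ i < p.1, p.2 i ∉ B ∩ A j}) := by
    ext w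
    simp only [mem_iInter, mem_preimage, Set.mem_pi, Finset.coe_range, mem_Iio]
    refine ⟨fun h j _ => h j, fun h j => ?_⟩
    by_cases hj : j < ⌊R⌋₊ + 1
    · exact h j hj
    · have := hemp j (by omega)
      intro i _; rw [this]; exact notMem_empty _
  rw [e1, Measure.infinitePi_pi _ (fun j _ => hcm B hB j)]
  have e2 : ∀ j, W j {p | ∀ i < p.1, p.2 i ∉ B ∩ A j} = ENNReal.ofReal (Real.exp (-(ν (B ∩ A j)).toReal)) := by
    intro j
    rw [hWv j _ (hB.inter (hAm j)), Measure.restrict_apply (hB.inter (hAm j)), inter_assoc, inter_self]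
  simp only [e2]
  rw [← ENNReal.ofReal_prod_of_nonneg (fun _ _ => Real.exp_nonneg _), ← Real.exp_sum, Finset.sum_neg_distrib]
  congr 3
  have hd : B = ⋃ j ∈ Finset.range (⌊R⌋₊+1), (B ∩ A j) := by
    ext x
    simp only [mem_iUnion, Finset.mem_range, exists_prop]
    constructor
    · intro hx
      have h1 : ⌊dist o x⌋₊ ≤ ⌊R⌋₊ := Nat.floor_le_floor (by rw [dist_comm]; exact hR hx)
      exact ⟨⌊dist o x⌋₊, by omega, hx, rfl⟩
    · rintro ⟨j, _, h, _⟩; exact h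
  conv_rhs => rw [hd]
  rw [measure_biUnion_finset, ENNReal.toReal_sum]
  · intro j _; exact (hν _ (hb.subset inter_subset_left)).ne
  · intro i _ j _ hij
    refine Set.disjoint_left.2 ?_
    rintro x ⟨_, h1⟩ ⟨_, h2⟩
    exact hij ((h1 : _ = i).symm.trans h2)
  · intro j _; exact hB.inter (hAm j)

end ProbB
end BooleanModel

namespace BooleanModel

section ProbC
open Filter Topology

variable {X : Type*} [MetricSpace X]

/-- reachability through points of `s` with steps at most 2 -/
def Rl (s : Set X) (p q : X) : Prop := Relation.ReflTransGen (fun a b => b ∈ s ∧ dist a b ≤ 2) p q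

/-- class unbounded -/
def Ub (s : Set X) (p : X) : Prop := ∀ n : ℕ, ∃ q ∈ s, Rl s p q ∧ (n : ℝ) < dist p q

/-- cluster attached to location z -/
def Cl (z : X) (s : Set X) (q : X) : Prop := ∃ p ∈ s, dist z p ≤ 1 ∧ Rl s p q

def rch (s : Set X) : ℕ → X → X → Prop
  | 0, p, q => p = q
  | k+1, p, q => ∃ r ∈ s, dist p r ≤ 2 ∧ rch s k r q

lemma Rl_iff (s : Set X) (p q : X) : Rl s p q ↔ ∃ k, rch s k p q := by
  constructor
  · intro h
    induction h using Relation.ReflTransGen.head_induction_on with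
    | refl => exact ⟨0, rfl⟩
    | head h _ ih => obtain ⟨k, hk⟩ := ih; exact ⟨k+1, _, h.1, h.2, hk⟩
  · rintro ⟨k, hk⟩
    induction k generalizing p with
    | zero => cases hk; exact .refl
    | succ k ih => obtain ⟨r, h1, h2, h3⟩ := hk; exact .head ⟨h1, h2⟩ (ih _ h3)

variable [MeasurableSpace X] [BorelSpace X] [ProperSpace X] [Nonempty X]
variable {Ω : Type*} [MeasurableSpace Ω]

lemma meas_ex {s : Ω → Config X} (hs : Measurable s) {E : Ω → X → Prop}
    (hE : MeasurableSet {x : Ω × X | E x.1 x.2}) : MeasurableSet {a | ∃ p ∈ (s a).1, E a p} := by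
  obtain ⟨o⟩ := ‹Nonempty X›
  haveI : Nonempty X := ⟨o⟩
  let κ : ℕ → ProbabilityTheory.Kernel Ω X := fun n =>
    ⟨fun a => Measure.count.restrict ((s a).1 ∩ closedBall o n), by
      refine Measure.measurable_of_measurable_coe _ fun B hB => ?_
      have h1 : (fun a => (Measure.count.restrict ((s a).1 ∩ closedBall o n) : Measure X) B) =
          fun a => ((((s a).1 ∩ (B ∩ closedBall o n)).encard : ℕ∞) : ℝ≥0∞) := by
        ext a
        have hf : (((s a).1 ∩ (B ∩ closedBall o n))).Finite := by
          refine ((s a).2 (closedBall o n) isBounded_closedBall).subset ?_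
          rintro x ⟨h1, h2⟩; exact ⟨h1, h2.2⟩
        rw [Measure.restrict_apply hB, Measure.count_apply]
        · congr 2; ext x; simp only [mem_inter_iff]; tauto
        · convert hf.measurableSet using 1; ext x; simp only [mem_inter_iff]; tauto
      rw [h1]
      have h2 : Measurable (fun t : ℕ∞ => (t : ℝ≥0∞)) := measurable_from_top
      exact h2.comp ((count_meas (hB.inter measurableSet_closedBall)).comp hs)⟩
  have hfin : ∀ n a, IsFiniteMeasure (κ n a) := by
    intro n a
    have hf := (s a).2 (closedBall o n) isBounded_closedBall
    refine ⟨?_⟩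
    change (Measure.count.restrict ((s a).1 ∩ closedBall o n) : Measure X) univ < ⊤
    rw [Measure.restrict_apply_univ, Measure.count_apply hf.measurableSet]
    simpa using hf
  have hm : ∀ n, Measurable fun a => κ n a (Prod.mk a ⁻¹' {x : Ω × X | E x.1 x.2}) := fun n =>
    ProbabilityTheory.Kernel.measurable_kernel_prodMk_left_of_finite hE (hfin n)
  have he : {a | ∃ p ∈ (s a).1, E a p} = ⋃ n : ℕ, {a | κ n a (Prod.mk a ⁻¹' {x : Ω × X | E x.1 x.2}) = 0}ᶜ := by
    ext a
    have hsec : MeasurableSet (Prod.mk a ⁻¹' {x : Ω × X | E x.1 x.2}) := measurable_prodMk_left hE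
    simp only [mem_setOf_eq, mem_iUnion, mem_compl_iff]
    have h3 : ∀ n, κ n a (Prod.mk a ⁻¹' {x : Ω × X | E x.1 x.2}) = 0 ↔
        (Prod.mk a ⁻¹' {x : Ω × X | E x.1 x.2}) ∩ ((s a).1 ∩ closedBall o n) = ∅ := by
      intro n
      change (Measure.count.restrict ((s a).1 ∩ closedBall o n) : Measure X) _ = 0 ↔ _
      rw [Measure.restrict_apply hsec, Measure.count_eq_zero_iff]
    simp only [h3]
    constructor
    · rintro ⟨p, hp, hEp⟩
      obtain ⟨n, hn⟩ := exists_nat_ge (dist p o)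
      refine ⟨n, fun h => ?_⟩
      have : p ∈ (∅ : Set X) := by rw [← h]; exact ⟨hEp, hp, hn⟩
      exact this
    · rintro ⟨n, hn⟩
      obtain ⟨p, h1, h2, h3⟩ := nonempty_iff_ne_empty.2 hn
      exact ⟨p, h2, h1⟩
  rw [he]
  exact MeasurableSet.iUnion fun n => (hm n (measurableSet_singleton 0)).compl

lemma meas_rch (k : ℕ) {s : Ω → Config X} (hs : Measurable s) :
    MeasurableSet {x : Ω × X × X | rch (s x.1).1 k x.2.1 x.2.2} := by
  induction k with
  | zero => exact measurableSet_eq_fun measurable_snd.fst measurable_snd.snd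
  | succ k ih =>
    refine meas_ex (Ω := Ω × X × X) (s := fun x => s x.1) (hs.comp measurable_fst)
      (E := fun x r => dist x.2.1 r ≤ 2 ∧ rch (s x.1).1 k r x.2.2) ?_
    refine MeasurableSet.inter ?_ ?_
    · exact measurableSet_le (measurable_fst.snd.fst.dist measurable_snd) measurable_const
    · have : Measurable fun y : (Ω × X × X) × X => ((y.1.1, y.2, y.1.2.2) : Ω × X × X) := by fun_prop
      exact this ih

lemma meas_Rl {s : Ω → Config X} (hs : Measurable s) {f g : Ω → X} (hf : Measurable f) (hg : Measurable g) :
    MeasurableSet {a | Rl (s a).1 (f a) (g a)} := by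
  have : {a | Rl (s a).1 (f a) (g a)} = ⋃ k, (fun a => ((a, f a, g a) : Ω × X × X)) ⁻¹' {x : Ω × X × X | rch (s x.1).1 k x.2.1 x.2.2} := by
    ext a; simp [Rl_iff]
  rw [this]
  exact MeasurableSet.iUnion fun k => (measurable_id.prodMk (hf.prodMk hg)) (meas_rch k hs)

lemma meas_Ub {s : Ω → Config X} (hs : Measurable s) {f : Ω → X} (hf : Measurable f) :
    MeasurableSet {a | Ub (s a).1 (f a)} := by
  have : {a | Ub (s a).1 (f a)} = ⋂ n : ℕ, {a | ∃ q ∈ (s a).1, Rl (s a).1 (f a) q ∧ (n:ℝ) < dist (f a) q} := by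
    ext a; simp [Ub]
  rw [this]
  refine MeasurableSet.iInter fun n => meas_ex hs (E := fun a q => Rl (s a).1 (f a) q ∧ (n:ℝ) < dist (f a) q) ?_
  refine MeasurableSet.inter ?_ ?_
  · exact meas_Rl (Ω := Ω × X) (hs.comp measurable_fst) (hf.comp measurable_fst) measurable_snd
  · exact measurableSet_lt measurable_const ((hf.comp measurable_fst).dist measurable_snd)

lemma meas_Cl {s : Ω → Config X} (hs : Measurable s) {f z : Ω → X} (hf : Measurable f) (hz : Measurable z) :
    MeasurableSet {a | Cl (z a) (s a).1 (f a)} := by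
  refine meas_ex hs (E := fun a p => dist (z a) p ≤ 1 ∧ Rl (s a).1 p (f a)) ?_
  refine MeasurableSet.inter ?_ ?_
  · exact measurableSet_le ((hz.comp measurable_fst).dist measurable_snd) measurable_const
  · exact meas_Rl (Ω := Ω × X) (hs.comp measurable_fst) measurable_snd (hf.comp measurable_fst)

end ProbC
end BooleanModel

namespace BooleanModel

section Topo
open Filter Topology

variable {X : Type*} [MetricSpace X]

lemma Rl.refl (s : Set X) (p : X) : Rl s p p := Relation.ReflTransGen.refl

lemma Rl.trans {s : Set X} {p q r : X} (h : Rl s p q) (h' : Rl s q r) : Rl s p r :=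
  Relation.ReflTransGen.trans h h'

lemma Rl.step {s : Set X} {p q r : X} (h : Rl s p q) (hr : r ∈ s) (hd : dist q r ≤ 2) : Rl s p r :=
  Relation.ReflTransGen.tail h ⟨hr, hd⟩

lemma Rl.mem {s : Set X} {p q : X} (h : Rl s p q) (hp : p ∈ s) : q ∈ s := by
  induction h with
  | refl => exact hp
  | tail _ h _ => exact h.1

lemma Rl.symm {s : Set X} {p q : X} (h : Rl s p q) (hp : p ∈ s) : Rl s q p := by
  induction h with
  | refl => exact Rl.refl s p
  | @tail b c hb h ih =>
    have hbs : b ∈ s := Rl.mem hb hp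
    exact ((Rl.refl s c).step hbs (by rw [dist_comm]; exact h.2)).trans ih

lemma Rl.mono {s t : Set X} (hst : s ⊆ t) {p q : X} (h : Rl s p q) : Rl t p q := by
  induction h with
  | refl => exact Rl.refl t p
  | tail _ h ih => exact ih.step (hst h.1) h.2

lemma Ub.congr {s : Set X} {p q : X} (h : Ub s p) (hp : p ∈ s) (hr : Rl s p q) : Ub s q := by
  intro n
  obtain ⟨m, hm⟩ := exists_nat_ge (n + dist p q)
  obtain ⟨x, hx, h1, h2⟩ := h m
  refine ⟨x, hx, (hr.symm hp).trans h1, ?_⟩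
  have := dist_triangle p q x
  linarith

lemma Ub.mono {s t : Set X} (hst : s ⊆ t) {p : X} (h : Ub s p) : Ub t p := fun n => by
  obtain ⟨q, h1, h2, h3⟩ := h n
  exact ⟨q, hst h1, h2.mono hst, h3⟩

/-- union of balls -/
def bl (A : Set X) : Set X := ⋃ x ∈ A, closedBall x 1

lemma bl_closed (s : Config X) {A : Set X} (hA : A ⊆ s.1) : IsClosed (bl A) := by
  have hl : LocallyFinite (fun q : A => closedBall (q : X) 1) := by
    intro x
    refine ⟨ball x 1, ball_mem_nhds x one_pos, ?_⟩
    have hf := s.2 (closedBall x 2) isBounded_closedBall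
    refine Set.Finite.of_finite_image (f := Subtype.val) (hf.subset ?_) Subtype.val_injective.injOn
    rintro _ ⟨q, ⟨y, h1, h2⟩, rfl⟩
    refine ⟨hA q.2, ?_⟩
    rw [mem_closedBall] at h1 ⊢
    rw [mem_ball] at h2
    have := dist_triangle_left (q : X) x y
    linarith
  have := hl.isClosed_iUnion (fun q => isClosed_closedBall)
  rwa [iUnion_subtype] at this

variable [ProperSpace X] [PreconnectedSpace X]

lemma comp_eq (hsym : PointSymmetric X) (s : Config X) {p x : X} (hp : p ∈ s.1) (hx : x ∈ closedBall p 1) :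
    connectedComponentIn (occupied s) x = bl {q | Rl s.1 p q} := by
  have hsub : {q | Rl s.1 p q} ⊆ s.1 := fun q hq => Rl.mem hq hp
  have hxK : x ∈ bl {q | Rl s.1 p q} := mem_biUnion (Rl.refl s.1 p) hx
  have hxo : x ∈ occupied s := mem_biUnion hp hx
  refine Subset.antisymm ?_ ?_
  · intro y hy
    by_contra hyK
    have hcl := (isPreconnected_closed_iff.1 (isPreconnected_connectedComponentIn (x := x) (F := occupied s)))
      _ _ (bl_closed s hsub) (bl_closed s (A := {q | q ∈ s.1 ∧ ¬ Rl s.1 p q}) fun q h => h.1) ?_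
      ⟨x, mem_connectedComponentIn hxo, hxK⟩ ⟨y, hy, ?_⟩
    · obtain ⟨w, _, h1, h2⟩ := hcl
      simp only [bl, mem_iUnion, mem_setOf_eq] at h1 h2
      obtain ⟨a, ha, hwa⟩ := h1
      obtain ⟨b, ⟨hb, hb'⟩, hwb⟩ := h2
      refine hb' (ha.step hb ?_)
      rw [mem_closedBall] at hwa hwb
      have := dist_triangle_left a b w
      linarith
    · intro w hw
      have := connectedComponentIn_subset _ _ hw
      simp only [occupied, bl, mem_iUnion, mem_setOf_eq, mem_union] at this ⊢
      obtain ⟨q, hq, hwq⟩ := this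
      by_cases h : Rl s.1 p q
      · exact Or.inl ⟨q, h, hwq⟩
      · exact Or.inr ⟨q, ⟨hq, h⟩, hwq⟩
    · have := connectedComponentIn_subset _ _ hy
      simp only [occupied, bl, mem_iUnion, mem_setOf_eq] at this hyK ⊢
      obtain ⟨q, hq, hwq⟩ := this
      exact ⟨q, ⟨hq, fun h => hyK ⟨q, h, hwq⟩⟩, hwq⟩
  · refine IsPreconnected.subset_connectedComponentIn ?_ hxK ?_
    · refine IsPreconnected.biUnion_of_reflTransGen (fun q _ => ball_preconn hsym q 1) ?_
      intro a ha b hb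
      have hab : Rl s.1 a b := (Rl.symm ha hp).trans hb
      induction hab with
      | refl => exact .refl
      | @tail c d hc hcd ih =>
        have hpc : Rl s.1 p c := Rl.trans ha hc
        exact (ih hpc).tail ⟨mid_exists hsym hcd.2, hpc⟩
    · exact biUnion_subset_biUnion_left hsub

lemma bl_unb (s : Config X) {p : X} (hp : p ∈ s.1) : ¬ IsBounded (bl {q | Rl s.1 p q}) ↔ Ub s.1 p := by
  constructor
  · intro h n
    by_contra hc
    push Not at hc
    refine h ((isBounded_closedBall (x := p) (r := n+1)).subset ?_)
    intro x hx
    simp only [bl, mem_iUnion, mem_setOf_eq] at hx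
    obtain ⟨q, hq, hxq⟩ := hx
    have := hc q (hq.mem hp) hq
    rw [mem_closedBall] at hxq ⊢
    have := dist_triangle x q p
    rw [dist_comm q p] at this
    linarith
  · intro h hb
    obtain ⟨r, hr⟩ := hb.subset_closedBall p
    obtain ⟨n, hn⟩ := exists_nat_ge r
    obtain ⟨q, hq, h1, h2⟩ := h n
    have : q ∈ closedBall p r := hr (mem_biUnion (show q ∈ {q | Rl s.1 p q} from h1) (by simp))
    rw [mem_closedBall, dist_comm] at this
    linarith

lemma num_one_iff (hsym : PointSymmetric X) (s : Config X) :
    numUcomps (occupied s) = 1 ↔ (∃ p ∈ s.1, Ub s.1 p) ∧ ∀ p ∈ s.1, ∀ q ∈ s.1, Ub s.1 p → Ub s.1 q → Rl s.1 p q := by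
  have hu : ucomps (occupied s) = {C | ∃ p ∈ s.1, Ub s.1 p ∧ C = bl {q | Rl s.1 p q}} := by
    ext C
    constructor
    · rintro ⟨⟨x, hx, rfl⟩, hb⟩
      have hx' := hx
      simp only [occupied, mem_iUnion] at hx'
      obtain ⟨p, hp, hxp⟩ := hx'
      rw [comp_eq hsym s hp hxp] at hb ⊢
      exact ⟨p, hp, (bl_unb s hp).1 hb, rfl⟩
    · rintro ⟨p, hp, hU, rfl⟩
      have hpp : p ∈ closedBall p 1 := by simp
      exact ⟨⟨p, mem_biUnion hp hpp, (comp_eq hsym s hp hpp).symm⟩, (bl_unb s hp).2 hU⟩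
  rw [numUcomps, hu, encard_eq_one]
  constructor
  · rintro ⟨C, hC⟩
    refine ⟨?_, ?_⟩
    · have : C ∈ ({C} : Set (Set X)) := rfl
      rw [← hC] at this
      obtain ⟨p, hp, h, _⟩ := this
      exact ⟨p, hp, h⟩
    · intro p hp q hq hUp hUq
      have h1 : bl {r | Rl s.1 p r} ∈ ({C} : Set (Set X)) := by rw [← hC]; exact ⟨p, hp, hUp, rfl⟩
      have h2 : bl {r | Rl s.1 q r} ∈ ({C} : Set (Set X)) := by rw [← hC]; exact ⟨q, hq, hUq, rfl⟩
      have h3 : bl {r | Rl s.1 p r} = bl {r | Rl s.1 q r} := (h1 : _ = C).trans (h2 : _ = C).symm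
      have h4 : q ∈ bl {r | Rl s.1 q r} := mem_biUnion (Rl.refl s.1 q) (by simp)
      rw [← h3] at h4
      simp only [bl, mem_iUnion, mem_setOf_eq] at h4
      obtain ⟨r, hr, hqr⟩ := h4
      rw [mem_closedBall, dist_comm] at hqr
      exact hr.step hq (by linarith)
  · rintro ⟨⟨p, hp, hU⟩, h⟩
    refine ⟨bl {q | Rl s.1 p q}, ?_⟩
    ext C
    constructor
    · rintro ⟨q, hq, hUq, rfl⟩
      have hqp := h q hq p hp hUq hU
      have hpq := h p hp q hq hU hUq
      have : {r | Rl s.1 q r} = {r | Rl s.1 p r} := by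
        ext r; exact ⟨fun h => hpq.trans h, fun h => hqp.trans h⟩
      rw [this]; rfl
    · rintro rfl
      exact ⟨p, hp, hU, rfl⟩

end Topo
end BooleanModel

namespace BooleanModel

section NetA
open Filter Topology

variable {X : Type*} [MetricSpace X] [ProperSpace X]

lemma Config.countable [Nonempty X] (s : Config X) : s.1.Countable := by
  obtain ⟨o⟩ := ‹Nonempty X›
  have : s.1 = ⋃ n : ℕ, s.1 ∩ closedBall o n := by
    rw [← inter_iUnion, iUnion_closedBall_nat, inter_univ]
  rw [this]
  exact countable_iUnion fun n => (s.2 _ isBounded_closedBall).countable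

lemma net_exists (X : Type*) [MetricSpace X] [ProperSpace X] : ∃ Y : Config X,
    (∀ y ∈ Y.1, ∀ y' ∈ Y.1, y ≠ y' → 1/4 < dist y y') ∧ ∀ x, ∃ y ∈ Y.1, dist x y ≤ 1/4 := by
  obtain ⟨Y, hY⟩ := zorn_subset {Y : Set X | ∀ y ∈ Y, ∀ y' ∈ Y, y ≠ y' → 1/4 < dist y y'} (by
    intro c hc hch
    refine ⟨⋃₀ c, ?_, fun s hs => subset_sUnion_of_mem hs⟩
    rintro y ⟨a, ha, hya⟩ y' ⟨b, hb, hyb⟩ hne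
    rcases hch.total ha hb with h | h
    · exact hc hb y (h hya) y' hyb hne
    · exact hc ha y hya y' (h hyb) hne)
  have hsep := hY.1
  refine ⟨⟨Y, ?_⟩, hsep, ?_⟩
  · intro K hK
    obtain ⟨t, ht, hcov⟩ := (Metric.totallyBounded_iff.1 (hK.isCompact_closure.totallyBounded)) (1/8) (by norm_num)
    have : ∀ x, ∃ w, x ∈ Y ∩ K → w ∈ t ∧ dist x w < 1/8 := by
      intro x
      by_cases hx : x ∈ Y ∩ K
      · have := hcov (subset_closure hx.2)
        simp only [mem_iUnion, mem_ball] at this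
        obtain ⟨w, h1, h2⟩ := this
        exact ⟨w, fun _ => ⟨h1, h2⟩⟩
      · exact ⟨x, fun h => absurd h hx⟩
    choose f hf using this
    refine Set.Finite.of_finite_image (f := f) (ht.subset ?_) ?_
    · rintro _ ⟨x, hx, rfl⟩; exact (hf x hx).1
    · intro a ha b hb hab
      by_contra hne
      have h1 := hsep a ha.1 b hb.1 hne
      have h2 := (hf a ha).2
      have h3 := (hf b hb).2
      rw [← hab] at h3
      have := dist_triangle_right a b (f a)
      linarith
  · intro x
    by_contra hc
    push Not at hc
    change ∀ y ∈ Y, 1/4 < dist x y at hc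
    have hx : insert x Y ∈ {Y : Set X | ∀ y ∈ Y, ∀ y' ∈ Y, y ≠ y' → 1/4 < dist y y'} := by
      rintro y (rfl | hy) y' (rfl | hy') hne
      · exact absurd rfl hne
      · exact hc y' hy'
      · rw [dist_comm]; exact hc y hy
      · exact hsep y hy y' hy' hne
    have := hY.2 hx (subset_insert x Y) (mem_insert x Y)
    have := hc x this
    rw [dist_self] at this
    norm_num at this

lemma Cl.mem {z : X} {s : Set X} {q : X} (h : Cl z s q) : q ∈ s := by
  obtain ⟨p, hp, _, h⟩ := h; exact h.mem hp

lemma Cl.step {z : X} {s : Set X} {q r : X} (h : Cl z s q) (hr : r ∈ s) (hd : dist q r ≤ 2) : Cl z s r := by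
  obtain ⟨p, hp, h1, h⟩ := h; exact ⟨p, hp, h1, h.step hr hd⟩

lemma Cl.mono {z : X} {s t : Set X} (hst : s ⊆ t) {q : X} (h : Cl z s q) : Cl z t q := by
  obtain ⟨p, hp, h1, h⟩ := h; exact ⟨p, hst hp, h1, h.mono hst⟩

/-- if the cluster stays in `t` then it is contained in the cluster of `t` -/
lemma Cl.transfer {z : X} {s t : Set X} (hst : ∀ q, Cl z s q → q ∈ t) {q : X} (h : Cl z s q) : Cl z t q := by
  obtain ⟨p, hp, h1, h⟩ := h
  induction h with
  | refl => exact ⟨p, hst p ⟨p, hp, h1, Rl.refl s p⟩, h1, Rl.refl t p⟩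
  | @tail b c hb hc ih => exact ih.step (hst c ⟨p, hp, h1, Rl.step hb hc.1 hc.2⟩) hc.2

def Unb (z : X) (s : Set X) : Prop := ∀ n : ℕ, ∃ q ∈ s, Cl z s q ∧ (n:ℝ) < dist q z

def Near (z : X) (w s : Set X) (L : ℕ) : Prop :=
  ∀ m : ℕ, ∃ c ∈ s, Cl z s c ∧ (m:ℝ) < dist c z ∧ ∃ p ∈ w, Ub w p ∧ dist c p ≤ L

variable [MeasurableSpace X] [BorelSpace X] [Nonempty X] [PreconnectedSpace X]

lemma ball_const (hsym : PointSymmetric X) {μ : Measure X} (hμ : ∀ γ : X ≃ᵢ X, Measure.map γ μ = μ) (x y : X) (r : ℝ) :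
    μ (closedBall x r) = μ (closedBall y r) := by
  obtain ⟨g, hg⟩ := transitive hsym x y
  conv_rhs => rw [← hμ g]
  rw [Measure.map_apply g.continuous.measurable measurableSet_closedBall, ← hg]
  congr 1
  ext w; simp [mem_closedBall, g.isometry.dist_eq]

lemma contact_finite (hsym : PointSymmetric X) {ν : Measure X} (hν : ∀ γ : X ≃ᵢ X, Measure.map γ ν = ν)
    (hpos : ∀ x, 0 < ν (closedBall x (1/10))) {Q : Measure (Config X)} (hQ : VoidP ν Q)
    (Y : Config X) (hY : ∀ y ∈ Y.1, ∀ y' ∈ Y.1, y ≠ y' → 1/4 < dist y y')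
    (W : Config X) (z : X) (T : Set X) (hT : MeasurableSet T) :
    ∀ᵐ η ∂Q, (∀ c, Cl z (uni W η).1 c → c ∉ T) →
      {y : Y.1 | closedBall (y:X) (1/10) ⊆ T ∧ ∃ c, Cl z (uni W η).1 c ∧ dist c y ≤ 19/10}.Finite := by
  haveI := hQ.prob
  haveI : Countable Y.1 := (Config.countable Y).to_subtype
  obtain ⟨o⟩ := ‹Nonempty X›
  haveI : Nonempty X := ⟨o⟩
  let b : Y.1 → Set X := fun y => closedBall (y:X) (1/10)
  let xi : Y.1 → Config X → Config X := fun y η => uni W (cap (b y)ᶜ η)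
  let H : Y.1 → Set (Config X) := fun y => {η | (¬ ∃ c ∈ (xi y η).1, Cl z (xi y η).1 c ∧ c ∈ T) ∧ b y ⊆ T ∧
    ∃ c ∈ (xi y η).1, Cl z (xi y η).1 c ∧ dist c y ≤ 19/10}
  have hbm : ∀ y, MeasurableSet (b y) := fun y => measurableSet_closedBall
  have hxim : ∀ y, Measurable (xi y) := fun y => uni_meas.comp (measurable_const.prodMk (cap_meas (hbm y).compl))
  have hHm : ∀ y, MeasurableSet (H y) := by
    intro y
    have hcl : MeasurableSet {x : Config X × X | Cl z (xi y x.1).1 x.2} :=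
      meas_Cl ((hxim y).comp measurable_fst) measurable_snd measurable_const
    refine MeasurableSet.inter ?_ (MeasurableSet.inter ?_ ?_)
    · exact (meas_ex (hxim y) (E := fun η c => Cl z (xi y η).1 c ∧ c ∈ T) (hcl.inter (measurable_snd hT))).compl
    · exact MeasurableSet.const _
    · exact meas_ex (hxim y) (E := fun η c => Cl z (xi y η).1 c ∧ dist c y ≤ 19/10)
        (hcl.inter (measurableSet_le (measurable_snd.dist measurable_const) measurable_const))
  let J : Y.1 → Set (Config X) := fun y => (vd (b y))ᶜ ∩ H y
  have hJm : ∀ y, MeasurableSet (J y) := fun y => (meas_vd (hbm y)).compl.inter (hHm y)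
  have hQJ : ∀ y, Q (J y) = Q (vd (b y))ᶜ * Q (H y) := by
    intro y
    refine hQ.indep (hbm y) (meas_vd (hbm y)).compl (hHm y) ?_ ?_
    · intro s t
      refine not_congr ?_
      change ((s.1 ∩ b y) ∪ (t.1 ∩ (b y)ᶜ)) ∩ b y = ∅ ↔ s.1 ∩ b y = ∅
      rw [union_inter_distrib_right, inter_assoc, inter_self, inter_assoc, compl_inter_self, inter_empty, union_empty]
    · intro s t
      have : xi y (mix (b y) s t) = xi y t := by
        refine Subtype.ext ?_
        change W.1 ∪ (((s.1 ∩ b y) ∪ (t.1 ∩ (b y)ᶜ)) ∩ (b y)ᶜ) = W.1 ∪ (t.1 ∩ (b y)ᶜ)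
        rw [union_inter_distrib_right, inter_assoc, inter_assoc, inter_self, inter_compl_self, inter_empty, empty_union]
      change (¬ ∃ c ∈ (xi y (mix (b y) s t)).1, _) ∧ _ ↔ _
      simp only [H, mem_setOf_eq, this]
  have hdis : Pairwise (Disjoint on J) := by
    intro y y' hne
    refine Set.disjoint_left.2 ?_
    rintro η ⟨h1, h2, h3, c, hc, hcl, hcd⟩ ⟨h1', h2', h3', -⟩
    obtain ⟨x, hx, hxb⟩ := nonempty_iff_ne_empty.2 (h1 : ¬ (η.1 ∩ b y = ∅))
    have hyy := hY y y.2 y' y'.2 (fun h => hne (Subtype.ext h))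
    have hbd : ∀ w, w ∈ b y → w ∉ b y' := by
      intro w hw hw'
      have h1 : dist w y ≤ 1/10 := hw
      have h2 : dist w y' ≤ 1/10 := hw'
      have := dist_triangle_left (y:X) y' w
      linarith
    have htr : Cl z (xi y' η).1 c := by
      refine Cl.transfer ?_ hcl
      intro q hq
      have hqm := hq.mem
      have hqT : q ∉ T := fun h => h2 ⟨q, hqm, hq, h⟩
      rcases hqm with h | h
      · exact Or.inl h
      · exact Or.inr ⟨h.1, fun h => hqT (h3' h)⟩
    have hxm : x ∈ (xi y' η).1 := Or.inr ⟨hx, hbd x hxb⟩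
    refine h2' ⟨x, hxm, htr.step hxm ?_, h3 hxb⟩
    have : dist x y ≤ 1/10 := hxb
    have := dist_triangle_right c x y
    linarith
  have hv : ∀ y, Q (vd (b y))ᶜ = 1 - ENNReal.ofReal (Real.exp (-(ν (closedBall o (1/10))).toReal)) := by
    intro y
    rw [prob_compl_eq_one_sub (meas_vd (hbm y)), hQ.void _ (hbm y) isBounded_closedBall, ball_const hsym hν y o]
  set v := 1 - ENNReal.ofReal (Real.exp (-(ν (closedBall o (1/10))).toReal)) with hvd
  have hv0 : v ≠ 0 := by
    rw [hvd, Ne, tsub_eq_zero_iff_le, not_le, ← ENNReal.ofReal_one]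
    refine (ENNReal.ofReal_lt_ofReal_iff one_pos).2 (Real.exp_lt_one_iff.2 ?_)
    have := ENNReal.toReal_pos (hpos o).ne' (hQ.fin _ isBounded_closedBall).ne
    linarith
  have hsum : ∑' y, Q (H y) ≠ ⊤ := by
    have h1 : ∑' y, Q (J y) ≤ 1 := by
      refine (tsum_meas_le_meas_iUnion_of_disjoint Q hJm hdis).trans prob_le_one
    simp only [hQJ, hv, ENNReal.tsum_mul_left] at h1
    intro h
    rw [h, ENNReal.mul_top hv0] at h1
    exact absurd h1 (by simp)
  filter_upwards [ae_finite_setOf_mem hsum] with η hη hA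
  refine hη.subset ?_
  rintro y ⟨hyT, c, hc, hcd⟩
  have hemp : η.1 ⊆ (b y)ᶜ := by
    intro x hx hxb
    have : dist x y ≤ 1/10 := hxb
    have := dist_triangle_right c x y
    exact hA x (hc.step (Or.inr hx) (by linarith)) (hyT hxb)
  have hxe : xi y η = uni W η := Subtype.ext (by
    change W.1 ∪ (η.1 ∩ (b y)ᶜ) = W.1 ∪ η.1
    rw [inter_eq_left.2 hemp])
  change (¬ ∃ c ∈ (xi y η).1, _) ∧ _
  rw [hxe]
  refine ⟨?_, hyT, c, hc.mem, hc, hcd⟩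
  rintro ⟨d, _, hd, hdT⟩
  exact hA d hd hdT

lemma merge_step (hsym : PointSymmetric X) {ν : Measure X} (hν : ∀ γ : X ≃ᵢ X, Measure.map γ ν = ν)
    (hpos : ∀ x, 0 < ν (closedBall x (1/10))) {Q : Measure (Config X)} (hQ : VoidP ν Q)
    (W : Config X) (z : X) :
    ∀ᵐ η ∂Q, ∀ L : ℕ, Near z W.1 (uni W η).1 (L+3) → Near z W.1 (uni W η).1 (L+2) := by
  obtain ⟨Y, hY, hYc⟩ := net_exists X
  rw [ae_all_iff]
  intro L
  let T : ℕ → Set X := fun m => {x | (m:ℝ) < dist x z} ∩ ⋃ p ∈ {p | p ∈ W.1 ∧ Ub W.1 p}, closedBall p (L+2)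
  have hT : ∀ m, MeasurableSet (T m) := by
    intro m
    refine (measurableSet_lt measurable_const (measurable_id.dist measurable_const)).inter ?_
    exact MeasurableSet.biUnion ((Config.countable W).mono fun p h => h.1) fun p _ => measurableSet_closedBall
  have := ae_all_iff.2 fun m => contact_finite hsym hν hpos hQ Y hY W z (T m) (hT m)
  filter_upwards [this] with η hη hN
  by_contra hc
  rw [Near] at hc
  push Not at hc
  obtain ⟨m, hm⟩ := hc
  have hA : ∀ c, Cl z (uni W η).1 c → c ∉ T m := by
    rintro c hcl ⟨h1, h2⟩
    simp only [mem_iUnion, mem_setOf_eq, mem_closedBall] at h2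
    obtain ⟨p, ⟨hp, hU⟩, hd⟩ := h2
    have := hm c hcl.mem hcl h1 p hp hU
    push_cast at this
    linarith
  have hfin := hη m hA
  obtain ⟨M, hM⟩ := (hfin.image Subtype.val).isBounded.subset_closedBall z
  obtain ⟨k, hk⟩ := exists_nat_ge (max M m + 2)
  obtain ⟨c, hcs, hcl, hck, p, hp, hU, hd⟩ := hN k
  have hkM : M + 2 ≤ k := le_trans (by gcongr; exact le_max_left _ _) hk
  have hkm : (m:ℝ) + 2 ≤ k := le_trans (by gcongr; exact le_max_right _ _) hk
  have hlt := hm c hcs hcl (by linarith) p hp hU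
  push_cast at hlt hd
  have hL : (0:ℝ) ≤ L := Nat.cast_nonneg L
  obtain ⟨g, hg1, hg2⟩ := geo_pt hsym c p (t := 3/2) (by norm_num) (by linarith)
  obtain ⟨y, hyY, hgy⟩ := hYc g
  have hcy : dist c y ≤ 7/4 := by
    have := dist_triangle c g y
    linarith
  have hyp : dist y p ≤ L + 2 - 1/4 := by
    have := dist_triangle_left y p g
    linarith
  have hyz : dist c z - 7/4 ≤ dist y z := by
    have := dist_triangle c y z
    linarith
  have hmem : y ∈ closedBall z M := by
    refine hM ⟨⟨y, hyY⟩, ⟨?_, c, hcl, by linarith⟩, rfl⟩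
    intro x hx
    have hx' : dist x y ≤ 1/10 := hx
    refine ⟨?_, ?_⟩
    · have := dist_triangle_left y z x
      change (m:ℝ) < dist x z
      linarith
    · refine mem_biUnion (show p ∈ {p | p ∈ W.1 ∧ Ub W.1 p} from ⟨hp, hU⟩) ?_
      have := dist_triangle x y p
      rw [mem_closedBall]; linarith
  rw [mem_closedBall] at hmem
  linarith

end NetA
end BooleanModel

namespace BooleanModel

section ExA
open Filter Topology

variable {X : Type*} [MetricSpace X]

def hit (s : Set X) (y : X) (R : ℕ) : Prop := ∃ q ∈ s, Ub s q ∧ dist q y ≤ R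

def esc (s : Set X) (y : X) (R r : ℕ) : Prop := ∃ q ∈ s, dist q y ≤ R ∧ ¬ Ub s q ∧ ∃ b ∈ s, Rl s q b ∧ (r:ℝ) < dist b y

lemma Rl.image (g : X ≃ᵢ X) {s : Set X} {p q : X} (h : Rl s p q) : Rl (g '' s) (g p) (g q) := by
  induction h with
  | refl => exact Rl.refl _ _
  | tail _ h ih => exact ih.step (mem_image_of_mem g h.1) (by rw [g.isometry.dist_eq]; exact h.2)

lemma Ub.image (g : X ≃ᵢ X) {s : Set X} {p : X} (h : Ub s p) : Ub (g '' s) (g p) := by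
  intro n
  obtain ⟨q, h1, h2, h3⟩ := h n
  exact ⟨g q, mem_image_of_mem g h1, h2.image g, by rw [g.isometry.dist_eq]; exact h3⟩

lemma symm_image_image (g : X ≃ᵢ X) (s : Set X) : g.symm '' (g '' s) = s := by
  rw [image_image]; simp

lemma Ub.image_iff (g : X ≃ᵢ X) {s : Set X} {p : X} : Ub (g '' s) (g p) ↔ Ub s p := by
  refine ⟨fun h => ?_, fun h => h.image g⟩
  have := h.image g.symm
  rwa [symm_image_image, g.symm_apply_apply] at this

lemma Rl.image_iff (g : X ≃ᵢ X) {s : Set X} {p q : X} : Rl (g '' s) (g p) (g q) ↔ Rl s p q := by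
  refine ⟨fun h => ?_, fun h => h.image g⟩
  have := h.image g.symm
  rwa [symm_image_image, g.symm_apply_apply, g.symm_apply_apply] at this

lemma hit_image (g : X ≃ᵢ X) (s : Set X) (y : X) (R : ℕ) : hit (g '' s) (g y) R ↔ hit s y R := by
  simp only [hit, exists_mem_image, Ub.image_iff, g.isometry.dist_eq]

lemma esc_image (g : X ≃ᵢ X) (s : Set X) (y : X) (R r : ℕ) : esc (g '' s) (g y) R r ↔ esc s y R r := by
  simp only [esc, exists_mem_image, Ub.image_iff, Rl.image_iff, g.isometry.dist_eq]

variable [ProperSpace X] [MeasurableSpace X] [BorelSpace X] [Nonempty X] 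

lemma meas_hit {Ω : Type*} [MeasurableSpace Ω] {s : Ω → Config X} (hs : Measurable s) (y : X) (R : ℕ) :
    MeasurableSet {a | hit (s a).1 y R} := by
  refine meas_ex hs (E := fun a q => Ub (s a).1 q ∧ dist q y ≤ R) (MeasurableSet.inter ?_ ?_)
  · exact meas_Ub (Ω := Ω × X) (hs.comp measurable_fst) measurable_snd
  · exact measurableSet_le (measurable_snd.dist measurable_const) measurable_const

lemma meas_esc {Ω : Type*} [MeasurableSpace Ω] {s : Ω → Config X} (hs : Measurable s) (y : X) (R r : ℕ) :
    MeasurableSet {a | esc (s a).1 y R r} := by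
  refine meas_ex hs (E := fun a q => dist q y ≤ R ∧ ¬ Ub (s a).1 q ∧ ∃ b ∈ (s a).1, Rl (s a).1 q b ∧ (r:ℝ) < dist b y)
    (MeasurableSet.inter ?_ (MeasurableSet.inter ?_ ?_))
  · exact measurableSet_le (measurable_snd.dist measurable_const) measurable_const
  · exact (meas_Ub (Ω := Ω × X) (hs.comp measurable_fst) measurable_snd).compl
  · refine meas_ex (Ω := Ω × X) (s := fun x => s x.1) (hs.comp measurable_fst)
      (E := fun x b => Rl (s x.1).1 x.2 b ∧ (r:ℝ) < dist b y) (MeasurableSet.inter ?_ ?_)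
    · exact meas_Rl (Ω := (Ω × X) × X) (hs.comp measurable_fst.fst) measurable_fst.snd measurable_snd
    · exact measurableSet_lt measurable_const (measurable_snd.dist measurable_const)

lemma small_of_inter {Ω : Type*} [MeasurableSpace Ω] (P : Measure Ω) [IsProbabilityMeasure P] (A : ℕ → Set Ω)
    (hA : ∀ n, MeasurableSet (A n)) (hanti : Antitone A) (h0 : P (⋂ n, A n) = 0) {ε : ℝ≥0∞} (hε : 0 < ε) :
    ∃ n, P (A n) < ε := by
  have := tendsto_measure_iInter_atTop (μ := P) (fun n => (hA n).nullMeasurableSet) hanti ⟨0, measure_ne_top _ _⟩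
  rw [h0] at this
  exact (this.eventually (gt_mem_nhds hε)).exists

lemma hit_small (P : Measure (Config X)) [IsProbabilityMeasure P] (y : X) (hD : ∀ᵐ ω ∂P, ∃ p ∈ ω.1, Ub ω.1 p)
    {ε : ℝ≥0∞} (hε : 0 < ε) : ∃ R : ℕ, P {ω | ¬ hit ω.1 y R} < ε := by
  refine small_of_inter P (fun R => {ω | ¬ hit ω.1 y R}) (fun R => (meas_hit measurable_id y R).compl) ?_ ?_ hε
  · intro R R' h ω hω hh
    obtain ⟨q, h1, h2, h3⟩ := hh
    exact hω ⟨q, h1, h2, h3.trans (by exact_mod_cast h)⟩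
  · refine measure_mono_null ?_ hD
    intro ω hω
    simp only [mem_iInter, mem_setOf_eq] at hω
    rintro ⟨p, hp, hU⟩
    obtain ⟨R, hR⟩ := exists_nat_ge (dist p y)
    exact hω R ⟨p, hp, hU, hR⟩

lemma esc_small (P : Measure (Config X)) [IsProbabilityMeasure P] (y : X) (R : ℕ)
    {ε : ℝ≥0∞} (hε : 0 < ε) : ∃ r : ℕ, P {ω | esc ω.1 y R r} < ε := by
  refine small_of_inter P (fun r => {ω | esc ω.1 y R r}) (fun r => meas_esc measurable_id y R r) ?_ ?_ hε
  · rintro r r' h ω ⟨q, h1, h2, h3, b, h4, h5, h6⟩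
    exact ⟨q, h1, h2, h3, b, h4, h5, lt_of_le_of_lt (by exact_mod_cast h) h6⟩
  · refine measure_mono_null (t := ∅) ?_ measure_empty
    intro ω hω
    simp only [mem_iInter, mem_setOf_eq] at hω
    have hfin := ω.2 (closedBall y R) isBounded_closedBall
    have hbd : ∀ q, ∃ n : ℕ, q ∈ ω.1 ∩ closedBall y R → ¬ Ub ω.1 q → ∀ b ∈ ω.1, Rl ω.1 q b → dist b y ≤ n := by
      intro q
      by_cases hU : Ub ω.1 q
      · exact ⟨0, fun _ h => absurd hU h⟩
      · have hU' := hU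
        rw [Ub] at hU
        push Not at hU
        obtain ⟨n, hn⟩ := hU
        obtain ⟨k, hk⟩ := exists_nat_ge (n + dist q y)
        refine ⟨k, fun _ _ b hb hR => ?_⟩
        have := hn b hb hR
        have := dist_triangle_left b y q
        linarith
    choose f hf using hbd
    obtain ⟨M, hM⟩ := (hfin.image f).bddAbove
    obtain ⟨q, h1, h2, h3, b, h4, h5, h6⟩ := hω M
    have hq : q ∈ ω.1 ∩ closedBall y R := ⟨h1, h2⟩
    have h7 : f q ≤ M := hM (mem_image_of_mem f hq)
    have h8 := hf q hq h3 b h4 h5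
    have : (f q : ℝ) ≤ M := by exact_mod_cast h7
    linarith

variable [PreconnectedSpace X]

lemma hit_const (hsym : PointSymmetric X) {ν : Measure X} (hν : ∀ γ : X ≃ᵢ X, Measure.map γ ν = ν)
    {P : Measure (Config X)} (hP : VoidP ν P) (y y' : X) (R : ℕ) :
    P {ω | ¬ hit ω.1 y R} = P {ω | ¬ hit ω.1 y' R} := by
  obtain ⟨g, hg⟩ := transitive hsym y y'
  conv_rhs => rw [← hP.iso g (hν g)]
  have hm : MeasurableSet {ω : Config X | ¬ hit ω.1 y' R} := (meas_hit measurable_id y' R).compl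
  rw [Measure.map_apply (mapIso_meas g) hm, ← hg]
  congr 1
  ext ω
  exact not_congr (hit_image g ω.1 y R).symm

lemma esc_const (hsym : PointSymmetric X) {ν : Measure X} (hν : ∀ γ : X ≃ᵢ X, Measure.map γ ν = ν)
    {P : Measure (Config X)} (hP : VoidP ν P) (y y' : X) (R r : ℕ) :
    P {ω | esc ω.1 y R r} = P {ω | esc ω.1 y' R r} := by
  obtain ⟨g, hg⟩ := transitive hsym y y'
  conv_rhs => rw [← hP.iso g (hν g)]
  have hm : MeasurableSet {ω : Config X | esc ω.1 y' R r} := meas_esc measurable_id y' R r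
  rw [Measure.map_apply (mapIso_meas g) hm, ← hg]
  congr 1
  ext ω
  exact (esc_image g ω.1 y R r).symm

end ExA
end BooleanModel

namespace BooleanModel

section ExB
open Filter Topology

variable {X : Type*} [MetricSpace X] 

lemma cap_compl_mix (S : Set X) (s t : Config X) : cap Sᶜ (mix S s t) = cap Sᶜ t := by
  refine Subtype.ext ?_
  change ((s.1 ∩ S) ∪ (t.1 ∩ Sᶜ)) ∩ Sᶜ = t.1 ∩ Sᶜ
  rw [union_inter_distrib_right, inter_assoc, inter_assoc, inter_self, inter_compl_self, inter_empty, empty_union]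

lemma vd_mix (S : Set X) (s t : Config X) : mix S s t ∈ vd S ↔ s ∈ vd S := by
  change ((s.1 ∩ S) ∪ (t.1 ∩ Sᶜ)) ∩ S = ∅ ↔ s.1 ∩ S = ∅
  rw [union_inter_distrib_right, inter_assoc, inter_self, inter_assoc, compl_inter_self, inter_empty, union_empty]

/-- leaving: either the restricted class agrees or comes near the removed set -/
lemma Rl.near {s B : Set X} {q k : X} (h : Rl s q k)
    (hB : ∀ b, Rl (s ∩ Bᶜ) q b → ∀ x ∈ s, x ∈ B → ¬ dist b x ≤ 2) : Rl (s ∩ Bᶜ) q k := by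
  induction h with
  | refl => exact Rl.refl _ _
  | @tail b c _ h ih => exact ih.step ⟨h.1, fun hc => hB b ih c h.1 hc h.2⟩ h.2

/-- last exit -/
lemma Rl.last_exit {t S : Set X} {q k : X} (h : Rl t q k) (hk : k ∉ S) :
    ∃ r, r ∉ S ∧ Rl (t ∩ Sᶜ) r k ∧ (r = q ∨ (r ∈ t ∧ ∃ x ∈ S, dist x r ≤ 2)) := by
  induction h with
  | refl => exact ⟨q, hk, Rl.refl _ _, Or.inl rfl⟩
  | @tail b c _ h ih =>
    by_cases hb : b ∈ S
    · exact ⟨c, hk, Rl.refl _ _, Or.inr ⟨h.1, b, hb, h.2⟩⟩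
    · obtain ⟨r, h1, h2, h3⟩ := ih hb
      exact ⟨r, h1, h2.step ⟨h.1, hk⟩ h.2, h3⟩

/-- An unbounded class of `t` either produces an unbounded class of `t \ S` through the start or near `S`. -/
lemma Ub.survive (t : Config X) {S : Set X} (hS : IsBounded S) {q : X} (hq : q ∈ t.1) (hU : Ub t.1 q) :
    ∃ r, r ∈ t.1 ∧ r ∉ S ∧ Ub (t.1 ∩ Sᶜ) r ∧ (r = q ∨ ∃ x ∈ S, dist x r ≤ 2) := by
  by_contra hc
  push Not at hc
  obtain ⟨M, hM⟩ := hS.subset_closedBall q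
  have hfin := t.2 (closedBall q (|M| + 2)) isBounded_closedBall
  have hbd : ∀ r, ∃ n : ℕ, ¬ Ub (t.1 ∩ Sᶜ) r → ∀ b, Rl (t.1 ∩ Sᶜ) r b → b ∈ t.1 ∩ Sᶜ → dist q b ≤ n := by
    intro r
    by_cases hU : Ub (t.1 ∩ Sᶜ) r
    · exact ⟨0, fun h => absurd hU h⟩
    · have hU' := hU
      rw [Ub] at hU
      push Not at hU
      obtain ⟨n, hn⟩ := hU
      obtain ⟨k, hk⟩ := exists_nat_ge (n + dist q r)
      refine ⟨k, fun _ b hR hb => ?_⟩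
      have := hn b hb hR
      have := dist_triangle q r b
      linarith
  choose f hf using hbd
  obtain ⟨N, hN⟩ := (hfin.image f).bddAbove
  obtain ⟨n, hn⟩ := exists_nat_ge (max (N:ℝ) |M|)
  obtain ⟨k, hk, hqk, hd⟩ := hU n
  have hnN : (N:ℝ) ≤ n := (le_max_left _ _).trans hn
  have hnM : |M| ≤ n := (le_max_right _ _).trans hn
  have hkS : k ∉ S := fun h => by
    have := hM h
    rw [mem_closedBall, dist_comm] at this
    have := le_abs_self M
    linarith
  obtain ⟨r, h1, h2, h3⟩ := hqk.last_exit hkS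
  have hrt : r ∈ t.1 := by
    rcases h3 with rfl | h
    · exact hq
    · exact h.1
  have hnU : ¬ Ub (t.1 ∩ Sᶜ) r := by
    intro hUr
    have := hc r hrt h1 hUr
    rcases h3 with h | ⟨_, x, hx, hxr⟩
    · exact this.1 h
    · exact absurd hxr (not_le.2 (this.2 x hx))
  have hr : r ∈ t.1 ∩ closedBall q (|M| + 2) := by
    refine ⟨hrt, ?_⟩
    rcases h3 with rfl | ⟨_, x, hx, hxr⟩
    · rw [mem_closedBall, dist_self]; positivity
    · have h4 := hM hx
      rw [mem_closedBall] at h4 ⊢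
      have := dist_triangle_left r q x
      have := le_abs_self M
      linarith
  have h5 : f r ≤ N := hN (mem_image_of_mem f hr)
  have h6 : (f r : ℝ) ≤ N := by exact_mod_cast h5
  have := hf r hnU k h2 ⟨hk, hkS⟩
  linarith

variable [ProperSpace X] [MeasurableSpace X] [BorelSpace X] [Nonempty X] 

lemma outer_bound {ν : Measure X} {P : Measure (Config X)} (hP : VoidP ν P) (z y : X) (m R r : ℕ)
    (hy : (r:ℝ) + m + 3 + R ≤ dist y z) :
    P {ω | ¬ hit (cap (closedBall z m)ᶜ ω).1 y R} ≤
      P {ω | ¬ hit ω.1 y R} + P {ω | esc ω.1 y R r} / P (vd (closedBall z m)) := by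
  haveI := hP.prob
  set B : Set X := closedBall z m with hB
  have hBm : MeasurableSet B := measurableSet_closedBall
  have hem : MeasurableSet {ω : Config X | esc (cap Bᶜ ω).1 y R r} := meas_esc (cap_meas hBm.compl) y R r
  have hind : P (vd B ∩ {ω | esc (cap Bᶜ ω).1 y R r}) = P (vd B) * P {ω | esc (cap Bᶜ ω).1 y R r} := by
    refine hP.indep hBm (meas_vd hBm) hem (vd_mix B) ?_
    intro s t
    change esc (cap Bᶜ (mix B s t)).1 y R r ↔ esc (cap Bᶜ t).1 y R r
    rw [cap_compl_mix]
  have hle : P (vd B) * P {ω | esc (cap Bᶜ ω).1 y R r} ≤ P {ω | esc ω.1 y R r} := by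
    rw [← hind]
    refine measure_mono ?_
    rintro ω ⟨h1, h2⟩
    have : cap Bᶜ ω = ω := Subtype.ext (by
      change ω.1 ∩ Bᶜ = ω.1
      refine inter_eq_left.2 fun x hx hxB => ?_
      have : x ∈ ω.1 ∩ B := ⟨hx, hxB⟩
      rw [(h1 : ω.1 ∩ B = ∅)] at this
      exact this)
    change esc (cap Bᶜ ω).1 y R r at h2
    rw [this] at h2
    exact h2
  have hp0 : P (vd B) ≠ 0 := by
    rw [hP.void B hBm isBounded_closedBall, Ne, ENNReal.ofReal_eq_zero, not_le]
    exact Real.exp_pos _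
  have hle' : P {ω | esc (cap Bᶜ ω).1 y R r} ≤ P {ω | esc ω.1 y R r} / P (vd B) := by
    rw [ENNReal.le_div_iff_mul_le (Or.inl hp0) (Or.inl (measure_ne_top _ _)), mul_comm]
    exact hle
  refine le_trans (measure_mono ?_) ((measure_union_le _ _).trans (add_le_add_right hle' _))
  intro ω hω
  by_cases hh : hit ω.1 y R
  · refine Or.inr ?_
    obtain ⟨q, hq, hU, hd⟩ := hh
    have hqB : q ∈ Bᶜ := by
      intro h
      rw [hB, mem_closedBall] at h
      have := dist_triangle_left y z q
      have : (0:ℝ) ≤ r := Nat.cast_nonneg r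
      linarith
    have hq' : q ∈ (cap Bᶜ ω).1 := ⟨hq, hqB⟩
    have hnU : ¬ Ub (cap Bᶜ ω).1 q := fun h => hω ⟨q, hq', h, hd⟩
    refine ⟨q, hq', hd, hnU, ?_⟩
    by_contra hc
    push Not at hc
    refine hnU fun n => ?_
    obtain ⟨k, hk, hqk, hn⟩ := hU n
    have : Rl (ω.1 ∩ Bᶜ) q k := by
      refine hqk.near ?_
      intro b hb x _ hxB hbx
      have h1 := hc b (hb.mem hq') hb
      rw [hB, mem_closedBall] at hxB
      have h2 := dist_triangle y b z
      rw [dist_comm y b] at h2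
      have h3 := dist_triangle b x z
      have : (0:ℝ) ≤ R := Nat.cast_nonneg R
      linarith
    exact ⟨k, this.mem hq', this, hn⟩
  · exact Or.inl hh

end ExB
end BooleanModel

namespace BooleanModel

section ExC
open Filter Topology

variable {X : Type*} [MetricSpace X] [ProperSpace X]

/-- explored condition for a location `y` -/
def cnd (h : Config X) (z : X) (n : ℕ) (ω : Config X) (y : X) : Prop :=
  dist y z ≤ 5/4 ∨ ∃ c ∈ (cap (closedBall z n) (uni ω h)).1, Cl z (cap (closedBall z n) (uni ω h)).1 c ∧ dist c y ≤ 9/4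

lemma explore_agree (h : Config X) (z : X) (n : ℕ) (Y : Set X) (hYc : ∀ x, ∃ y ∈ Y, dist x y ≤ 1/4)
    (S : Set X) (ω ω' : Config X) (hS : ∀ y ∈ Y, cnd h z n ω y → closedBall y (1/4) ⊆ S) (hag : ω.1 ∩ S = ω'.1 ∩ S) (c : X) :
    Cl z (cap (closedBall z n) (uni ω h)).1 c ↔ Cl z (cap (closedBall z n) (uni ω' h)).1 c := by
  have hz : ∀ p, dist z p ≤ 1 → p ∈ S := by
    intro p hp
    obtain ⟨y, hy, hd⟩ := hYc p
    refine hS y hy (Or.inl ?_) hd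
    have := dist_triangle_left y z p
    rw [dist_comm z p] at hp
    linarith
  have hc : ∀ c, Cl z (cap (closedBall z n) (uni ω h)).1 c → ∀ p, dist c p ≤ 2 → p ∈ S := by
    intro c hc p hp
    obtain ⟨y, hy, hd⟩ := hYc p
    refine hS y hy (Or.inr ⟨c, hc.mem, hc, ?_⟩) hd
    have := dist_triangle c p y
    linarith
  have key : ∀ ω ω' : Config X, ω.1 ∩ S = ω'.1 ∩ S → ∀ p ∈ S, p ∈ (cap (closedBall z n) (uni ω h)).1 →
      p ∈ (cap (closedBall z n) (uni ω' h)).1 := by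
    rintro ω ω' hag p hpS ⟨hp | hp, hb⟩
    · have : p ∈ ω.1 ∩ S := ⟨hp, hpS⟩
      rw [hag] at this
      exact ⟨Or.inl this.1, hb⟩
    · exact ⟨Or.inr hp, hb⟩
  constructor
  · intro hcl
    refine Cl.transfer ?_ hcl
    intro q hq
    exact key ω ω' hag q (hc q hq q (by simp)) hq.mem
  · rintro ⟨p, hp, hzp, hr⟩
    induction hr with
    | refl => exact ⟨p, key ω' ω hag.symm p (hz p hzp) hp, hzp, Rl.refl _ _⟩
    | @tail a b _ hab ih => exact ih.step (key ω' ω hag.symm b (hc a ih b hab.2) hab.1) hab.2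

lemma Unb.reach {z : X} {s : Set X} (hU : Unb z s) (n : ℕ) (hn : 1 ≤ n) : ∃ c, Cl z (s ∩ closedBall z n) c ∧ (n:ℝ) - 2 < dist c z := by
  by_contra hc
  push Not at hc
  obtain ⟨q, hq, ⟨p, hp, hzp, hr⟩, hd⟩ := hU n
  have hn' : (1:ℝ) ≤ n := by exact_mod_cast hn
  have : Cl z (s ∩ closedBall z n) q := by
    clear hd hq
    induction hr with
    | refl => exact ⟨p, ⟨hp, by rw [mem_closedBall, dist_comm]; linarith⟩, hzp, Rl.refl _ _⟩
    | @tail a b _ hab ih =>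
      refine ih.step ⟨hab.1, ?_⟩ hab.2
      have h1 := hc a ih
      have h2 := dist_triangle_left b z a
      have := hab.2
      rw [mem_closedBall]; linarith
  have h2 := this.mem.2
  rw [mem_closedBall] at h2
  linarith

variable [MeasurableSpace X] [BorelSpace X] [Nonempty X] 

lemma meas_cnd (h : Config X) (z : X) (n : ℕ) (y : X) : MeasurableSet {ω | cnd h z n ω y} := by
  have hx : Measurable fun ω : Config X => cap (closedBall z n) (uni ω h) :=
    (cap_meas measurableSet_closedBall).comp (uni_meas.comp (measurable_id.prodMk measurable_const))
  refine MeasurableSet.union (MeasurableSet.const _) ?_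
  refine meas_ex hx (E := fun ω c => Cl z (cap (closedBall z n) (uni ω h)).1 c ∧ dist c y ≤ 9/4) (MeasurableSet.inter ?_ ?_)
  · exact meas_Cl (Ω := Config X × X) (hx.comp measurable_fst) measurable_snd measurable_const
  · exact measurableSet_le (measurable_snd.dist measurable_const) measurable_const

variable [PreconnectedSpace X]

lemma explore_bound (hsym : PointSymmetric X) {ν : Measure X} (hν : ∀ γ : X ≃ᵢ X, Measure.map γ ν = ν)
    {P : Measure (Config X)} (hP : VoidP ν P) (h : Config X) (z : X) (m R : ℕ) {ε : ℝ≥0∞} (hε : 0 < ε) :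
    P {ω | Unb z (uni ω h).1 ∧ ¬ ∃ c ∈ (uni ω h).1, Cl z (uni ω h).1 c ∧ (m:ℝ) < dist c z ∧
      ∃ p ∈ ω.1, Ub ω.1 p ∧ dist c p ≤ ((R + 5 : ℕ) : ℝ)} ≤ P {ω | ¬ hit ω.1 z R} + ε := by
  haveI := hP.prob
  obtain ⟨Y, hY, hYc⟩ := net_exists X
  haveI : Countable Y.1 := (Config.countable Y).to_subtype
  set F := {ω : Config X | Unb z (uni ω h).1 ∧ ¬ ∃ c ∈ (uni ω h).1, Cl z (uni ω h).1 c ∧ (m:ℝ) < dist c z ∧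
      ∃ p ∈ ω.1, Ub ω.1 p ∧ dist c p ≤ ((R + 5 : ℕ) : ℝ)} with hF
  have hBm : MeasurableSet (closedBall z ((m+5 : ℕ) : ℝ)) := measurableSet_closedBall
  have hp0 : P (vd (closedBall z ((m+5 : ℕ) : ℝ))) ≠ 0 := by
    rw [hP.void _ hBm isBounded_closedBall, Ne, ENNReal.ofReal_eq_zero, not_le]
    exact Real.exp_pos _
  obtain ⟨r, hr⟩ := esc_small P z R (ENNReal.mul_pos hε.ne' hp0)
  let n : ℕ := r + (m+5) + 3 + R + 10
  let S : Finset Y.1 → Set X := fun J => ⋃ y ∈ J, closedBall (y:X) (1/4)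
  have hSm : ∀ J, MeasurableSet (S J) := fun J => Finset.measurableSet_biUnion J fun y _ => measurableSet_closedBall
  have hSb : ∀ J, IsBounded (S J) := fun J => (isBounded_biUnion_finset J).2 fun y _ => isBounded_closedBall
  let G : Finset Y.1 → Set (Config X) := fun J => {ω | ∀ y : Y.1, y ∈ J ↔ cnd h z n ω y}
  have hGm : ∀ J, MeasurableSet (G J) := by
    intro J
    have : G J = ⋂ y : Y.1, {ω | y ∈ J ↔ cnd h z n ω y} := by ext ω; simp [G]
    rw [this]
    refine MeasurableSet.iInter fun y => ?_
    by_cases hy : y ∈ J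
    · simp only [hy, true_iff]; exact meas_cnd h z n y
    · simp only [hy, false_iff]; exact (meas_cnd h z n y).compl
  have hGdis : Pairwise (Disjoint on G) := by
    intro J J' hne
    refine Set.disjoint_left.2 fun ω h1 h2 => hne ?_
    ext y; exact (h1 y).trans (h2 y).symm
  have hGcov : ∀ ω, ∃ J, ω ∈ G J := by
    intro ω
    have hfin : {y : Y.1 | cnd h z n ω y}.Finite := by
      have hf := Y.2 (closedBall z (n + 4)) isBounded_closedBall
      refine Set.Finite.of_finite_image (f := Subtype.val) (hf.subset ?_) Subtype.val_injective.injOn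
      rintro _ ⟨y, hy, rfl⟩
      refine ⟨y.2, ?_⟩
      rw [mem_closedBall]
      have hn0 : (0:ℝ) ≤ n := Nat.cast_nonneg n
      rcases hy with hy | ⟨c, ⟨_, hc⟩, _, hd⟩
      · linarith
      · rw [mem_closedBall] at hc
        have := dist_triangle_left (y:X) z c
        linarith
    exact ⟨hfin.toFinset, fun y => by simp⟩
  have hGmix1 : ∀ J (ω ω' : Config X), ω.1 ∩ S J = ω'.1 ∩ S J → ω ∈ G J → ω' ∈ G J := by
    intro J ω ω' hag hω
    have hcl := explore_agree h z n Y.1 hYc (S J) ω ω' (by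
      intro y hy hc
      exact subset_biUnion_of_mem (u := fun y : Y.1 => closedBall (y:X) (1/4)) ((hω ⟨y, hy⟩).2 hc)) hag
    intro y
    rw [hω y]
    refine or_congr Iff.rfl ?_
    constructor
    · rintro ⟨c, _, h1, h2⟩
      exact ⟨c, ((hcl c).1 h1).mem, (hcl c).1 h1, h2⟩
    · rintro ⟨c, _, h1, h2⟩
      exact ⟨c, ((hcl c).2 h1).mem, (hcl c).2 h1, h2⟩
  have hGmix : ∀ J (s t : Config X), mix (S J) s t ∈ G J ↔ s ∈ G J := by
    intro J s t
    have : (mix (S J) s t).1 ∩ S J = s.1 ∩ S J := by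
      change ((s.1 ∩ S J) ∪ (t.1 ∩ (S J)ᶜ)) ∩ S J = s.1 ∩ S J
      rw [union_inter_distrib_right, inter_assoc, inter_self, inter_assoc, compl_inter_self, inter_empty, union_empty]
    exact ⟨hGmix1 J _ _ this, hGmix1 J _ _ this.symm⟩
  have hJ : ∀ J, P (F ∩ G J) ≤ P (G J) * (P {ω | ¬ hit ω.1 z R} + ε) := by
    intro J
    by_cases hfar : ∃ y ∈ J, (n:ℝ) - 9/4 ≤ dist (y:X) z
    · obtain ⟨y, hyJ, hyz⟩ := hfar
      have hnn : (n:ℝ) = r + (m+5) + 3 + R + 10 := by simp only [n]; push_cast; ring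
      have hr0 : (0:ℝ) ≤ r := Nat.cast_nonneg r
      have hR0 : (0:ℝ) ≤ R := Nat.cast_nonneg R
      have hm0 : (0:ℝ) ≤ m := Nat.cast_nonneg m
      let N : Set (Config X) := {ω | ¬ ∃ q ∈ (cap (S J)ᶜ ω).1, Ub (cap (S J)ᶜ ω).1 q ∧
        (dist q y ≤ R ∨ ((m:ℝ) + 5 ≤ dist q z ∧ ∃ y' ∈ J, dist q (y' : X) ≤ 9/4))}
      have hcm := cap_meas (hSm J).compl
      have hNm : MeasurableSet N := by
        refine (meas_ex hcm (E := fun ω q => Ub (cap (S J)ᶜ ω).1 q ∧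
          (dist q y ≤ R ∨ ((m:ℝ) + 5 ≤ dist q z ∧ ∃ y' ∈ J, dist q (y' : X) ≤ 9/4))) ?_).compl
        refine MeasurableSet.inter (meas_Ub (Ω := Config X × X) (hcm.comp measurable_fst) measurable_snd) ?_
        have : MeasurableSet {q : X | dist q y ≤ R ∨ ((m:ℝ) + 5 ≤ dist q z ∧ ∃ y' ∈ J, dist q (y' : X) ≤ 9/4)} := by
          refine MeasurableSet.union measurableSet_closedBall (MeasurableSet.inter ?_ ?_)
          · exact measurableSet_le measurable_const (measurable_id.dist measurable_const)
          · have : {q : X | ∃ y' ∈ J, dist q (y' : X) ≤ 9/4} = ⋃ y' ∈ J, closedBall (y':X) (9/4) := by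
              ext q; simp only [mem_setOf_eq, mem_iUnion, mem_closedBall, exists_prop]
            change MeasurableSet {q : X | ∃ y' ∈ J, dist q (y' : X) ≤ 9/4}
            rw [this]
            exact Finset.measurableSet_biUnion J fun y _ => measurableSet_closedBall
        exact measurable_snd this
      have hind : P (G J ∩ N) = P (G J) * P N := by
        refine hP.indep (hSm J) (hGm J) hNm (hGmix J) ?_
        intro s t
        refine not_congr ?_
        change (∃ q ∈ (cap (S J)ᶜ (mix (S J) s t)).1, _) ↔ _
        simp only [cap_compl_mix]
      have hFN : F ∩ G J ⊆ G J ∩ N := by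
        rintro ω ⟨⟨hU, hnear⟩, hG⟩
        refine ⟨hG, ?_⟩
        rintro ⟨q, hq, hUq, hcase⟩
        have hUω : Ub ω.1 q := hUq.mono inter_subset_left
        refine hnear ?_
        rcases hcase with hqy | ⟨hqz, y', hy', hqy'⟩
        · rcases (hG y).1 hyJ with h1 | ⟨c, _, hc, hcy⟩
          · linarith
          · have hc' : Cl z (uni ω h).1 c := hc.mono inter_subset_left
            refine ⟨c, hc'.mem, hc', ?_, q, hq.1, hUω, ?_⟩
            · have := dist_triangle_left (y:X) z c
              linarith
            · have := dist_triangle_right c q y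
              push_cast; linarith
        · have hyz' := dist_triangle q (y':X) z
          rcases (hG y').1 hy' with h1 | ⟨c, _, hc, hcy⟩
          · linarith
          · have hc' : Cl z (uni ω h).1 c := hc.mono inter_subset_left
            refine ⟨c, hc'.mem, hc', ?_, q, hq.1, hUω, ?_⟩
            · have := dist_triangle_left (y':X) z c
              linarith
            · have := dist_triangle_right c q y'
              push_cast; linarith
      have hNN : N ⊆ {ω | ¬ hit (cap (closedBall z ((m+5 : ℕ) : ℝ))ᶜ ω).1 y R} := by
        rintro ω hω ⟨q, hq, hUq, hqy⟩
        obtain ⟨k, hk, hkS, hUk, hcase⟩ := hUq.survive _ (hSb J) hq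
        refine hω ⟨k, ⟨hk.1, hkS⟩, hUk.mono ?_, ?_⟩
        · exact fun x hx => ⟨hx.1.1, hx.2⟩
        · rcases hcase with rfl | ⟨x, hx, hxk⟩
          · exact Or.inl hqy
          · refine Or.inr ⟨?_, ?_⟩
            · have := hk.2
              rw [mem_compl_iff, mem_closedBall, not_le] at this
              push_cast at this
              exact this.le
            · simp only [S, mem_iUnion, mem_closedBall] at hx
              obtain ⟨y', hy', hd⟩ := hx
              refine ⟨y', hy', ?_⟩
              have := dist_triangle_left k y' x
              linarith
      refine (measure_mono hFN).trans ?_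
      rw [hind]
      gcongr
      refine (measure_mono hNN).trans ((outer_bound hP z y (m+5) R r ?_).trans ?_)
      · push_cast; linarith
      · rw [hit_const hsym hν hP (y:X) z, esc_const hsym hν hP (y:X) z]
        gcongr
        refine ENNReal.div_le_of_le_mul ?_
        exact hr.le
    · have : F ∩ G J = ∅ := by
        rw [eq_empty_iff_forall_notMem]
        rintro ω ⟨⟨hU, _⟩, hG⟩
        refine hfar ?_
        obtain ⟨c, hc, hd⟩ := hU.reach n (by simp only [n]; omega)
        obtain ⟨y, hy, hcy⟩ := hYc c
        refine ⟨⟨y, hy⟩, (hG ⟨y, hy⟩).2 (Or.inr ⟨c, hc.mem, hc, by linarith⟩), ?_⟩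
        have := dist_triangle c y z
        change (n:ℝ) - 9/4 ≤ dist y z
        linarith
      rw [this, measure_empty]; exact zero_le
  calc P F ≤ P (⋃ J, F ∩ G J) := measure_mono fun ω hω => by
        obtain ⟨J, hJ⟩ := hGcov ω
        exact mem_iUnion.2 ⟨J, hω, hJ⟩
    _ ≤ ∑' J, P (F ∩ G J) := measure_iUnion_le _
    _ ≤ ∑' J, P (G J) * (P {ω | ¬ hit ω.1 z R} + ε) := ENNReal.tsum_le_tsum hJ
    _ = (∑' J, P (G J)) * (P {ω | ¬ hit ω.1 z R} + ε) := ENNReal.tsum_mul_right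
    _ ≤ 1 * (P {ω | ¬ hit ω.1 z R} + ε) := by
        gcongr
        exact (tsum_meas_le_meas_iUnion_of_disjoint P hGm hGdis).trans prob_le_one
    _ = _ := one_mul _

lemma explore_ae (hsym : PointSymmetric X) {ν : Measure X} (hν : ∀ γ : X ≃ᵢ X, Measure.map γ ν = ν)
    {P : Measure (Config X)} (hP : VoidP ν P) (hD : ∀ᵐ ω ∂P, ∃ p ∈ ω.1, Ub ω.1 p) (h : Config X) (z : X) :
    ∀ᵐ ω ∂P, Unb z (uni ω h).1 → ∃ L : ℕ, Near z ω.1 (uni ω h).1 (L+2) := by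
  haveI := hP.prob
  rw [ae_iff]
  refine le_antisymm (ENNReal.le_of_forall_pos_le_add fun ε hε _ => ?_) zero_le
  rw [zero_add]
  have hε2 : (0:ℝ≥0∞) < (ε:ℝ≥0∞) / 2 := ENNReal.half_pos (by exact_mod_cast hε.ne')
  obtain ⟨R, hR⟩ := hit_small P z hD hε2
  let F : ℕ → Set (Config X) := fun m => {ω | Unb z (uni ω h).1 ∧ ¬ ∃ c ∈ (uni ω h).1, Cl z (uni ω h).1 c ∧ (m:ℝ) < dist c z ∧
      ∃ p ∈ ω.1, Ub ω.1 p ∧ dist c p ≤ ((R + 5 : ℕ) : ℝ)}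
  have hmono : Monotone F := by
    rintro m m' hm ω ⟨h1, h2⟩
    refine ⟨h1, ?_⟩
    rintro ⟨c, hc, hcl, hd, hp⟩
    exact h2 ⟨c, hc, hcl, lt_of_le_of_lt (by exact_mod_cast hm) hd, hp⟩
  calc _ ≤ P (⋃ m, F m) := measure_mono fun ω hω => by
        simp only [mem_setOf_eq, Classical.not_imp, not_exists] at hω
        have h2 := hω.2 (R+3)
        rw [Near, not_forall] at h2
        obtain ⟨m, hm⟩ := h2
        exact mem_iUnion.2 ⟨m, hω.1, hm⟩
    _ = ⨆ m, P (F m) := hmono.measure_iUnion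
    _ ≤ (ε:ℝ≥0∞) / 2 + (ε:ℝ≥0∞) / 2 := by
        refine iSup_le fun m => (explore_bound hsym hν hP h z m R hε2).trans ?_
        gcongr
    _ = ε := ENNReal.add_halves _

end ExC
end BooleanModel

namespace BooleanModel

section Fin
open Filter Topology

variable {X : Type*} [MetricSpace X] [ProperSpace X]

lemma det_unique (hsym : PointSymmetric X) [PreconnectedSpace X] (ω ξ : Config X) (hsub : ω.1 ⊆ ξ.1)
    (Z : Set X) (hZ : Dense Z) (hN : numUcomps (occupied ω) = 1)
    (hG : ∀ z ∈ Z, Unb z ξ.1 → ∃ p ∈ ω.1, Ub ω.1 p ∧ Cl z ξ.1 p) : numUcomps (occupied ξ) = 1 := by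
  rw [num_one_iff hsym] at hN ⊢
  obtain ⟨⟨p, hp, hU⟩, huniq⟩ := hN
  refine ⟨⟨p, hsub hp, hU.mono hsub⟩, ?_⟩
  have key : ∀ p ∈ ξ.1, Ub ξ.1 p → ∃ p' ∈ ω.1, Ub ω.1 p' ∧ Rl ξ.1 p p' := by
    intro p hp hU
    obtain ⟨z, hz, hd⟩ := hZ.exists_dist_lt p one_pos
    have hzp : dist z p ≤ 1 := by rw [dist_comm]; exact hd.le
    obtain ⟨p', h1, h2, q, hq, hzq, hqr⟩ := hG z hz (by
      intro n
      obtain ⟨k, hk⟩ := exists_nat_ge ((n:ℝ) + 1)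
      obtain ⟨q, h1, h2, h3⟩ := hU k
      refine ⟨q, h1, ⟨p, hp, hzp, h2⟩, ?_⟩
      have := dist_triangle_right p q z
      linarith)
    refine ⟨p', h1, h2, ((Rl.refl ξ.1 p).step hq ?_).trans hqr⟩
    have := dist_triangle_left p q z
    linarith
  intro a ha b hb hUa hUb
  obtain ⟨a', ha', hUa', hra⟩ := key a ha hUa
  obtain ⟨b', hb', hUb', hrb⟩ := key b hb hUb
  exact (hra.trans ((huniq a' ha' b' hb' hUa' hUb').mono hsub)).trans (hrb.symm hb)

variable [MeasurableSpace X] [BorelSpace X] [Nonempty X] [PreconnectedSpace X]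

lemma meas_Unb {Ω : Type*} [MeasurableSpace Ω] {s : Ω → Config X} (hs : Measurable s) (z : X) :
    MeasurableSet {a | Unb z (s a).1} := by
  have : {a | Unb z (s a).1} = ⋂ n : ℕ, {a | ∃ q ∈ (s a).1, Cl z (s a).1 q ∧ (n:ℝ) < dist q z} := by
    ext a; simp [Unb]
  rw [this]
  refine MeasurableSet.iInter fun n => meas_ex hs (E := fun a q => Cl z (s a).1 q ∧ (n:ℝ) < dist q z) (MeasurableSet.inter ?_ ?_)
  · exact meas_Cl (Ω := Ω × X) (hs.comp measurable_fst) measurable_snd measurable_const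
  · exact measurableSet_lt measurable_const (measurable_snd.dist measurable_const)

lemma meas_Near {Ω : Type*} [MeasurableSpace Ω] {w s : Ω → Config X} (hw : Measurable w) (hs : Measurable s) (z : X) (L : ℕ) :
    MeasurableSet {a | Near z (w a).1 (s a).1 L} := by
  have : {a | Near z (w a).1 (s a).1 L} = ⋂ m : ℕ, {a | ∃ c ∈ (s a).1, Cl z (s a).1 c ∧ (m:ℝ) < dist c z ∧
      ∃ p ∈ (w a).1, Ub (w a).1 p ∧ dist c p ≤ L} := by
    ext a; simp [Near]
  rw [this]
  refine MeasurableSet.iInter fun m => meas_ex hs (E := fun a c => Cl z (s a).1 c ∧ (m:ℝ) < dist c z ∧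
      ∃ p ∈ (w a).1, Ub (w a).1 p ∧ dist c p ≤ L) (MeasurableSet.inter ?_ (MeasurableSet.inter ?_ ?_))
  · exact meas_Cl (Ω := Ω × X) (hs.comp measurable_fst) measurable_snd measurable_const
  · exact measurableSet_lt measurable_const (measurable_snd.dist measurable_const)
  · refine meas_ex (Ω := Ω × X) (s := fun x => w x.1) (hw.comp measurable_fst)
      (E := fun x p => Ub (w x.1).1 p ∧ dist x.2 p ≤ L) (MeasurableSet.inter ?_ ?_)
    · exact meas_Ub (Ω := (Ω × X) × X) (hw.comp measurable_fst.fst) measurable_snd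
    · exact measurableSet_le (measurable_fst.snd.dist measurable_snd) measurable_const

lemma joint_ae (hsym : PointSymmetric X) {ν ν' : Measure X} (hν : ∀ γ : X ≃ᵢ X, Measure.map γ ν = ν)
    (hν' : ∀ γ : X ≃ᵢ X, Measure.map γ ν' = ν') (hpos : ∀ x, 0 < ν' (closedBall x (1/10)))
    {P Q : Measure (Config X)} (hP : VoidP ν P) (hQ : VoidP ν' Q) (hD : ∀ᵐ ω ∂P, ∃ p ∈ ω.1, Ub ω.1 p) (z : X) :
    ∀ᵐ x ∂(P.prod Q), Unb z (uni x.1 x.2).1 → ∃ p ∈ x.1.1, Ub x.1.1 p ∧ Cl z (uni x.1 x.2).1 p := by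
  haveI := hP.prob
  haveI := hQ.prob
  have hum : Measurable fun x : Config X × Config X => uni x.1 x.2 := uni_meas
  have hNm : ∀ L, MeasurableSet {x : Config X × Config X | Near z x.1.1 (uni x.1 x.2).1 L} := fun L =>
    meas_Near (Ω := Config X × Config X) measurable_fst hum z L
  have h1 : ∀ᵐ x ∂(P.prod Q), Unb z (uni x.1 x.2).1 → ∃ L : ℕ, Near z x.1.1 (uni x.1 x.2).1 (L+2) := by
    have hm : MeasurableSet {x : Config X × Config X | Unb z (uni x.1 x.2).1 → ∃ L : ℕ, Near z x.1.1 (uni x.1 x.2).1 (L+2)} := by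
      have : {x : Config X × Config X | Unb z (uni x.1 x.2).1 → ∃ L : ℕ, Near z x.1.1 (uni x.1 x.2).1 (L+2)} =
          {x : Config X × Config X | Unb z (uni x.1 x.2).1}ᶜ ∪ ⋃ L : ℕ, {x : Config X × Config X | Near z x.1.1 (uni x.1 x.2).1 (L+2)} := by
        ext x
        simp only [mem_setOf_eq, mem_union, mem_compl_iff, mem_iUnion]
        tauto
      rw [this]
      exact (meas_Unb hum z).compl.union (MeasurableSet.iUnion fun L => hNm _)
    rw [← Measure.prod_swap, ae_map_iff measurable_swap.aemeasurable hm]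
    refine (Measure.ae_prod_iff_ae_ae (measurable_swap hm)).2 ?_
    exact Eventually.of_forall fun η => explore_ae hsym hν hP hD η z
  have h2 : ∀ᵐ x ∂(P.prod Q), ∀ L : ℕ, Near z x.1.1 (uni x.1 x.2).1 (L+3) → Near z x.1.1 (uni x.1 x.2).1 (L+2) := by
    have hm : MeasurableSet {x : Config X × Config X | ∀ L : ℕ, Near z x.1.1 (uni x.1 x.2).1 (L+3) → Near z x.1.1 (uni x.1 x.2).1 (L+2)} := by
      have : {x : Config X × Config X | ∀ L : ℕ, Near z x.1.1 (uni x.1 x.2).1 (L+3) → Near z x.1.1 (uni x.1 x.2).1 (L+2)} =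
          ⋂ L : ℕ, ({x : Config X × Config X | Near z x.1.1 (uni x.1 x.2).1 (L+3)}ᶜ ∪ {x : Config X × Config X | Near z x.1.1 (uni x.1 x.2).1 (L+2)}) := by
        ext x
        simp only [mem_setOf_eq, mem_union, mem_compl_iff, mem_iInter, imp_iff_not_or]
      rw [this]
      exact MeasurableSet.iInter fun L => (hNm _).compl.union (hNm _)
    refine (Measure.ae_prod_iff_ae_ae hm).2 ?_
    exact Eventually.of_forall fun ω => merge_step hsym hν' hpos hQ ω z
  filter_upwards [h1, h2] with x hx1 hx2 hU
  obtain ⟨L, hL⟩ := hx1 hU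
  have h0 : Near z x.1.1 (uni x.1 x.2).1 2 := by
    induction L with
    | zero => exact hL
    | succ L ih => exact ih (hx2 L hL)
  obtain ⟨c, hc, hcl, _, p, hp, hUp, hd⟩ := h0 0
  exact ⟨p, hp, hUp, hcl.step (Or.inl hp) (by exact_mod_cast hd)⟩

end Fin

/-- **Uniqueness monotonicity for the occupied set** (Theorem 3(a)).
If the occupied set of the Poisson–Boolean model with intensity `λ₁ μ` has a unique
unbounded component a.s., then so does the one with intensity `λ₂ μ`, for `λ₁ < λ₂`. -/
theorem uniqueness_monotonicity_occupied
    {X : Type*} [MetricSpace X] [ProperSpace X] [CompleteSpace X] [SimplyConnectedSpace X]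
    [NoncompactSpace X] [MeasurableSpace X] [BorelSpace X] [Nonempty X]
    (hsym : PointSymmetric X)
    (μ : Measure X)
    (hμiso : ∀ γ : X ≃ᵢ X, Measure.map γ μ = μ)
    (hμball : ∀ (x : X) (r : ℝ), 0 < r → 0 < μ (closedBall x r) ∧ μ (closedBall x r) < ⊤)
    (lam₁ lam₂ : ℝ≥0) (hlam₁ : 0 < lam₁) (hlam : lam₁ < lam₂)
    (P₁ P₂ : Measure (Config X))
    (hP₁ : IsPoisson ((lam₁ : ℝ≥0∞) • μ) P₁)
    (hP₂ : IsPoisson ((lam₂ : ℝ≥0∞) • μ) P₂)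
    (h : P₁ {ω : Config X | numUcomps (occupied ω) = 1} = 1) :
    P₂ {ω : Config X | numUcomps (occupied ω) = 1} = 1 := by
  obtain ⟨o⟩ := ‹Nonempty X›
  haveI : Nonempty X := ⟨o⟩
  have hfin : ∀ (a : ℝ≥0) (B : Set X), IsBounded B → ((a : ℝ≥0∞) • μ) B < ⊤ := by
    intro a B hB
    obtain ⟨r, hr⟩ := hB.subset_closedBall o
    have h1 : μ B ≤ μ (closedBall o (max r 1)) :=
      measure_mono (hr.trans (closedBall_subset_closedBall (le_max_left _ _)))
    have h2 := (hμball o (max r 1) (lt_of_lt_of_le one_pos (le_max_right _ _))).2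
    rw [Measure.smul_apply, smul_eq_mul]
    exact ENNReal.mul_lt_top ENNReal.coe_lt_top (h1.trans_lt h2)
  have hiso : ∀ (a : ℝ≥0) (γ : X ≃ᵢ X), Measure.map γ ((a : ℝ≥0∞) • μ) = (a : ℝ≥0∞) • μ := by
    intro a γ
    rw [Measure.map_smul, hμiso]
  have hV₁ := hP₁.voidP (hfin lam₁)
  have hV₂ := hP₂.voidP (hfin lam₂)
  set d : ℝ≥0 := lam₂ - lam₁ with hd
  have hd0 : 0 < d := tsub_pos_of_lt hlam
  obtain ⟨Q, hQ⟩ := exists_voidP ((d : ℝ≥0∞) • μ) (hfin d)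
  haveI := hV₁.prob
  haveI := hV₂.prob
  haveI := hQ.prob
  have hsup : (P₁.prod Q).map (fun p : Config X × Config X => uni p.1 p.2) = P₂ := by
    refine VoidP.unique (hV₁.superpose hQ) ?_
    have : (lam₁ : ℝ≥0∞) • μ + (d : ℝ≥0∞) • μ = (lam₂ : ℝ≥0∞) • μ := by
      rw [← add_smul, ← ENNReal.coe_add, hd, add_tsub_cancel_of_le hlam.le]
    rw [this]; exact hV₂
  have hD : ∀ᵐ ω ∂P₁, ∃ p ∈ ω.1, Ub ω.1 p := by
    have hm : MeasurableSet {ω : Config X | ∃ p ∈ ω.1, Ub ω.1 p} :=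
      meas_ex measurable_id (E := fun (ω : Config X) p => Ub ω.1 p) (meas_Ub (Ω := Config X × X) measurable_fst measurable_snd)
    refine (mem_ae_iff_prob_eq_one hm).2 (le_antisymm prob_le_one ?_)
    rw [← h]
    exact measure_mono fun ω hω => ((num_one_iff hsym ω).1 hω).1
  obtain ⟨Z, hZc, hZd⟩ := TopologicalSpace.exists_countable_dense X
  have hG : ∀ᵐ x ∂(P₁.prod Q), ∀ z ∈ Z, Unb z (uni x.1 x.2).1 → ∃ p ∈ x.1.1, Ub x.1.1 p ∧ Cl z (uni x.1 x.2).1 p := by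
    rw [ae_ball_iff hZc]
    intro z _
    exact joint_ae hsym (hiso lam₁) (hiso d) (fun x => by
      rw [Measure.smul_apply, smul_eq_mul]
      exact ENNReal.mul_pos (by exact_mod_cast hd0.ne') (hμball x (1/10) (by norm_num)).1.ne') hV₁ hQ hD z
  refine le_antisymm prob_le_one ?_
  obtain ⟨B, hsubB, hBm, hBe⟩ := exists_measurable_superset P₂ {ω : Config X | numUcomps (occupied ω) = 1}
  rw [← hBe, ← hsup, Measure.map_apply uni_meas hBm]
  have hprod : (P₁.prod Q) ({ω : Config X | numUcomps (occupied ω) = 1} ×ˢ univ) = 1 := by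
    rw [Measure.prod_prod, h, measure_univ, one_mul]
  rw [← hprod]
  refine measure_mono_ae ?_
  filter_upwards [hG] with x hx hx1
  exact hsubB (det_unique hsym x.1 (uni x.1 x.2) (fun p hp => Or.inl hp) Z hZd hx1.1 hx)

end BooleanModel
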